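/- Let Ω ⊂ ℂⁿ, n ≥ 2, be a bounded pseudoconvex domain with C^∞ boundary, and let p ∈ ∂Ω be a strongly pseudoconvex boundary point. If F : Ω → Ω is a holomorphic map with F(z) = z + o(‖z−p‖³) as z → p within Ω, then F(z) = z for all z ∈ Ω. (Equivalently: if F ≢ id, then the order of tangency k in F(z) = z + o(‖z−p‖^k) satisfies k ≤ 2.) -/

import Mathlib

/-!
Adding a multiple of `ρ²` to `ρ` makes the Levi form positive definite in all directions, and a
quadratic shear absorbs the pluriharmonic part of the second-order term. So the domain becomes, near
`p = 0`, a small perturbation `‖x‖² - 2 Re ⟪e, x⟫ + E x < 0` of a ball, with `E` of class `C³` and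
`E = o(‖x‖²)`.

Discs `ζ ↦ (1 - ζ) Ψ(ζ)` with boundary in this hypersurface, passing through `0` at `ζ = 1`, are
fixed points of a contraction on sequences of Taylor coefficients with a first-order Sobolev bound.
The boundary value problem is chosen so that the discs are stationary in the sense of Lempert: their
conormal field is, up to a double pole at `ζ = 1`, the boundary value of a (conjugated) holomorphic
lift. By strong convexity, the pairing of this lift with the displacement `f ∘ φ - φ` of a disc `φ`
has nonnegative real part. Third-order tangency of `f` to the identity cancels the double pole and
makes the pairing `o(1 - ζ)` at `ζ = 1`, so it vanishes by the boundary Hopf lemma, and strong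
convexity gives `f ∘ φ = φ`.

The discs meet each complex line parallel to `e` close enough to `0` in a nontrivial connected set,
so the one-variable identity theorem gives `f = id` near an interior point.
-/

open Complex Topology Filter Metric Set Function

noncomputable section

/-- `ℂⁿ` as a normed space. -/
abbrev En (n : ℕ) : Type := EuclideanSpace ℂ (Fin n)

/-- A domain: a nonempty open connected set. -/
def IsDomain' {n : ℕ} (Ω : Set (En n)) : Prop :=
  IsOpen Ω ∧ IsConnected Ω

/-- The Levi form of `ρ` at `q` in direction `ξ`:
`(1/4)(H_q(ξ,ξ) + H_q(iξ,iξ))` with `H_q` the second real Fréchet derivative. -/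
def LeviForm {n : ℕ} (ρ : En n → ℝ) (q ξ : En n) : ℝ :=
  (1 / 4) * (iteratedFDeriv ℝ 2 ρ q ![ξ, ξ] + iteratedFDeriv ℝ 2 ρ q ![I • ξ, I • ξ])

/-- `ξ` lies in the complex tangent space of `{ρ = 0}` at `q`. -/
def InCplxTangent {n : ℕ} (ρ : En n → ℝ) (q ξ : En n) : Prop :=
  fderiv ℝ ρ q ξ = 0 ∧ fderiv ℝ ρ q (I • ξ) = 0

/-- `ρ` is a `C^m` defining function for `Ω`. -/
def IsDefiningFunction {n : ℕ} (Ω : Set (En n)) (m : ℕ∞) (ρ : En n → ℝ) : Prop :=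
  ContDiff ℝ m ρ ∧ Ω = {z | ρ z < 0} ∧ frontier Ω = {z | ρ z = 0} ∧
    ∀ q ∈ frontier Ω, fderiv ℝ ρ q ≠ 0

/-- `q` is a strongly pseudoconvex point with respect to `ρ`. -/
def StronglyPcxAt {n : ℕ} (ρ : En n → ℝ) (q : En n) : Prop :=
  ∀ ξ : En n, ξ ≠ 0 → InCplxTangent ρ q ξ → 0 < LeviForm ρ q ξ

/-- `Ω` is pseudoconvex with `C^∞` boundary, witnessed by the defining function `ρ`. -/
def IsPcxCinfBoundary {n : ℕ} (Ω : Set (En n)) (ρ : En n → ℝ) : Prop :=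
  IsDefiningFunction Ω ⊤ ρ ∧
    ∀ q ∈ frontier Ω, ∀ ξ : En n, InCplxTangent ρ q ξ → 0 ≤ LeviForm ρ q ξ

/-- `F z = z + o(‖z - p‖^k)` as `z → p` within `Ω`. -/
def LittleOh {n : ℕ} (Ω : Set (En n)) (F : En n → En n) (p : En n) (k : ℕ) : Prop :=
  Tendsto (fun z => ‖F z - z‖ / ‖z - p‖ ^ k) (𝓝[Ω] p) (𝓝 0)

/-- `F` is an automorphism of `Ω`: a holomorphic bijection with holomorphic inverse. -/
def IsAutomorphismOf {n : ℕ} (F : En n → En n) (Ω : Set (En n)) : Prop :=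
  DifferentiableOn ℂ F Ω ∧ MapsTo F Ω Ω ∧
    ∃ G : En n → En n, DifferentiableOn ℂ G Ω ∧ MapsTo G Ω Ω ∧
      (∀ z ∈ Ω, G (F z) = z) ∧ (∀ z ∈ Ω, F (G z) = z)

/-! ### Fourier coefficients and summability -/

section FourierCoefficients

open MeasureTheory AddCircle

variable {T : ℝ}

theorem fourier_natCast_apply (k : ℕ) (θ : AddCircle T) :
    fourier (k : ℤ) θ = (fourier 1 θ : ℂ) ^ k := by
  simp [fourier_apply, toCircle_nsmul]

theorem fourier_apply_add (k : ℤ) (θ h : AddCircle T) :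
    (fourier k (θ + h) : ℂ) = fourier k θ * fourier k h := by
  simp only [fourier_apply, smul_add, toCircle_add, Circle.coe_mul]

theorem norm_fourier_apply (k : ℤ) (θ : AddCircle T) : ‖(fourier k θ : ℂ)‖ = 1 := by
  rw [fourier_apply]
  exact Circle.norm_coe _

theorem norm_one_sub_fourier_le (k : ℤ) (θ : AddCircle T) : ‖(1 - fourier k θ : ℂ)‖ ≤ 2 := by
  refine (norm_sub_le _ _).trans ?_
  rw [norm_one, norm_fourier_apply]
  norm_num

variable [hT : Fact (0 < T)]

theorem exists_fourier_one_eq (T : ℝ) [hT : Fact (0 < T)] {ξ : ℂ} (hξ : ‖ξ‖ = 1) :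
    ∃ θ : AddCircle T, (fourier 1 θ : ℂ) = ξ := by
  obtain ⟨θ, hθ⟩ := (AddCircle.homeomorphCircle hT.out.ne').surjective
    ⟨ξ, mem_sphere_zero_iff_norm.2 hξ⟩
  refine ⟨θ, ?_⟩
  rw [fourier_one, ← homeomorphCircle_apply hT.out.ne', hθ]

theorem tendsto_fourier_one_nhdsNE :
    Tendsto (fun θ : AddCircle T => (fourier 1 θ : ℂ)) (𝓝[≠] 0) (𝓝[≠] 1) := by
  refine tendsto_nhdsWithin_iff.2 ⟨?_, ?_⟩
  · have h := (fourier (T := T) 1).continuous.tendsto 0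
    rw [fourier_eval_zero] at h
    exact h.mono_left nhdsWithin_le_nhds
  · refine eventually_nhdsWithin_of_forall fun θ hθ h => hθ ?_
    refine injective_toCircle hT.out.ne' (Circle.ext ?_)
    simpa [fourier_apply] using h

theorem neBot_nhdsNE_zero_addCircle : (𝓝[≠] (0 : AddCircle T)).NeBot := by
  obtain ⟨θ, hθ⟩ := exists_fourier_one_eq T (ξ := -1) (by simp)
  have : Nontrivial (AddCircle T) := ⟨θ, 0, fun h => by
    rw [h, fourier_eval_zero] at hθ
    norm_num at hθ⟩
  infer_instance

theorem integrable_of_continuous {W : Type*} [NormedAddCommGroup W] {f : AddCircle T → W}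
    (hf : Continuous f) : Integrable f haarAddCircle :=
  hf.integrable_of_hasCompactSupport (HasCompactSupport.of_compactSpace _)

section NormedSpace

variable {V : Type*} [NormedAddCommGroup V] [NormedSpace ℂ V]

theorem fourierCoeff_comp_add_right (Y : AddCircle T → V) (h : AddCircle T) (k : ℤ) :
    fourierCoeff (fun θ => Y (θ + h)) k = fourier k h • fourierCoeff Y k := by
  simp only [fourierCoeff]
  rw [← integral_smul, ← integral_add_right_eq_self (fun θ => fourier k h • fourier (-k) θ • Y θ) h]
  refine integral_congr_ae (ae_of_all _ fun θ => ?_)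
  have hunit : (fourier k h : ℂ) * fourier (-k) h = 1 := by
    rw [← fourier_add, add_neg_cancel, fourier_zero]
  simp only [fourier_apply_add, smul_smul]
  rw [mul_comm (fourier (-k) θ : ℂ), ← mul_assoc, hunit, one_mul]

theorem fourierCoeff_sub {f g : AddCircle T → V} (hf : Integrable f haarAddCircle)
    (hg : Integrable g haarAddCircle) (k : ℤ) :
    fourierCoeff (fun θ => f θ - g θ) k = fourierCoeff f k - fourierCoeff g k := by
  simp only [fourierCoeff, smul_sub]
  exact integral_sub (hf.fourier_smul _) (hg.fourier_smul _)

theorem fourierCoeff_fourier_smul [CompleteSpace V] (j k : ℤ) (v : V) :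
    fourierCoeff (fun θ : AddCircle T => (fourier j θ : ℂ) • v) k = if k = j then v else 0 := by
  have h : fourierCoeff (fun θ : AddCircle T => (fourier j θ : ℂ) • v) k
      = fourierCoeff (fun θ : AddCircle T => (fourier j θ : ℂ)) k • v := by
    simp only [fourierCoeff, ← integral_smul_const, smul_assoc]
  rw [h, show fourierCoeff (fun θ : AddCircle T => (fourier j θ : ℂ)) = _ from
    fourierCoeff_fourier j, Pi.single_apply, ite_smul, one_smul, zero_smul]

end NormedSpace

section Hilbert

variable {V : Type*} [NormedAddCommGroup V] [InnerProductSpace ℂ V] [CompleteSpace V]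

theorem integral_inner_fourier_smul {Y : AddCircle T → V} (hY : Integrable Y haarAddCircle)
    (v : V) (k : ℤ) :
    ∫ θ, inner ℂ (fourier k θ • v) (Y θ) ∂haarAddCircle = inner ℂ v (fourierCoeff Y k) := by
  rw [fourierCoeff, ← integral_inner (hY.fourier_smul _)]
  refine integral_congr_ae (ae_of_all _ fun θ => ?_)
  simp only [inner_smul_left, inner_smul_right, fourier_neg]

theorem inner_fourierCoeff {Y : AddCircle T → V} (hY : Integrable Y haarAddCircle)
    (v : V) (k : ℤ) :
    inner ℂ v (fourierCoeff Y k) = fourierCoeff (fun θ => inner ℂ v (Y θ)) k := by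
  rw [fourierCoeff, ← integral_inner (hY.fourier_smul _), fourierCoeff]
  simp only [inner_smul_right, smul_eq_mul]

theorem integral_norm_sq_sum_fourier_smul (s : Finset ℤ) (a : ℤ → V) :
    ∫ θ : AddCircle T, ‖∑ k ∈ s, (fourier k θ : ℂ) • a k‖ ^ 2 ∂haarAddCircle
      = ∑ k ∈ s, ‖a k‖ ^ 2 := by
  let S : AddCircle T → V := fun θ => ∑ k ∈ s, (fourier k θ : ℂ) • a k
  have hS : Continuous S := by fun_prop
  have hcoeff : ∀ k ∈ s, fourierCoeff S k = a k := fun k hk => by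
    have h := congrFun (fourierCoeff.sum s (fun j (θ : AddCircle T) => (fourier j θ : ℂ) • a j)
      fun j _ => integrable_of_continuous (by fun_prop)) k
    simp only [Finset.sum_apply, fourierCoeff_fourier_smul, Finset.sum_ite_eq, hk, if_true] at h
    rw [← h]
    congr 1
    funext θ
    simp [S]
  have h : ∫ θ, inner ℂ (S θ) (S θ) ∂haarAddCircle = ((∑ k ∈ s, ‖a k‖ ^ 2 : ℝ) : ℂ) := by
    calc ∫ θ, inner ℂ (S θ) (S θ) ∂haarAddCircle
        = ∑ k ∈ s, ∫ θ, inner ℂ ((fourier k θ : ℂ) • a k) (S θ) ∂haarAddCircle := by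
          rw [← integral_finsetSum _ fun k _ => integrable_of_continuous (by fun_prop)]
          simp only [← sum_inner, S]
      _ = ∑ k ∈ s, inner ℂ (a k) (a k) := Finset.sum_congr rfl fun k hk => by
          rw [integral_inner_fourier_smul (integrable_of_continuous hS), hcoeff k hk]
      _ = _ := by simp [inner_self_eq_norm_sq_to_K]
  simp only [inner_self_eq_norm_sq_to_K, Complex.coe_algebraMap, ← Complex.ofReal_pow] at h
  exact Complex.ofReal_inj.1 (integral_ofReal.symm.trans h)

theorem sum_sq_norm_fourierCoeff_le {Y : AddCircle T → V} (hY : Continuous Y) (s : Finset ℤ) :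
    ∑ k ∈ s, ‖fourierCoeff Y k‖ ^ 2 ≤ ∫ θ, ‖Y θ‖ ^ 2 ∂haarAddCircle := by
  let S : AddCircle T → V := fun θ => ∑ k ∈ s, (fourier k θ : ℂ) • fourierCoeff Y k
  have hS : Continuous S := by fun_prop
  have hSY : ∫ θ, inner ℂ (S θ) (Y θ) ∂haarAddCircle
      = ((∑ k ∈ s, ‖fourierCoeff Y k‖ ^ 2 : ℝ) : ℂ) := by
    simp only [S, sum_inner]
    rw [integral_finsetSum _ fun k _ => integrable_of_continuous (by fun_prop)]
    simp only [integral_inner_fourier_smul (integrable_of_continuous hY),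
      inner_self_eq_norm_sq_to_K]
    simp
  have hre : ∫ θ, (inner ℂ (S θ) (Y θ)).re ∂haarAddCircle = ∑ k ∈ s, ‖fourierCoeff Y k‖ ^ 2 := by
    rw [← Complex.ofReal_re (∑ k ∈ s, _), ← hSY]
    exact integral_re (𝕜 := ℂ) (integrable_of_continuous (hS.inner hY))
  have hnonneg : 0 ≤ ∫ θ, ‖S θ - Y θ‖ ^ 2 ∂haarAddCircle :=
    integral_nonneg fun θ => sq_nonneg _
  have hexpand : ∫ θ, ‖S θ - Y θ‖ ^ 2 ∂haarAddCircle
      = (∫ θ, ‖S θ‖ ^ 2 ∂haarAddCircle) - 2 * (∫ θ, (inner ℂ (S θ) (Y θ)).re ∂haarAddCircle)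
        + ∫ θ, ‖Y θ‖ ^ 2 ∂haarAddCircle := by
    rw [← integral_const_mul,
      ← integral_sub (integrable_of_continuous (by fun_prop))
        (integrable_of_continuous (by fun_prop)),
      ← integral_add (integrable_of_continuous (by fun_prop))
        (integrable_of_continuous (by fun_prop))]
    simp only [@norm_sub_sq ℂ, RCLike.re_to_complex]
  rw [hexpand, hre, integral_norm_sq_sum_fourier_smul] at hnonneg
  linarith

theorem tendsto_norm_zpow_sub_one_div_sq (k : ℤ) :
    Tendsto (fun ζ : ℂ => ‖(ζ ^ k - 1) / (ζ - 1)‖ ^ 2) (𝓝[≠] 1) (𝓝 ((k : ℝ) ^ 2)) := by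
  have h := (((hasDerivAt_zpow k (1 : ℂ) (Or.inl one_ne_zero)).tendsto_slope).norm.pow 2)
  simp only [one_zpow, mul_one, Complex.norm_intCast, sq_abs] at h
  exact h.congr fun ζ => by simp [slope_def_field]

theorem sum_norm_fourier_sub_one_sq_mul_le {Y : AddCircle T → V} (hY : Continuous Y)
    (h : AddCircle T) (s : Finset ℤ) :
    ∑ k ∈ s, ‖(fourier k h : ℂ) - 1‖ ^ 2 * ‖fourierCoeff Y k‖ ^ 2
      ≤ ∫ θ, ‖Y (θ + h) - Y θ‖ ^ 2 ∂haarAddCircle := by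
  have hcoeff : ∀ k, fourierCoeff (fun θ => Y (θ + h) - Y θ) k
      = ((fourier k h : ℂ) - 1) • fourierCoeff Y k := fun k => by
    rw [fourierCoeff_sub (integrable_of_continuous (by fun_prop)) (integrable_of_continuous hY),
      fourierCoeff_comp_add_right, sub_smul, one_smul]
  refine le_trans (le_of_eq (Finset.sum_congr rfl fun k _ => ?_))
    (sum_sq_norm_fourierCoeff_le (Y := fun θ => Y (θ + h) - Y θ) (by fun_prop) s)
  rw [hcoeff, norm_smul, mul_pow]

/-- The difference quotients are divided by the chord `|e(h) - 1|`, and `h → 0`. -/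
theorem sum_sq_mul_sq_norm_fourierCoeff_le {Y : AddCircle T → V} (hY : Continuous Y) {A : ℝ}
    (hA : ∀ h : AddCircle T, ∫ θ, ‖Y (θ + h) - Y θ‖ ^ 2 ∂haarAddCircle
      ≤ A ^ 2 * ‖(fourier 1 h : ℂ) - 1‖ ^ 2) (s : Finset ℤ) :
    ∑ k ∈ s, (k : ℝ) ^ 2 * ‖fourierCoeff Y k‖ ^ 2 ≤ A ^ 2 := by
  have hlim : Tendsto (fun ζ : ℂ => ∑ k ∈ s, ‖(ζ ^ k - 1) / (ζ - 1)‖ ^ 2 * ‖fourierCoeff Y k‖ ^ 2)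
      (𝓝[≠] 1) (𝓝 (∑ k ∈ s, (k : ℝ) ^ 2 * ‖fourierCoeff Y k‖ ^ 2)) :=
    tendsto_finsetSum _ fun k _ => (tendsto_norm_zpow_sub_one_div_sq k).mul_const _
  have := neBot_nhdsNE_zero_addCircle (T := T)
  refine le_of_tendsto (hlim.comp (tendsto_fourier_one_nhdsNE (T := T))) ?_
  filter_upwards [tendsto_fourier_one_nhdsNE.eventually self_mem_nhdsWithin] with h hh
  have hpos : 0 < ‖(fourier 1 h : ℂ) - 1‖ ^ 2 := pow_pos (norm_pos_iff.2 (sub_ne_zero.2 hh)) 2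
  have hle := (sum_norm_fourier_sub_one_sq_mul_le hY h s).trans (hA h)
  rw [← div_le_iff₀ hpos, Finset.sum_div] at hle
  refine le_trans (le_of_eq (Finset.sum_congr rfl fun k _ => ?_)) hle
  rw [fourier_apply, toCircle_zsmul, Circle.coe_zpow, ← fourier_one, norm_div, div_pow,
    div_mul_eq_mul_div]

end Hilbert

end FourierCoefficients

/-! ### Analytic discs with Sobolev coefficients -/

section SobolevBound

variable {V : Type*} [NormedAddCommGroup V]

/-- The first-order Sobolev bound `∑ (1 + k²) ‖c k‖² ≤ B²` on a sequence of Taylor coefficients.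
Bounding the finite sums builds summability into the notion. -/
structure SobolevBound (B : ℝ) (c : ℕ → V) : Prop where
  nonneg : 0 ≤ B
  sum_le : ∀ s : Finset ℕ, ∑ k ∈ s, (1 + (k : ℝ) ^ 2) * ‖c k‖ ^ 2 ≤ B ^ 2

/-- The constant of the embedding of the first-order Sobolev space into `ℓ¹`, hence into the
continuous functions. -/
def sobolevConst : ℝ := √(∑' k : ℕ, 1 / (1 + (k : ℝ) ^ 2))

theorem summable_one_div_one_add_sq : Summable fun k : ℕ => 1 / (1 + (k : ℝ) ^ 2) := by
  refine Summable.of_norm_bounded_eventually_nat (Real.summable_one_div_nat_pow.2 one_lt_two) ?_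
  filter_upwards [eventually_gt_atTop 0] with k hk
  rw [Real.norm_of_nonneg (by positivity)]
  gcongr
  linarith

theorem one_le_sobolevConst : 1 ≤ sobolevConst := by
  rw [sobolevConst, Real.one_le_sqrt]
  simpa using summable_one_div_one_add_sq.sum_le_tsum {0} (fun k _ => by positivity)

variable {B : ℝ} {c : ℕ → V}

theorem SobolevBound.sum_norm_le (hc : SobolevBound B c) (s : Finset ℕ) :
    ∑ k ∈ s, ‖c k‖ ≤ sobolevConst * B := by
  have hcauchy := Finset.sum_sq_le_sum_mul_sum_of_sq_le_mul s (r := fun k => ‖c k‖)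
    (f := fun k : ℕ => 1 / (1 + (k : ℝ) ^ 2)) (g := fun k => (1 + (k : ℝ) ^ 2) * ‖c k‖ ^ 2)
    (fun k _ => by positivity) (fun k _ => by positivity)
    (fun k _ => le_of_eq (by field_simp))
  refine le_of_sq_le_sq ?_ (mul_nonneg (Real.sqrt_nonneg _) hc.nonneg)
  rw [mul_pow, sobolevConst, Real.sq_sqrt (tsum_nonneg fun k => by positivity)]
  refine hcauchy.trans (mul_le_mul ?_ (hc.sum_le s) (Finset.sum_nonneg fun k _ => by positivity)
    (tsum_nonneg fun k => by positivity))
  exact summable_one_div_one_add_sq.sum_le_tsum s fun k _ => by positivity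

theorem SobolevBound.summable_norm (hc : SobolevBound B c) : Summable fun k => ‖c k‖ :=
  summable_of_sum_le (fun _ => norm_nonneg _) hc.sum_norm_le

theorem SobolevBound.sum_sq_norm_le (hc : SobolevBound B c) (s : Finset ℕ) :
    ∑ k ∈ s, ‖c k‖ ^ 2 ≤ B ^ 2 :=
  (Finset.sum_le_sum fun _ _ =>
    le_mul_of_one_le_left (sq_nonneg _) (le_add_of_nonneg_right (sq_nonneg _))).trans (hc.sum_le s)

end SobolevBound

section DiscMap

open MeasureTheory AddCircle

variable {V : Type*} [NormedAddCommGroup V] [NormedSpace ℂ V]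

/-- The analytic disc with Taylor coefficients `c`. It takes the junk value `0` where the series
diverges. -/
def discMap (c : ℕ → V) (ζ : ℂ) : V := ∑' k, ζ ^ k • c k

theorem discMap_mul (c : ℕ → V) (ζ ω : ℂ) :
    discMap c (ζ * ω) = discMap (fun k => ω ^ k • c k) ζ := by
  simp only [discMap, mul_pow, smul_smul]

theorem norm_pow_sub_one_le {ζ : ℂ} (hζ : ‖ζ‖ ≤ 1) (k : ℕ) : ‖ζ ^ k - 1‖ ≤ k * ‖ζ - 1‖ := by
  rw [← mul_geom_sum ζ k, mul_comm, norm_mul]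
  gcongr
  refine (norm_sum_le _ _).trans ?_
  simpa using Finset.sum_le_card_nsmul (Finset.range k) (fun i => ‖ζ ^ i‖) 1 fun i _ => by
    simpa using pow_le_one₀ (norm_nonneg _) hζ

variable {c : ℕ → V}

theorem norm_pow_smul_le {ζ : ℂ} (hζ : ‖ζ‖ ≤ 1) (k : ℕ) (v : V) : ‖ζ ^ k • v‖ ≤ ‖v‖ := by
  rw [norm_smul, norm_pow]
  exact mul_le_of_le_one_left (norm_nonneg _) (pow_le_one₀ (norm_nonneg _) hζ)

theorem summable_norm_pow_smul (hc : Summable fun k => ‖c k‖) {ζ : ℂ} (hζ : ‖ζ‖ ≤ 1) :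
    Summable fun k => ‖ζ ^ k • c k‖ :=
  hc.of_nonneg_of_le (fun _ => norm_nonneg _) fun k => norm_pow_smul_le hζ k _

theorem norm_discMap_le_of_sum_norm_le {N : ℝ} (hcN : ∀ s : Finset ℕ, ∑ k ∈ s, ‖c k‖ ≤ N) {ζ : ℂ}
    (hζ : ‖ζ‖ ≤ 1) : ‖discMap c ζ‖ ≤ N := by
  have hsum := summable_norm_pow_smul (summable_of_sum_le (fun _ => norm_nonneg _) hcN) hζ
  exact (norm_tsum_le_tsum_norm hsum).trans (hsum.tsum_le_of_sum_le fun s =>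
    (Finset.sum_le_sum fun k _ => norm_pow_smul_le hζ k _).trans (hcN s))

theorem norm_discMap_le_of_sum_sq_le {N : ℝ} (hN : 0 ≤ N)
    (hcN : ∀ s : Finset ℕ, ∑ k ∈ s, ‖c k‖ ^ 2 ≤ N ^ 2) {ζ : ℂ} (hζ : ‖ζ‖ < 1) :
    ‖discMap c ζ‖ ≤ N / √(1 - ‖ζ‖ ^ 2) := by
  have hζ2 : ‖ζ‖ ^ 2 < 1 := pow_lt_one₀ (norm_nonneg _) hζ two_ne_zero
  have hle : ∀ s : Finset ℕ, ∑ k ∈ s, ‖ζ ^ k • c k‖ ≤ N / √(1 - ‖ζ‖ ^ 2) := fun s => by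
    have hcauchy := Finset.sum_sq_le_sum_mul_sum_of_sq_le_mul s (r := fun k => ‖ζ ^ k • c k‖)
      (f := fun k => (‖ζ‖ ^ 2) ^ k) (g := fun k => ‖c k‖ ^ 2) (fun k _ => by positivity)
      (fun k _ => by positivity) fun k _ => by rw [norm_smul, norm_pow, mul_pow, pow_right_comm]
    have hgeom : ∑ k ∈ s, (‖ζ‖ ^ 2) ^ k ≤ (1 - ‖ζ‖ ^ 2)⁻¹ :=
      sum_le_hasSum s (fun k _ => by positivity) (hasSum_geometric_of_lt_one (sq_nonneg _) hζ2)
    refine le_of_sq_le_sq ?_ (by positivity)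
    rw [div_pow, Real.sq_sqrt (sub_nonneg.2 hζ2.le), div_eq_inv_mul]
    exact hcauchy.trans (mul_le_mul hgeom (hcN s) (Finset.sum_nonneg fun k _ => sq_nonneg _)
      (inv_nonneg.2 (sub_nonneg.2 hζ2.le)))
  have hsum := summable_of_sum_le (fun _ => norm_nonneg _) hle
  exact (norm_tsum_le_tsum_norm hsum).trans (hsum.tsum_le_of_sum_le hle)

theorem norm_discMap_le_two_mul {N : ℝ} (hN : 0 ≤ N)
    (hcN : ∀ s : Finset ℕ, ∑ k ∈ s, ‖c k‖ ^ 2 ≤ N ^ 2) {ζ : ℂ} (hζ : ‖ζ‖ ≤ 1 / 2) :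
    ‖discMap c ζ‖ ≤ 2 * N := by
  refine (norm_discMap_le_of_sum_sq_le hN hcN (hζ.trans_lt one_half_lt_one)).trans ?_
  have hsqrt : 1 / 2 ≤ √(1 - ‖ζ‖ ^ 2) := Real.le_sqrt_of_sq_le (by nlinarith [norm_nonneg ζ])
  rw [div_le_iff₀ (one_half_pos.trans_le hsqrt)]
  nlinarith

variable [CompleteSpace V]

theorem hasSum_discMap (hc : Summable fun k => ‖c k‖) {ζ : ℂ} (hζ : ‖ζ‖ ≤ 1) :
    HasSum (fun k => ζ ^ k • c k) (discMap c ζ) :=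
  (summable_norm_pow_smul hc hζ).of_norm.hasSum

theorem discMap_sub {c' : ℕ → V} (hc : Summable fun k => ‖c k‖) (hc' : Summable fun k => ‖c' k‖)
    {ζ : ℂ} (hζ : ‖ζ‖ ≤ 1) :
    discMap (fun k => c k - c' k) ζ = discMap c ζ - discMap c' ζ := by
  simp only [discMap, smul_sub]
  exact (hasSum_discMap hc hζ).summable.tsum_sub (hasSum_discMap hc' hζ).summable

theorem continuousOn_discMap (hc : Summable fun k => ‖c k‖) :
    ContinuousOn (discMap c) (closedBall 0 1) :=
  continuousOn_tsum (fun k => by fun_prop) hc fun k _ hζ =>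
    norm_pow_smul_le (mem_closedBall_zero_iff.1 hζ) k _

theorem differentiableOn_discMap (hc : Summable fun k => ‖c k‖) :
    DifferentiableOn ℂ (discMap c) (ball 0 1) :=
  Complex.differentiableOn_tsum_of_summable_norm hc (fun k => by fun_prop) isOpen_ball
    fun k _ hζ => norm_pow_smul_le (mem_ball_zero_iff.1 hζ).le k _

theorem continuous_discMap_fourier (hc : Summable fun k => ‖c k‖) :
    Continuous fun θ : UnitAddCircle => discMap c (fourier 1 θ) :=
  (continuousOn_discMap hc).comp_continuous (fourier 1).continuous fun θ =>
    mem_closedBall_zero_iff.2 (norm_fourier_apply 1 θ).le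

theorem fourierCoeff_discMap (hc : Summable fun k => ‖c k‖) (k : ℤ) :
    fourierCoeff (fun θ : UnitAddCircle => discMap c (fourier 1 θ)) k
      = if 0 ≤ k then c k.toNat else 0 := by
  have hsum := hasSum_integral_of_summable_integral_norm (μ := haarAddCircle)
    (F := fun (j : ℕ) (θ : UnitAddCircle) => fourier (-k) θ • (fourier (j : ℤ) θ : ℂ) • c j)
    (fun j => integrable_of_continuous (by fun_prop))
    (hc.congr fun j => by
      simp only [norm_smul, norm_fourier_apply, one_mul, integral_const, probReal_univ,
        smul_eq_mul])
  have hseries : ∀ θ : UnitAddCircle, ∑' j : ℕ, fourier (-k) θ • (fourier (j : ℤ) θ : ℂ) • c j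
      = fourier (-k) θ • discMap c (fourier 1 θ) := fun θ => by
    simp only [fourier_natCast_apply]
    exact (hasSum_discMap hc (norm_fourier_apply 1 θ).le).summable.tsum_const_smul _
  simp only [hseries] at hsum
  change HasSum (fun j : ℕ => fourierCoeff (fun θ => (fourier (j : ℤ) θ : ℂ) • c j) k)
    (fourierCoeff (fun θ => discMap c (fourier 1 θ)) k) at hsum
  simp only [fourierCoeff_fourier_smul] at hsum
  rw [← hsum.tsum_eq]
  split_ifs with hk
  · lift k to ℕ using hk
    rw [tsum_eq_single k fun j hj => if_neg (by simpa using hj.symm)]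
    simp
  · refine (tsum_congr fun j => if_neg ?_).trans tsum_zero
    omega

end DiscMap

section DiscMapHilbert

open MeasureTheory AddCircle

variable {V : Type*} [NormedAddCommGroup V] [InnerProductSpace ℂ V] [CompleteSpace V]
  {c : ℕ → V}

theorem hasSum_sq_norm_discMap (hc : Summable fun k => ‖c k‖) :
    HasSum (fun k => ‖c k‖ ^ 2)
      (∫ θ : UnitAddCircle, ‖discMap c (fourier 1 θ)‖ ^ 2 ∂haarAddCircle) := by
  let Y : UnitAddCircle → V := fun θ => discMap c (fourier 1 θ)
  have hY : Continuous Y := continuous_discMap_fourier hc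
  have hYi := integrable_of_continuous hY
  have hsum := hasSum_integral_of_summable_integral_norm (μ := haarAddCircle)
    (F := fun (k : ℕ) (θ : UnitAddCircle) => inner ℂ ((fourier (k : ℤ) θ : ℂ) • c k) (Y θ))
    (fun k => integrable_of_continuous (by fun_prop))
    (.of_nonneg_of_le (fun k => integral_nonneg fun θ => norm_nonneg _) (fun k =>
      (integral_mono (integrable_of_continuous (by fun_prop)) (hYi.norm.const_mul ‖c k‖) fun θ =>
        (norm_inner_le_norm _ _).trans (by rw [norm_smul, norm_fourier_apply, one_mul])).trans_eq
        (integral_const_mul _ _)) (hc.mul_right _))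
  have hseries : ∀ θ, ∑' k : ℕ, inner ℂ ((fourier (k : ℤ) θ : ℂ) • c k) (Y θ)
      = ((‖Y θ‖ ^ 2 : ℝ) : ℂ) := fun θ => by
    have h := (hasSum_discMap hc (norm_fourier_apply 1 θ).le).mapL (innerSLFlip ℂ (Y θ))
    simp only [innerSLFlip_apply_apply] at h
    simp only [fourier_natCast_apply, h.tsum_eq, Y, inner_self_eq_norm_sq_to_K]
    norm_cast
  simp only [hseries, integral_inner_fourier_smul hYi, Y, fourierCoeff_discMap hc,
    Nat.cast_nonneg, if_true, Int.toNat_natCast, inner_self_eq_norm_sq_to_K,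
    integral_complex_ofReal] at hsum
  rw [← Complex.hasSum_ofReal]
  simpa using hsum

theorem SobolevBound.integral_sq_norm_discMap_translate_le {B : ℝ} (hc : SobolevBound B c)
    (h : UnitAddCircle) :
    ∫ θ : UnitAddCircle, ‖discMap c (fourier 1 (θ + h)) - discMap c (fourier 1 θ)‖ ^ 2
        ∂haarAddCircle ≤ B ^ 2 * ‖(fourier 1 h : ℂ) - 1‖ ^ 2 := by
  let ω : ℂ := fourier 1 h
  have hω : ‖ω‖ ≤ 1 := (norm_fourier_apply 1 h).le
  have hsum := hc.summable_norm
  have hdisc : ∀ θ : UnitAddCircle,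
      discMap c (fourier 1 (θ + h)) - discMap c (fourier 1 θ)
        = discMap (fun k => (ω ^ k - 1) • c k) (fourier 1 θ) := fun θ => by
    rw [fourier_apply_add, discMap_mul,
      ← discMap_sub (summable_norm_pow_smul hsum hω) hsum (norm_fourier_apply 1 θ).le]
    simp only [sub_smul, one_smul, ω]
  simp only [hdisc]
  refine hasSum_le_of_sum_le (hasSum_sq_norm_discMap ?_) fun s => ?_
  · refine (hsum.mul_left 2).of_nonneg_of_le (fun k => norm_nonneg _) fun k => ?_
    rw [norm_smul]
    gcongr
    refine (norm_sub_le _ _).trans ?_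
    rw [norm_pow, norm_one]
    linarith [pow_le_one₀ (n := k) (norm_nonneg _) hω]
  · calc ∑ k ∈ s, ‖(ω ^ k - 1) • c k‖ ^ 2
        ≤ ∑ k ∈ s, (1 + (k : ℝ) ^ 2) * ‖c k‖ ^ 2 * ‖ω - 1‖ ^ 2 :=
          Finset.sum_le_sum fun k _ => by
            rw [norm_smul, mul_pow, mul_right_comm]
            gcongr
            calc ‖ω ^ k - 1‖ ^ 2 ≤ (k * ‖ω - 1‖) ^ 2 := by
                  gcongr
                  exact norm_pow_sub_one_le hω k
              _ ≤ (1 + (k : ℝ) ^ 2) * ‖ω - 1‖ ^ 2 := by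
                  rw [mul_pow]
                  gcongr
                  linarith
      _ ≤ B ^ 2 * ‖ω - 1‖ ^ 2 := by
          rw [← Finset.sum_mul]
          gcongr
          exact hc.sum_le s

end DiscMapHilbert

/-! ### The boundary term of a quadratic nonlinearity -/

section QuadLip

variable {V W : Type*} [NormedAddCommGroup V] [NormedAddCommGroup W] {C r : ℝ} {M : V → W}

/-- A map vanishing at the origin to second order in the Lipschitz sense: on each ball of radius at
most `r` its Lipschitz constant is at most `C` times the radius. -/
structure QuadLip (C r : ℝ) (M : V → W) : Prop where
  nonneg : 0 ≤ C
  map_zero : M 0 = 0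
  norm_map_sub_le : ∀ ⦃x y⦄, ‖x‖ ≤ r → ‖y‖ ≤ r → ‖M x - M y‖ ≤ C * max ‖x‖ ‖y‖ * ‖x - y‖

theorem QuadLip.norm_le (hM : QuadLip C r M) {x : V} (hx : ‖x‖ ≤ r) : ‖M x‖ ≤ C * ‖x‖ ^ 2 := by
  have h := hM.norm_map_sub_le hx (y := 0) (by simpa using (norm_nonneg x).trans hx)
  rwa [hM.map_zero, sub_zero, sub_zero, norm_zero, max_eq_left (norm_nonneg x), mul_assoc,
    ← sq] at h

variable {𝕜 : Type*} [NormedField 𝕜] [NormedSpace 𝕜 V] [NormedSpace 𝕜 W] {β : ℝ} {s t : 𝕜} {x y : V}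

theorem norm_smul_le_mul (hx : ‖x‖ ≤ β) : ‖s • x‖ ≤ ‖s‖ * β := by
  rw [norm_smul]
  gcongr

theorem QuadLip.norm_inv_smul_sub_le_of_same_scalar (hM : QuadLip C r M) (hs : ‖s‖ * β ≤ r)
    (hx : ‖x‖ ≤ β) (hy : ‖y‖ ≤ β) :
    ‖s⁻¹ • M (s • x) - s⁻¹ • M (s • y)‖ ≤ C * (‖s‖ * β) * ‖x - y‖ := by
  rcases eq_or_ne s 0 with rfl | hs0
  · simp
  have hC := hM.nonneg
  rw [← smul_sub, norm_smul, norm_inv, inv_mul_le_iff₀ (norm_pos_iff.2 hs0)]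
  calc ‖M (s • x) - M (s • y)‖ ≤ C * max ‖s • x‖ ‖s • y‖ * ‖s • x - s • y‖ :=
        hM.norm_map_sub_le ((norm_smul_le_mul hx).trans hs) ((norm_smul_le_mul hy).trans hs)
    _ ≤ C * (‖s‖ * β) * (‖s‖ * ‖x - y‖) := by
        rw [← smul_sub, norm_smul s (x - y)]
        gcongr
        exact max_le (norm_smul_le_mul hx) (norm_smul_le_mul hy)
    _ = ‖s‖ * (C * (‖s‖ * β) * ‖x - y‖) := by ring

theorem QuadLip.norm_inv_sub_inv_smul_le (hM : QuadLip C r M) (hs : ‖s‖ * β ≤ r) (hs0 : s ≠ 0)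
    (hts : ‖t‖ ≤ ‖s‖) (hy : ‖y‖ ≤ β) :
    ‖(s⁻¹ - t⁻¹) • M (t • y)‖ ≤ C * β ^ 2 * ‖s - t‖ := by
  have hβ := (norm_nonneg y).trans hy
  have hC := hM.nonneg
  rcases eq_or_ne t 0 with rfl | ht0
  · rw [zero_smul, hM.map_zero, smul_zero, norm_zero]
    positivity
  have hty : ‖t • y‖ ≤ ‖t‖ * β := norm_smul_le_mul hy
  rw [norm_smul, inv_sub_inv hs0 ht0, norm_div, norm_mul, norm_sub_rev t s, div_mul_eq_mul_div,
    div_le_iff₀ (mul_pos (norm_pos_iff.2 hs0) (norm_pos_iff.2 ht0))]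
  calc ‖s - t‖ * ‖M (t • y)‖ ≤ ‖s - t‖ * (C * (‖t‖ * β) ^ 2) := by
        gcongr
        exact (hM.norm_le (hty.trans ((by gcongr : ‖t‖ * β ≤ ‖s‖ * β).trans hs))).trans (by gcongr)
    _ = C * β ^ 2 * ‖s - t‖ * (‖t‖ * ‖t‖) := by ring
    _ ≤ C * β ^ 2 * ‖s - t‖ * (‖s‖ * ‖t‖) := by gcongr

theorem QuadLip.norm_inv_smul_sub_le_of_same_vector (hM : QuadLip C r M) (hs : ‖s‖ * β ≤ r)
    (ht : ‖t‖ * β ≤ r) (hy : ‖y‖ ≤ β) :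
    ‖s⁻¹ • M (s • y) - t⁻¹ • M (t • y)‖ ≤ 2 * C * β ^ 2 * ‖s - t‖ := by
  wlog hts : ‖t‖ ≤ ‖s‖ generalizing s t
  · rw [norm_sub_rev, norm_sub_rev s]
    exact this ht hs (le_of_not_ge hts)
  have hβ := (norm_nonneg y).trans hy
  have hC := hM.nonneg
  rcases eq_or_ne s 0 with rfl | hs0
  · rw [norm_zero, norm_le_zero_iff] at hts
    simp [hts]
  have hfirst : ‖s⁻¹ • (M (s • y) - M (t • y))‖ ≤ C * β ^ 2 * ‖s - t‖ := by
    have hmax : max ‖s • y‖ ‖t • y‖ ≤ ‖s‖ * β := max_le (norm_smul_le_mul hy)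
      ((norm_smul_le_mul hy).trans (by gcongr))
    rw [norm_smul, norm_inv, inv_mul_le_iff₀ (norm_pos_iff.2 hs0)]
    calc ‖M (s • y) - M (t • y)‖ ≤ C * max ‖s • y‖ ‖t • y‖ * ‖s • y - t • y‖ :=
          hM.norm_map_sub_le ((norm_smul_le_mul hy).trans hs) ((norm_smul_le_mul hy).trans ht)
      _ ≤ C * (‖s‖ * β) * (‖s - t‖ * β) := by
          rw [← sub_smul]
          gcongr
          exact norm_smul_le_mul hy
      _ = ‖s‖ * (C * β ^ 2 * ‖s - t‖) := by ring
  calc ‖s⁻¹ • M (s • y) - t⁻¹ • M (t • y)‖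
      = ‖s⁻¹ • (M (s • y) - M (t • y)) + (s⁻¹ - t⁻¹) • M (t • y)‖ := by
        rw [smul_sub, sub_smul, sub_add_sub_cancel]
    _ ≤ C * β ^ 2 * ‖s - t‖ + C * β ^ 2 * ‖s - t‖ :=
        norm_add_le_of_le hfirst (hM.norm_inv_sub_inv_smul_le hs hs0 hts hy)
    _ = 2 * C * β ^ 2 * ‖s - t‖ := by ring

theorem QuadLip.norm_inv_smul_sub_le (hM : QuadLip C r M) (hs : ‖s‖ * β ≤ r) (ht : ‖t‖ * β ≤ r)
    (hx : ‖x‖ ≤ β) (hy : ‖y‖ ≤ β) :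
    ‖s⁻¹ • M (s • x) - t⁻¹ • M (t • y)‖
      ≤ C * (‖s‖ * β) * ‖x - y‖ + 2 * C * β ^ 2 * ‖s - t‖ :=
  (norm_sub_le_norm_sub_add_norm_sub _ _ _).trans (add_le_add
    (hM.norm_inv_smul_sub_le_of_same_scalar hs hx hy)
    (hM.norm_inv_smul_sub_le_of_same_vector hs ht hy))

end QuadLip

section BoundaryTerm

open MeasureTheory AddCircle

variable {V W : Type*} [NormedAddCommGroup V] [NormedAddCommGroup W]

/-- The function `s⁻¹ M(s Ψ)` on the circle, where `s = 1 - ζ` and `Ψ` is the analytic disc with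
coefficients `c`. At the point `ζ = 1` it takes the value `0`. -/
def boundaryTerm [NormedSpace ℂ V] [NormedSpace ℂ W] (M : V → W) (c : ℕ → V)
    (θ : UnitAddCircle) : W :=
  (1 - fourier 1 θ : ℂ)⁻¹ • M ((1 - fourier 1 θ : ℂ) • discMap c (fourier 1 θ))

variable {C r B : ℝ} {M : V → W} {c c' : ℕ → V}

section NormedSpace

variable [NormedSpace ℂ V] [NormedSpace ℂ W]

theorem SobolevBound.norm_discMap_le (hc : SobolevBound B c) {ζ : ℂ} (hζ : ‖ζ‖ ≤ 1) :
    ‖discMap c ζ‖ ≤ sobolevConst * B :=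
  norm_discMap_le_of_sum_norm_le hc.sum_norm_le hζ

theorem QuadLip.norm_boundaryTerm_sub_le (hM : QuadLip C r M) (hr : 2 * (sobolevConst * B) ≤ r)
    (hc : SobolevBound B c) (hc' : SobolevBound B c') (θ θ' : UnitAddCircle) :
    ‖boundaryTerm M c θ - boundaryTerm M c' θ'‖
      ≤ 2 * C * (sobolevConst * B) * ‖discMap c (fourier 1 θ) - discMap c' (fourier 1 θ')‖
        + 2 * C * (sobolevConst * B) ^ 2 * ‖(fourier 1 θ : ℂ) - fourier 1 θ'‖ := by
  have hC := hM.nonneg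
  have hβ : 0 ≤ sobolevConst * B := mul_nonneg (Real.sqrt_nonneg _) hc.nonneg
  have hle : ∀ θ : UnitAddCircle,
      ‖(1 - fourier 1 θ : ℂ)‖ * (sobolevConst * B) ≤ 2 * (sobolevConst * B) := fun θ => by
    gcongr
    exact norm_one_sub_fourier_le 1 θ
  have h := hM.norm_inv_smul_sub_le ((hle θ).trans hr) ((hle θ').trans hr)
    (hc.norm_discMap_le (norm_fourier_apply 1 θ).le)
    (hc'.norm_discMap_le (norm_fourier_apply 1 θ').le)
  rw [sub_sub_sub_cancel_left, norm_sub_rev (fourier 1 θ' : ℂ)] at h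
  refine h.trans ?_
  rw [mul_comm 2 C, mul_assoc C 2 (sobolevConst * B)]
  gcongr ?_ * _ + _
  exact mul_le_mul_of_nonneg_left (hle θ) hC

theorem QuadLip.norm_boundaryTerm_le (hM : QuadLip C r M) (hr : 2 * (sobolevConst * B) ≤ r)
    (hc : SobolevBound B c) (θ : UnitAddCircle) :
    ‖boundaryTerm M c θ‖ ≤ 2 * C * (sobolevConst * B) ^ 2 := by
  have hC := hM.nonneg
  have hzero : SobolevBound B (0 : ℕ → V) := ⟨hc.nonneg, fun s => by simpa using sq_nonneg B⟩
  have h := hM.norm_boundaryTerm_sub_le hr hc hzero θ θ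
  simp only [boundaryTerm, discMap, Pi.zero_apply, smul_zero, tsum_zero, hM.map_zero, sub_zero,
    sub_self, norm_zero, mul_zero, add_zero] at h
  refine h.trans ?_
  have hβ : 0 ≤ sobolevConst * B := mul_nonneg (Real.sqrt_nonneg _) hc.nonneg
  rw [sq, ← mul_assoc _ (sobolevConst * B)]
  exact mul_le_mul_of_nonneg_left (hc.norm_discMap_le (norm_fourier_apply 1 θ).le)
    (mul_nonneg (mul_nonneg zero_le_two hC) hβ)

theorem QuadLip.norm_boundaryTerm_translate_le (hM : QuadLip C r M)
    (hr : 2 * (sobolevConst * B) ≤ r) (hc : SobolevBound B c) (θ h : UnitAddCircle) :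
    ‖boundaryTerm M c (θ + h) - boundaryTerm M c θ‖
      ≤ 2 * C * (sobolevConst * B) * ‖discMap c (fourier 1 (θ + h)) - discMap c (fourier 1 θ)‖
        + 2 * C * (sobolevConst * B) ^ 2 * ‖(fourier 1 h : ℂ) - 1‖ := by
  have hδ : ‖(fourier 1 (θ + h) : ℂ) - fourier 1 θ‖ = ‖(fourier 1 h : ℂ) - 1‖ := by
    rw [fourier_apply_add, ← mul_sub_one, norm_mul, norm_fourier_apply, one_mul]
  rw [← hδ]
  exact hM.norm_boundaryTerm_sub_le hr hc hc (θ + h) θ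

theorem QuadLip.continuous_boundaryTerm [CompleteSpace V] (hM : QuadLip C r M)
    (hr : 2 * (sobolevConst * B) ≤ r) (hc : SobolevBound B c) :
    Continuous (boundaryTerm M c) := by
  refine continuous_iff_continuousAt.2 fun θ => tendsto_iff_norm_sub_tendsto_zero.2 ?_
  have hdisc := continuous_discMap_fourier hc.summable_norm
  have hbound : Continuous fun θ' : UnitAddCircle => 2 * C * (sobolevConst * B) *
      ‖discMap c (fourier 1 θ') - discMap c (fourier 1 θ)‖
        + 2 * C * (sobolevConst * B) ^ 2 * ‖(fourier 1 θ' : ℂ) - fourier 1 θ‖ := by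
    fun_prop
  refine squeeze_zero (fun _ => norm_nonneg _)
    (fun θ' => hM.norm_boundaryTerm_sub_le hr hc hc θ' θ) ?_
  simpa using hbound.tendsto θ

end NormedSpace

variable [InnerProductSpace ℂ V] [CompleteSpace V]

theorem QuadLip.integral_sq_norm_boundaryTerm_translate_le [NormedSpace ℂ W] (hM : QuadLip C r M)
    (hr : 2 * (sobolevConst * B) ≤ r) (hc : SobolevBound B c) (h : UnitAddCircle) :
    ∫ θ, ‖boundaryTerm M c (θ + h) - boundaryTerm M c θ‖ ^ 2 ∂haarAddCircle
      ≤ (4 * C * (sobolevConst * B) ^ 2) ^ 2 * ‖(fourier 1 h : ℂ) - 1‖ ^ 2 := by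
  have hY := hM.continuous_boundaryTerm hr hc
  have hdisc := continuous_discMap_fourier hc.summable_norm
  have hdisc' : Continuous fun θ : UnitAddCircle => discMap c (fourier 1 (θ + h)) :=
    hdisc.comp (continuous_add_const h)
  have hβ : B ≤ sobolevConst * B := le_mul_of_one_le_left hc.nonneg one_le_sobolevConst
  have hB := hc.nonneg
  set β := sobolevConst * B
  set δ := ‖(fourier 1 h : ℂ) - 1‖
  have hpt : ∀ θ, ‖boundaryTerm M c (θ + h) - boundaryTerm M c θ‖ ^ 2
      ≤ 2 * (2 * C * β) ^ 2 * ‖discMap c (fourier 1 (θ + h)) - discMap c (fourier 1 θ)‖ ^ 2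
        + 2 * (2 * C * β ^ 2 * δ) ^ 2 := fun θ => by
    refine (pow_le_pow_left₀ (norm_nonneg _) (hM.norm_boundaryTerm_translate_le hr hc θ h) 2).trans
      (add_sq_le.trans_eq ?_)
    ring
  calc ∫ θ, ‖boundaryTerm M c (θ + h) - boundaryTerm M c θ‖ ^ 2 ∂haarAddCircle
      ≤ ∫ θ : UnitAddCircle, (2 * (2 * C * β) ^ 2 *
          ‖discMap c (fourier 1 (θ + h)) - discMap c (fourier 1 θ)‖ ^ 2
            + 2 * (2 * C * β ^ 2 * δ) ^ 2) ∂haarAddCircle :=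
        integral_mono (integrable_of_continuous (by fun_prop))
          (integrable_of_continuous (by fun_prop)) hpt
    _ = 2 * (2 * C * β) ^ 2 * (∫ θ : UnitAddCircle,
          ‖discMap c (fourier 1 (θ + h)) - discMap c (fourier 1 θ)‖ ^ 2 ∂haarAddCircle)
            + 2 * (2 * C * β ^ 2 * δ) ^ 2 := by
        rw [integral_add (integrable_of_continuous (by fun_prop)) (integrable_const _),
          integral_const_mul, integral_const, probReal_univ, one_smul]
    _ ≤ 2 * (2 * C * β) ^ 2 * (β ^ 2 * δ ^ 2) + 2 * (2 * C * β ^ 2 * δ) ^ 2 := by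
        gcongr
        exact (hc.integral_sq_norm_discMap_translate_le h).trans (by gcongr)
    _ = (4 * C * β ^ 2) ^ 2 * δ ^ 2 := by ring

variable [InnerProductSpace ℂ W] [CompleteSpace W]

theorem QuadLip.sum_mul_sq_norm_fourierCoeff_boundaryTerm_le (hM : QuadLip C r M)
    (hr : 2 * (sobolevConst * B) ≤ r) (hc : SobolevBound B c) (s : Finset ℤ) :
    ∑ k ∈ s, (1 + (k : ℝ) ^ 2) * ‖fourierCoeff (boundaryTerm M c) k‖ ^ 2
      ≤ (5 * C * sobolevConst ^ 2 * B ^ 2) ^ 2 := by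
  have hY := hM.continuous_boundaryTerm hr hc
  have hzero : ∑ k ∈ s, ‖fourierCoeff (boundaryTerm M c) k‖ ^ 2
      ≤ (2 * C * (sobolevConst * B) ^ 2) ^ 2 :=
    calc ∑ k ∈ s, ‖fourierCoeff (boundaryTerm M c) k‖ ^ 2
        ≤ ∫ θ, ‖boundaryTerm M c θ‖ ^ 2 ∂haarAddCircle := sum_sq_norm_fourierCoeff_le hY s
      _ ≤ ∫ θ : UnitAddCircle, (2 * C * (sobolevConst * B) ^ 2) ^ 2 ∂haarAddCircle :=
          integral_mono (integrable_of_continuous (by fun_prop)) (integrable_const _) fun θ =>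
            pow_le_pow_left₀ (norm_nonneg _) (hM.norm_boundaryTerm_le hr hc θ) 2
      _ = (2 * C * (sobolevConst * B) ^ 2) ^ 2 := by simp
  have hone := sum_sq_mul_sq_norm_fourierCoeff_le hY
    (hM.integral_sq_norm_boundaryTerm_translate_le hr hc) s
  calc ∑ k ∈ s, (1 + (k : ℝ) ^ 2) * ‖fourierCoeff (boundaryTerm M c) k‖ ^ 2
      = ∑ k ∈ s, ‖fourierCoeff (boundaryTerm M c) k‖ ^ 2
        + ∑ k ∈ s, (k : ℝ) ^ 2 * ‖fourierCoeff (boundaryTerm M c) k‖ ^ 2 := by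
        rw [← Finset.sum_add_distrib]
        simp only [add_mul, one_mul]
    _ ≤ (5 * C * sobolevConst ^ 2 * B ^ 2) ^ 2 := by
        nlinarith [sq_nonneg (C * (sobolevConst * B) ^ 2)]

theorem QuadLip.sum_sq_norm_fourierCoeff_boundaryTerm_sub_le (hM : QuadLip C r M)
    (hr : 2 * (sobolevConst * B) ≤ r) (hc : SobolevBound B c) (hc' : SobolevBound B c') {N : ℝ}
    (hN : ∀ s : Finset ℕ, ∑ k ∈ s, ‖c k - c' k‖ ^ 2 ≤ N ^ 2) (s : Finset ℤ) :
    ∑ k ∈ s, ‖fourierCoeff (boundaryTerm M c) k - fourierCoeff (boundaryTerm M c') k‖ ^ 2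
      ≤ (2 * C * (sobolevConst * B) * N) ^ 2 := by
  have hY := hM.continuous_boundaryTerm hr hc
  have hY' := hM.continuous_boundaryTerm hr hc'
  have hsub : Summable fun k => ‖c k - c' k‖ :=
    (hc.summable_norm.add hc'.summable_norm).of_nonneg_of_le (fun _ => norm_nonneg _)
      fun k => norm_sub_le _ _
  have hdisc := continuous_discMap_fourier hsub
  have hpt : ∀ θ, ‖boundaryTerm M c θ - boundaryTerm M c' θ‖ ^ 2
      ≤ (2 * C * (sobolevConst * B)) ^ 2 * ‖discMap (fun k => c k - c' k) (fourier 1 θ)‖ ^ 2 :=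
    fun θ => by
      have h := hM.norm_boundaryTerm_sub_le hr hc hc' θ θ
      rw [sub_self, norm_zero, mul_zero, add_zero, ← discMap_sub hc.summable_norm
        hc'.summable_norm (norm_fourier_apply 1 θ).le] at h
      exact (pow_le_pow_left₀ (norm_nonneg _) h 2).trans_eq (mul_pow _ _ _)
  simp only [← fourierCoeff_sub (integrable_of_continuous hY) (integrable_of_continuous hY')]
  calc ∑ k ∈ s, ‖fourierCoeff (fun θ => boundaryTerm M c θ - boundaryTerm M c' θ) k‖ ^ 2
      ≤ ∫ θ, ‖boundaryTerm M c θ - boundaryTerm M c' θ‖ ^ 2 ∂haarAddCircle :=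
        sum_sq_norm_fourierCoeff_le (hY.sub hY') s
    _ ≤ ∫ θ : UnitAddCircle, (2 * C * (sobolevConst * B)) ^ 2 *
          ‖discMap (fun k => c k - c' k) (fourier 1 θ)‖ ^ 2 ∂haarAddCircle :=
        integral_mono (integrable_of_continuous (by fun_prop))
          (integrable_of_continuous (by fun_prop)) hpt
    _ = (2 * C * (sobolevConst * B)) ^ 2 * ∫ θ : UnitAddCircle,
          ‖discMap (fun k => c k - c' k) (fourier 1 θ)‖ ^ 2 ∂haarAddCircle :=
        integral_const_mul _ _
    _ ≤ (2 * C * (sobolevConst * B) * N) ^ 2 := by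
        rw [mul_pow _ N]
        gcongr
        exact hasSum_le_of_sum_le (hasSum_sq_norm_discMap hsub) hN

end BoundaryTerm

/-! ### Discs as fixed points -/

section Picard

variable {V : Type*} [NormedAddCommGroup V]

theorem sum_mul_sq_norm_single_sub_le {w : ℕ → ℝ} (hw : w 0 = 1) {a : ℕ → V} {N : ℝ} (hN : 0 ≤ N)
    (ha : ∀ s : Finset ℕ, ∑ k ∈ s, w k * ‖a k‖ ^ 2 ≤ N ^ 2) (x : V) (s : Finset ℕ) :
    ∑ k ∈ s, w k * ‖((Pi.single 0 x : ℕ → V) - a) k‖ ^ 2 ≤ (‖x‖ + N) ^ 2 := by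
  have ha0 : ‖a 0‖ ≤ N := le_of_sq_le_sq (by simpa [hw] using ha {0}) hN
  have hpt : ∀ k ∈ s, w k * ‖((Pi.single 0 x : ℕ → V) - a) k‖ ^ 2
      ≤ w k * ‖a k‖ ^ 2 + if k = 0 then ‖x‖ ^ 2 + 2 * ‖x‖ * N else 0 := fun k _ => by
    rcases eq_or_ne k 0 with rfl | hk
    · have hsub : ‖x - a 0‖ ^ 2 ≤ (‖x‖ + ‖a 0‖) ^ 2 := by
        gcongr
        exact norm_sub_le _ _
      simp only [Pi.sub_apply, Pi.single_eq_same, hw, one_mul, if_true]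
      nlinarith [mul_le_mul_of_nonneg_left ha0 (norm_nonneg x)]
    · simp [hk]
  have hsingle : (∑ k ∈ s, if k = 0 then ‖x‖ ^ 2 + 2 * ‖x‖ * N else 0) ≤ ‖x‖ ^ 2 + 2 * ‖x‖ * N := by
    rw [Finset.sum_ite_eq' s 0]
    split_ifs
    exacts [le_rfl, by positivity]
  calc ∑ k ∈ s, w k * ‖((Pi.single 0 x : ℕ → V) - a) k‖ ^ 2
      ≤ N ^ 2 + (‖x‖ ^ 2 + 2 * ‖x‖ * N) :=
        (Finset.sum_le_sum hpt).trans (Finset.sum_add_distrib.trans_le (add_le_add (ha s) hsingle))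
    _ = (‖x‖ + N) ^ 2 := by ring

/-- The Fourier coefficients of nonnegative index of the boundary term, that is, the Taylor
coefficients of its Szegő projection. -/
def plusCoeff {W : Type*} [NormedAddCommGroup W] [NormedSpace ℂ V] [NormedSpace ℂ W] (M : V → W)
    (c : ℕ → V) (k : ℕ) : W :=
  fourierCoeff (boundaryTerm M c) k

/-- The Picard operator whose fixed points are the discs with coefficients `c` satisfying
`c + plusCoeff M c = b + P (discMap (plusCoeff M c) t)`, the right-hand side being constant. -/
def nextCoeff [NormedSpace ℂ V] (M : V → V) (P : V →L[ℂ] V) (b : V) (t : ℂ) (c : ℕ → V) : ℕ → V :=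
  Pi.single 0 (b + P (discMap (plusCoeff M c) t)) - plusCoeff M c

theorem nextCoeff_sub_nextCoeff [NormedSpace ℂ V] (M : V → V) (P : V →L[ℂ] V) (b b' : V) (t t' : ℂ)
    (c c' : ℕ → V) :
    nextCoeff M P b t c - nextCoeff M P b' t' c'
      = Pi.single 0 (b - b' + P (discMap (plusCoeff M c') t - discMap (plusCoeff M c') t')
          + P (discMap (plusCoeff M c) t - discMap (plusCoeff M c') t))
        - (plusCoeff M c - plusCoeff M c') := by
  rw [nextCoeff, nextCoeff, sub_sub_sub_comm, ← Pi.single_sub, map_sub, map_sub]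
  congr 2
  abel

variable [InnerProductSpace ℂ V] [CompleteSpace V] {C r B : ℝ} {c c' : ℕ → V}

section PlusCoeff

variable {W : Type*} [NormedAddCommGroup W] [InnerProductSpace ℂ W] [CompleteSpace W] {M : V → W}

theorem QuadLip.sobolevBound_plusCoeff (hM : QuadLip C r M) (hr : 2 * (sobolevConst * B) ≤ r)
    (hc : SobolevBound B c) :
    SobolevBound (5 * C * sobolevConst ^ 2 * B ^ 2) (plusCoeff M c) where
  nonneg := mul_nonneg (mul_nonneg (mul_nonneg (by norm_num) hM.nonneg) (sq_nonneg _)) (sq_nonneg _)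
  sum_le s := by
    simpa [plusCoeff] using
      hM.sum_mul_sq_norm_fourierCoeff_boundaryTerm_le hr hc (s.map Nat.castEmbedding)

theorem QuadLip.sum_sq_norm_plusCoeff_sub_le (hM : QuadLip C r M)
    (hr : 2 * (sobolevConst * B) ≤ r) (hc : SobolevBound B c) (hc' : SobolevBound B c') {N : ℝ}
    (hN : ∀ s : Finset ℕ, ∑ k ∈ s, ‖c k - c' k‖ ^ 2 ≤ N ^ 2) (s : Finset ℕ) :
    ∑ k ∈ s, ‖plusCoeff M c k - plusCoeff M c' k‖ ^ 2
      ≤ (2 * C * (sobolevConst * B) * N) ^ 2 := by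
  simpa [plusCoeff] using
    hM.sum_sq_norm_fourierCoeff_boundaryTerm_sub_le hr hc hc' hN (s.map Nat.castEmbedding)

theorem QuadLip.norm_discMap_plusCoeff_le (hM : QuadLip C r M) (hr : 2 * (sobolevConst * B) ≤ r)
    (hc : SobolevBound B c) {t : ℂ} (ht : ‖t‖ ≤ 1 / 2) :
    ‖discMap (plusCoeff M c) t‖ ≤ 2 * (5 * C * sobolevConst ^ 2 * B ^ 2) :=
  have hplus := hM.sobolevBound_plusCoeff hr hc
  norm_discMap_le_two_mul hplus.nonneg hplus.sum_sq_norm_le ht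

theorem QuadLip.norm_discMap_plusCoeff_sub_le (hM : QuadLip C r M)
    (hr : 2 * (sobolevConst * B) ≤ r) (hc : SobolevBound B c) (hc' : SobolevBound B c') {N : ℝ}
    (hN0 : 0 ≤ N) (hN : ∀ s : Finset ℕ, ∑ k ∈ s, ‖c k - c' k‖ ^ 2 ≤ N ^ 2) {t : ℂ}
    (ht : ‖t‖ ≤ 1 / 2) :
    ‖discMap (plusCoeff M c) t - discMap (plusCoeff M c') t‖
      ≤ 2 * (2 * C * (sobolevConst * B) * N) := by
  have hC := hM.nonneg
  have hB := hc.nonneg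
  have hK := one_le_sobolevConst
  rw [← discMap_sub (hM.sobolevBound_plusCoeff hr hc).summable_norm
    (hM.sobolevBound_plusCoeff hr hc').summable_norm (ht.trans one_half_lt_one.le)]
  exact norm_discMap_le_two_mul (by positivity) (hM.sum_sq_norm_plusCoeff_sub_le hr hc hc' hN) ht

end PlusCoeff

variable {M : V → V} {P : V →L[ℂ] V} {b b' : V} {t t' : ℂ}

theorem QuadLip.sobolevBound_nextCoeff (hM : QuadLip C r M) (hr : 2 * (sobolevConst * B) ≤ r)
    (hP : ‖P‖ ≤ 1) (hsmall : 30 * C * sobolevConst ^ 2 * B ≤ 1) (hc : SobolevBound B c)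
    (hb : ‖b‖ ≤ B / 2) (ht : ‖t‖ ≤ 1 / 2) : SobolevBound B (nextCoeff M P b t c) where
  nonneg := hc.nonneg
  sum_le s := by
    have hplus := hM.sobolevBound_plusCoeff hr hc
    have hB := hc.nonneg
    have hx : ‖b + P (discMap (plusCoeff M c) t)‖
        ≤ B / 2 + 2 * (5 * C * sobolevConst ^ 2 * B ^ 2) :=
      norm_add_le_of_le hb ((P.le_of_opNorm_le hP _).trans
        ((one_mul _).trans_le (hM.norm_discMap_plusCoeff_le hr hc ht)))
    refine (sum_mul_sq_norm_single_sub_le (w := fun k : ℕ => 1 + (k : ℝ) ^ 2) (by simp)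
      hplus.nonneg hplus.sum_le _ s).trans
        (pow_le_pow_left₀ (add_nonneg (norm_nonneg _) hplus.nonneg) ?_ 2)
    nlinarith

theorem QuadLip.sum_sq_norm_nextCoeff_sub_le (hM : QuadLip C r M)
    (hr : 2 * (sobolevConst * B) ≤ r) (hP : ‖P‖ ≤ 1)
    (hsmall : 30 * C * sobolevConst ^ 2 * B ≤ 1) (hc : SobolevBound B c) (hc' : SobolevBound B c')
    (ht : ‖t‖ ≤ 1 / 2) {N : ℝ} (hN0 : 0 ≤ N)
    (hN : ∀ s : Finset ℕ, ∑ k ∈ s, ‖c k - c' k‖ ^ 2 ≤ N ^ 2) (s : Finset ℕ) :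
    ∑ k ∈ s, ‖nextCoeff M P b t c k - nextCoeff M P b' t' c' k‖ ^ 2
      ≤ (‖b - b' + P (discMap (plusCoeff M c') t - discMap (plusCoeff M c') t')‖ + N / 2) ^ 2 := by
  have hC := hM.nonneg
  have hB := hc.nonneg
  have hK := one_le_sobolevConst
  have hcontract : 6 * C * (sobolevConst * B) * N ≤ N / 2 := by
    have hsq : C * (sobolevConst * B) ≤ C * (sobolevConst ^ 2 * B) := by
      gcongr
      exact le_self_pow₀ hK two_ne_zero
    nlinarith
  have hx := norm_add_le_of_le
    (le_refl ‖b - b' + P (discMap (plusCoeff M c') t - discMap (plusCoeff M c') t')‖)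
    ((P.le_of_opNorm_le hP _).trans
      ((one_mul _).trans_le (hM.norm_discMap_plusCoeff_sub_le hr hc hc' hN0 hN ht)))
  have hsum := sum_mul_sq_norm_single_sub_le (w := fun _ => 1) rfl
    (a := plusCoeff M c - plusCoeff M c') (N := 2 * C * (sobolevConst * B) * N) (by positivity)
    (by simpa using hM.sum_sq_norm_plusCoeff_sub_le hr hc hc' hN)
    (b - b' + P (discMap (plusCoeff M c') t - discMap (plusCoeff M c') t')
      + P (discMap (plusCoeff M c) t - discMap (plusCoeff M c') t)) s
  rw [← nextCoeff_sub_nextCoeff] at hsum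
  simp only [Pi.sub_apply, one_mul] at hsum
  refine hsum.trans (pow_le_pow_left₀ (by positivity) ?_ 2)
  linarith

end Picard

section FixedPoint

variable {V : Type*} [NormedAddCommGroup V]

theorem sum_sq_norm_le_sq_norm_lp (x : lp (fun _ : ℕ => V) 2) (s : Finset ℕ) :
    ∑ k ∈ s, ‖x k‖ ^ 2 ≤ ‖x‖ ^ 2 := by
  simpa using lp.sum_rpow_le_norm_rpow (p := 2) (by simp) x s

theorem norm_lp_le_of_sum_sq_norm_le (x : lp (fun _ : ℕ => V) 2) {N : ℝ} (hN : 0 ≤ N)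
    (h : ∀ s : Finset ℕ, ∑ k ∈ s, ‖x k‖ ^ 2 ≤ N ^ 2) : ‖x‖ ≤ N :=
  lp.norm_le_of_forall_sum_le (p := 2) (by simp) hN fun s => by simpa using h s

variable {C r B : ℝ} {c c' : ℕ → V}

theorem SobolevBound.memℓp_two (hc : SobolevBound B c) : Memℓp c 2 :=
  memℓp_gen' (C := B ^ 2) fun s => by simpa using hc.sum_sq_norm_le s

theorem isClosed_setOf_sobolevBound (B : ℝ) :
    IsClosed {x : lp (fun _ : ℕ => V) 2 | SobolevBound B x} := by
  have hcoe := (lp.uniformContinuous_coe (E := fun _ : ℕ => V) (p := 2)).continuous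
  have hset : {x : lp (fun _ : ℕ => V) 2 | SobolevBound B x} = {_x | 0 ≤ B} ∩
      ⋂ s : Finset ℕ, {x | ∑ k ∈ s, (1 + (k : ℝ) ^ 2) * ‖x k‖ ^ 2 ≤ B ^ 2} :=
    Set.ext fun x => ⟨fun h => ⟨h.nonneg, mem_iInter.2 h.sum_le⟩,
      fun h => ⟨h.1, fun s => mem_iInter.1 h.2 s⟩⟩
  rw [hset]
  refine isClosed_const.inter (isClosed_iInter fun s =>
    isClosed_le (continuous_finsetSum _ fun k _ => ?_) continuous_const)
  exact continuous_const.mul (((continuous_apply k).comp hcoe).norm.pow 2)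

variable [InnerProductSpace ℂ V] [CompleteSpace V] {M : V → V} {P : V →L[ℂ] V} {b b' : V}
  {t t' : ℂ}

theorem QuadLip.exists_nextCoeff_eq_self (hM : QuadLip C r M) (hr : 2 * (sobolevConst * B) ≤ r)
    (hP : ‖P‖ ≤ 1) (hsmall : 30 * C * sobolevConst ^ 2 * B ≤ 1) (hb : ‖b‖ ≤ B / 2)
    (ht : ‖t‖ ≤ 1 / 2) : ∃ c : ℕ → V, SobolevBound B c ∧ nextCoeff M P b t c = c := by
  let S : Set (lp (fun _ : ℕ => V) 2) := {x | SobolevBound B x}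
  have hB : 0 ≤ B := by linarith [norm_nonneg b]
  have : CompleteSpace S := (isClosed_setOf_sobolevBound B).completeSpace_coe
  have : Nonempty S := ⟨⟨0, hB, fun s => by simpa using sq_nonneg B⟩⟩
  have hnext : ∀ x : S, SobolevBound B (nextCoeff M P b t x.1) := fun x =>
    hM.sobolevBound_nextCoeff hr hP hsmall x.2 hb ht
  let T : S → S := fun x => ⟨⟨nextCoeff M P b t x.1, (hnext x).memℓp_two⟩, hnext x⟩
  have hT : ContractingWith (1 / 2) T := by
    refine ⟨by norm_num, LipschitzWith.of_dist_le_mul fun x y => ?_⟩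
    rw [Subtype.dist_eq, Subtype.dist_eq, dist_eq_norm, dist_eq_norm]
    refine norm_lp_le_of_sum_sq_norm_le _ (by positivity) fun s => ?_
    refine (hM.sum_sq_norm_nextCoeff_sub_le hr hP hsmall x.2 y.2 ht (norm_nonneg (x.1 - y.1))
      (sum_sq_norm_le_sq_norm_lp (x.1 - y.1)) s).trans_eq ?_
    simp [div_eq_inv_mul]
  exact ⟨hT.fixedPoint.1, hT.fixedPoint.2,
    congrArg (fun x : S => (x.1 : ℕ → V)) hT.fixedPoint_isFixedPt⟩

theorem QuadLip.sum_sq_norm_sub_le_of_nextCoeff_eq_self (hM : QuadLip C r M)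
    (hr : 2 * (sobolevConst * B) ≤ r) (hP : ‖P‖ ≤ 1)
    (hsmall : 30 * C * sobolevConst ^ 2 * B ≤ 1) (hc : SobolevBound B c) (hc' : SobolevBound B c')
    (ht : ‖t‖ ≤ 1 / 2) (hfix : nextCoeff M P b t c = c) (hfix' : nextCoeff M P b' t' c' = c')
    (s : Finset ℕ) :
    ∑ k ∈ s, ‖c k - c' k‖ ^ 2
      ≤ (2 * ‖b - b' + P (discMap (plusCoeff M c') t - discMap (plusCoeff M c') t')‖) ^ 2 := by
  set δ := ‖b - b' + P (discMap (plusCoeff M c') t - discMap (plusCoeff M c') t')‖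
  let x : lp (fun _ : ℕ => V) 2 := ⟨c, hc.memℓp_two⟩
  let x' : lp (fun _ : ℕ => V) 2 := ⟨c', hc'.memℓp_two⟩
  have hle : ‖x - x'‖ ≤ δ + ‖x - x'‖ / 2 :=
    norm_lp_le_of_sum_sq_norm_le _ (by positivity) fun s => by
      have h := hM.sum_sq_norm_nextCoeff_sub_le hr hP hsmall hc hc' ht (b := b) (b' := b')
        (t' := t') (norm_nonneg (x - x')) (sum_sq_norm_le_sq_norm_lp (x - x')) s
      rwa [hfix, hfix'] at h
  refine (sum_sq_norm_le_sq_norm_lp (x - x') s).trans (pow_le_pow_left₀ (norm_nonneg _) ?_ 2)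
  linarith

theorem QuadLip.continuousOn_discMap_of_nextCoeff_eq_self (hM : QuadLip C r M)
    (hr : 2 * (sobolevConst * B) ≤ r) (hP : ‖P‖ ≤ 1)
    (hsmall : 30 * C * sobolevConst ^ 2 * B ≤ 1) {s : Set ℂ} (hs : ∀ t ∈ s, ‖t‖ ≤ 1 / 2)
    {b : ℂ → V} (hb : ContinuousOn b s) {c : ℂ → ℕ → V} (hc : ∀ t ∈ s, SobolevBound B (c t))
    (hfix : ∀ t ∈ s, nextCoeff M P (b t) t (c t) = c t) :
    ContinuousOn (fun t => discMap (c t) t) s := by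
  intro t₀ ht₀
  let A := discMap (plusCoeff M (c t₀))
  let δ : ℂ → V := fun t => b t - b t₀ + P (A t - A t₀)
  have hs1 : ∀ t ∈ s, ‖t‖ ≤ 1 := fun t ht => (hs t ht).trans one_half_lt_one.le
  have hsub : s ⊆ closedBall 0 1 := fun t ht => mem_closedBall_zero_iff.2 (hs1 t ht)
  have hA : ContinuousOn A s :=
    (continuousOn_discMap (hM.sobolevBound_plusCoeff hr (hc t₀ ht₀)).summable_norm).mono hsub
  have hδ : Tendsto (fun t => 2 * (2 * ‖δ t‖)) (𝓝[s] t₀) (𝓝 0) := by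
    have h : ContinuousOn (fun t => 2 * (2 * ‖δ t‖)) s := by fun_prop
    simpa [δ] using (h t₀ ht₀).tendsto
  have hbound : ∀ t ∈ s, ‖discMap (c t) t - discMap (c t₀) t‖ ≤ 2 * (2 * ‖δ t‖) := fun t ht => by
    rw [← discMap_sub (hc t ht).summable_norm (hc t₀ ht₀).summable_norm (hs1 t ht)]
    exact norm_discMap_le_two_mul (by positivity) (hM.sum_sq_norm_sub_le_of_nextCoeff_eq_self hr hP
      hsmall (hc t ht) (hc t₀ ht₀) (hs t ht) (hfix t ht) (hfix t₀ ht₀)) (hs t ht)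
  have hzero : Tendsto (fun t => discMap (c t) t - discMap (c t₀) t) (𝓝[s] t₀) (𝓝 0) :=
    squeeze_zero_norm' (eventually_mem_nhdsWithin.mono hbound) hδ
  simpa [ContinuousWithinAt] using
    hzero.add ((continuousOn_discMap (hc t₀ ht₀).summable_norm).mono hsub t₀ ht₀).tendsto

end FixedPoint

/-! ### Boundary values of discs -/

section FourierSeries

open MeasureTheory AddCircle

open scoped ComplexConjugate

section

variable {T : ℝ}

theorem conj_one_sub_of_norm_eq_one {ξ : ℂ} (hξ : ‖ξ‖ = 1) :
    conj (1 - ξ) = -(conj ξ * (1 - ξ)) := by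
  have hmul : conj ξ * ξ = 1 := by rw [conj_mul', hξ, ofReal_one, one_pow]
  rw [map_sub, map_one]
  linear_combination -hmul

theorem fourier_mul_conj_fourier (k : ℤ) (θ : AddCircle T) :
    (fourier k θ : ℂ) * conj (fourier k θ : ℂ) = 1 := by
  rw [mul_conj, normSq_eq_norm_sq, norm_fourier_apply, one_pow, ofReal_one]

variable [Fact (0 < T)]

theorem fourierCoeff_clm_apply {V W : Type*} [NormedAddCommGroup V] [NormedSpace ℂ V]
    [CompleteSpace V] [NormedAddCommGroup W] [NormedSpace ℂ W] [CompleteSpace W] (L : V →L[ℂ] W)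
    {Y : AddCircle T → V} (hY : Continuous Y) (k : ℤ) :
    fourierCoeff (fun θ => L (Y θ)) k = L (fourierCoeff Y k) := by
  simp only [fourierCoeff, ← map_smul]
  exact L.integral_comp_comm (integrable_of_continuous (by fun_prop))

variable {V : Type*} [NormedAddCommGroup V] [InnerProductSpace ℂ V] [CompleteSpace V]

theorem hasSum_fourier_smul_fourierCoeff {Y : AddCircle T → V} (hY : Continuous Y)
    (hs : Summable fun k => ‖fourierCoeff Y k‖) (θ : AddCircle T) :
    HasSum (fun k : ℤ => (fourier k θ : ℂ) • fourierCoeff Y k) (Y θ) := by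
  have hsum : Summable fun k : ℤ => (fourier k θ : ℂ) • fourierCoeff Y k :=
    .of_norm (hs.congr fun k => by rw [norm_smul, norm_fourier_apply, one_mul])
  suffices Y θ = ∑' k : ℤ, (fourier k θ : ℂ) • fourierCoeff Y k from this ▸ hsum.hasSum
  refine ext_inner_left ℂ fun v => ?_
  let y : C(AddCircle T, ℂ) := ⟨fun θ => inner ℂ v (Y θ), by fun_prop⟩
  have hcoeff : ∀ k, fourierCoeff y k = inner ℂ v (fourierCoeff Y k) := fun k =>
    (inner_fourierCoeff (integrable_of_continuous hY) v k).symm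
  have hsy : Summable (fourierCoeff y) :=
    .of_norm_bounded (hs.mul_left ‖v‖) fun k => by
      rw [hcoeff]
      exact norm_inner_le_norm _ _
  refine (has_pointwise_sum_fourier_series_of_summable hsy θ).unique
    (((innerSL ℂ v).hasSum hsum.hasSum).congr_fun fun k => ?_)
  simp [hcoeff, mul_comm]

end

variable {V : Type*} [NormedAddCommGroup V]

theorem summable_norm_of_sum_sobolev_le {a : ℤ → V} {B : ℝ} (hB : 0 ≤ B)
    (ha : ∀ s : Finset ℤ, ∑ k ∈ s, (1 + (k : ℝ) ^ 2) * ‖a k‖ ^ 2 ≤ B ^ 2) :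
    Summable fun k => ‖a k‖ := by
  have hnonneg : SobolevBound B fun k : ℕ => a k :=
    ⟨hB, fun s => by simpa using ha (s.map Nat.castEmbedding)⟩
  have hneg : SobolevBound B fun k : ℕ => a (-k) :=
    ⟨hB, fun s => by
      simpa using ha (s.map (Nat.castEmbedding.trans (Equiv.neg ℤ).toEmbedding))⟩
  exact .of_nat_of_neg hnonneg.summable_norm hneg.summable_norm

theorem summable_norm_single (x : V) :
    Summable fun k => ‖(Pi.single 0 x : ℕ → V) k‖ :=
  summable_of_ne_finset_zero (s := {0}) fun k hk => by
    simp [Pi.single_eq_of_ne (Finset.notMem_singleton.1 hk)]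

theorem discMap_single [NormedSpace ℂ V] (x : V) (ζ : ℂ) : discMap (Pi.single 0 x) ζ = x := by
  rw [discMap, tsum_eq_single 0 fun k hk => by rw [Pi.single_eq_of_ne hk, smul_zero]]
  simp

variable [InnerProductSpace ℂ V] [CompleteSpace V]

theorem eq_discMap_add_discMap_conj {Y : UnitAddCircle → V} (hY : Continuous Y)
    (hs : Summable fun k => ‖fourierCoeff Y k‖) (θ : UnitAddCircle) :
    Y θ = discMap (fun k : ℕ => fourierCoeff Y k) (fourier 1 θ)
      + discMap (fun k : ℕ => fourierCoeff Y (-k)) (conj (fourier 1 θ)) - fourierCoeff Y 0 := by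
  have hseries := (hasSum_fourier_smul_fourierCoeff hY hs θ).nat_add_neg
  rw [fourier_zero, one_smul] at hseries
  have hpos := hasSum_discMap (hs.comp_injective Nat.cast_injective) (norm_fourier_apply 1 θ).le
  have hneg := hasSum_discMap (c := fun k : ℕ => fourierCoeff Y (-k))
    (hs.comp_injective (neg_injective.comp Nat.cast_injective)) (ζ := conj (fourier 1 θ : ℂ))
    (by rw [RCLike.norm_conj, norm_fourier_apply])
  refine eq_sub_of_add_eq (hseries.unique ((hpos.add hneg).congr_fun fun k => ?_))
  rw [fourier_neg, fourier_natCast_apply, map_pow]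

theorem fourierCoeff_neg_succ_of_conj_eq {y : UnitAddCircle → ℂ}
    (hy : ∀ θ, conj (y θ) = -(fourier 1 θ * y θ)) (k : ℕ) :
    fourierCoeff y (-(k + 1) : ℤ) = -conj (fourierCoeff y k) := by
  simp only [fourierCoeff]
  rw [← integral_conj, ← integral_neg]
  refine integral_congr_ae (.of_forall fun θ => ?_)
  simp only [smul_eq_mul, map_mul, hy, neg_neg]
  rw [fourier_add, fourier_neg (n := (k : ℤ)), Complex.conj_conj]
  ring

theorem eq_discMap_sub_conj_of_conj_eq {y : UnitAddCircle → ℂ} (hyc : Continuous y)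
    (hs : Summable fun k => ‖fourierCoeff y k‖)
    (hy : ∀ θ, conj (y θ) = -(fourier 1 θ * y θ)) (θ : UnitAddCircle) :
    y θ = discMap (fun k : ℕ => fourierCoeff y k) (fourier 1 θ)
      - conj (fourier 1 θ * discMap (fun k : ℕ => fourierCoeff y k) (fourier 1 θ)) := by
  have hseries := (hasSum_fourier_smul_fourierCoeff hyc hs θ).nat_add_neg_add_one
  have hpos := hasSum_discMap (hs.comp_injective Nat.cast_injective) (norm_fourier_apply 1 θ).le
  have hneg := Complex.hasSum_conj'.2 (hpos.mul_left (fourier 1 θ : ℂ))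
  refine hseries.unique ((hpos.sub hneg).congr_fun fun k => ?_)
  rw [fourierCoeff_neg_succ_of_conj_eq hy, fourier_natCast_apply, fourier_neg, fourier_add,
    fourier_natCast_apply]
  simp only [smul_eq_mul, map_mul]
  ring

theorem fourierCoeff_natCast_conj_one_sub_fourier_smul (v : V) (k : ℕ) :
    fourierCoeff (fun θ : UnitAddCircle => conj (1 - fourier 1 θ : ℂ) • v) k
      = (Pi.single 0 v : ℕ → V) k := by
  have hsplit : (fun θ : UnitAddCircle => conj (1 - fourier 1 θ : ℂ) • v)
      = fun θ => (fourier 0 θ : ℂ) • v - (fourier (-1) θ : ℂ) • v := by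
    ext θ
    rw [fourier_neg, fourier_zero, map_sub, map_one, sub_smul]
  rw [hsplit, fourierCoeff_sub (integrable_of_continuous (by fun_prop))
    (integrable_of_continuous (by fun_prop)), fourierCoeff_fourier_smul, fourierCoeff_fourier_smul,
    if_neg (by lia : ¬ (k : ℤ) = -1), sub_zero, Pi.single_apply]
  simp

/- The holomorphic part of `θ ↦ conj (1 - fourier 1 θ) • v` is the constant `v`, and on the disc of
radius `1 / 2` the Szegő projection is bounded by twice the `L²` norm. -/
theorem norm_discMap_fourierCoeff_sub_le {Y : UnitAddCircle → V} (hY : Continuous Y)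
    (hs : Summable fun k => ‖fourierCoeff Y k‖) {v : V} {δ : ℝ}
    (hδ : ∀ θ, ‖Y θ - conj (1 - fourier 1 θ : ℂ) • v‖ ≤ δ) {t : ℂ} (ht : ‖t‖ ≤ 1 / 2) :
    ‖discMap (fun k : ℕ => fourierCoeff Y k) t - v‖ ≤ 2 * δ := by
  let Z : UnitAddCircle → V := fun θ => Y θ - conj (1 - fourier 1 θ : ℂ) • v
  have hconst : Continuous fun θ : UnitAddCircle => conj (1 - fourier 1 θ : ℂ) • v :=
    (Complex.continuous_conj.comp (by fun_prop)).smul continuous_const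
  have hZ : Continuous Z := hY.sub hconst
  have hcoeff : ∀ k : ℕ, fourierCoeff Z k = fourierCoeff Y k - (Pi.single 0 v : ℕ → V) k :=
    fun k => by
      rw [fourierCoeff_sub (integrable_of_continuous hY) (integrable_of_continuous hconst),
        fourierCoeff_natCast_conj_one_sub_fourier_smul]
  have hint : ∫ θ, ‖Z θ‖ ^ 2 ∂haarAddCircle ≤ δ ^ 2 :=
    (integral_mono (integrable_of_continuous (by fun_prop)) (integrable_const (δ ^ 2)) fun θ =>
      pow_le_pow_left₀ (norm_nonneg _) (hδ θ) 2).trans_eq (by simp)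
  have heq : discMap (fun k : ℕ => fourierCoeff Y k) t - v
      = discMap (fun k : ℕ => fourierCoeff Z k) t := by
    simp only [hcoeff]
    rw [discMap_sub (hs.comp_injective Nat.cast_injective) (summable_norm_single v)
      (ht.trans one_half_lt_one.le), discMap_single]
  rw [heq]
  refine norm_discMap_le_two_mul ((norm_nonneg _).trans (hδ 0)) (fun s => ?_) ht
  simpa using (sum_sq_norm_fourierCoeff_le hZ (s.map Nat.castEmbedding)).trans hint

end FourierSeries

section BoundaryValues

open MeasureTheory AddCircle

open scoped ComplexConjugate

theorem QuadLip.clm_comp {V W W' : Type*} [NormedAddCommGroup V] [NormedAddCommGroup W]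
    [NormedSpace ℂ W] [NormedAddCommGroup W'] [NormedSpace ℂ W'] {C r : ℝ} {M : V → W}
    (hM : QuadLip C r M) (L : W →L[ℂ] W') : QuadLip (‖L‖ * C) r fun x => L (M x) where
  nonneg := mul_nonneg (norm_nonneg _) hM.nonneg
  map_zero := by rw [hM.map_zero, _root_.map_zero]
  norm_map_sub_le x y hx hy := by
    rw [← map_sub, mul_assoc, mul_assoc, ← mul_assoc C]
    exact L.le_opNorm_of_le (hM.norm_map_sub_le hx hy)

theorem conj_boundaryTerm_ofReal {V : Type*} [NormedAddCommGroup V] [NormedSpace ℂ V] (R : V → ℝ)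
    (c : ℕ → V) (θ : UnitAddCircle) :
    conj (boundaryTerm (fun x => (R x : ℂ)) c θ)
      = -(fourier 1 θ * boundaryTerm (fun x => (R x : ℂ)) c θ) := by
  simp only [boundaryTerm, smul_eq_mul, map_mul, map_inv₀, conj_ofReal]
  rw [conj_one_sub_of_norm_eq_one (norm_fourier_apply 1 θ), inv_neg, mul_inv, ← map_inv₀,
    inv_eq_of_mul_eq_one_right (fourier_mul_conj_fourier 1 θ), conj_conj]
  ring

variable {V : Type*} [NormedAddCommGroup V] [InnerProductSpace ℂ V]

theorem QuadLip.ofReal_of_inner {C r : ℝ} {M : V → V} {e : V} {R : V → ℝ}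
    (hM : QuadLip C r M) (hR : ∀ x, inner ℂ e (M x) = -(R x : ℂ)) :
    QuadLip (‖innerSL ℂ (-e)‖ * C) r fun x => (R x : ℂ) := by
  simpa [hR] using hM.clm_comp (innerSL ℂ (-e))

theorem norm_inv_mul_sub_conj_mul_le {E : V → ℝ} {CE β d r : ℝ} (hCE : 0 ≤ CE) (hβ : 2 * β ≤ r)
    (hE : ∀ x, ‖x‖ ≤ r → |E x| ≤ CE * ‖x‖ ^ 3) {x b : V} (hx : ‖x‖ ≤ β) (hb : ‖b‖ ≤ β)
    (hd : ‖x - b‖ ≤ d) {s : ℂ} (hs : ‖s‖ ≤ 2) :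
    ‖s⁻¹ * ((‖s • x‖ ^ 2 + E (s • x) : ℝ) : ℂ) - conj s * ((‖b‖ ^ 2 : ℝ) : ℂ)‖
      ≤ 4 * β * d + 4 * CE * β ^ 3 := by
  have hd0 := (norm_nonneg _).trans hd
  have hβ0 := (norm_nonneg _).trans hb
  rcases eq_or_ne s 0 with rfl | hs0
  · simpa using by positivity
  have hspos := norm_pos_iff.2 hs0
  have hsplit : s⁻¹ * ((‖s • x‖ ^ 2 + E (s • x) : ℝ) : ℂ) - conj s * ((‖b‖ ^ 2 : ℝ) : ℂ)
      = conj s * ((‖x‖ ^ 2 - ‖b‖ ^ 2 : ℝ) : ℂ) + s⁻¹ * (E (s • x) : ℂ) := by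
    have hnorm : (‖s‖ : ℂ) ^ 2 = s * conj s := by
      rw [mul_conj, normSq_eq_norm_sq, ofReal_pow]
    rw [norm_smul]
    push_cast
    rw [mul_pow, hnorm]
    field_simp
    ring
  have hquad : |‖x‖ ^ 2 - ‖b‖ ^ 2| ≤ d * (2 * β) := by
    rw [sq_sub_sq, mul_comm, abs_mul, abs_of_nonneg (by positivity : 0 ≤ ‖x‖ + ‖b‖)]
    exact mul_le_mul ((abs_norm_sub_norm_le _ _).trans hd) (by linarith) (by positivity) hd0
  have hcubic : ‖s⁻¹ * (E (s • x) : ℂ)‖ ≤ 4 * CE * β ^ 3 := by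
    have hsx : ‖s • x‖ ≤ ‖s‖ * β := norm_smul_le_mul hx
    rw [norm_mul, norm_inv, norm_real, Real.norm_eq_abs, inv_mul_le_iff₀ hspos]
    calc |E (s • x)| ≤ CE * ‖s • x‖ ^ 3 :=
          hE _ (hsx.trans ((mul_le_mul_of_nonneg_right hs hβ0).trans hβ))
      _ ≤ CE * (‖s‖ * β) ^ 3 := by gcongr
      _ = ‖s‖ * (‖s‖ ^ 2 * CE * β ^ 3) := by ring
      _ ≤ ‖s‖ * (2 ^ 2 * CE * β ^ 3) := by gcongr
      _ = ‖s‖ * (4 * CE * β ^ 3) := by ring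
  rw [hsplit]
  refine norm_add_le_of_le ?_ hcubic
  rw [norm_mul, RCLike.norm_conj, norm_real, Real.norm_eq_abs]
  calc ‖s‖ * |‖x‖ ^ 2 - ‖b‖ ^ 2| ≤ 2 * (d * (2 * β)) := by gcongr
    _ = 4 * β * d := by ring

variable [CompleteSpace V]

section

variable {W W' : Type*} [NormedAddCommGroup W] [InnerProductSpace ℂ W] [CompleteSpace W]
  {C r B : ℝ} {M : V → W} {c : ℕ → V}

theorem QuadLip.summable_norm_fourierCoeff_boundaryTerm (hM : QuadLip C r M)
    (hr : 2 * (sobolevConst * B) ≤ r) (hc : SobolevBound B c) :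
    Summable fun k => ‖fourierCoeff (boundaryTerm M c) k‖ :=
  summable_norm_of_sum_sobolev_le (hM.sobolevBound_plusCoeff hr hc).nonneg
    (hM.sum_mul_sq_norm_fourierCoeff_boundaryTerm_le hr hc)

theorem QuadLip.discMap_plusCoeff_clm_comp [NormedAddCommGroup W'] [InnerProductSpace ℂ W']
    [CompleteSpace W'] (hM : QuadLip C r M) (hr : 2 * (sobolevConst * B) ≤ r)
    (hc : SobolevBound B c) (L : W →L[ℂ] W') {ζ : ℂ} (hζ : ‖ζ‖ ≤ 1) :
    discMap (plusCoeff (fun x => L (M x)) c) ζ = L (discMap (plusCoeff M c) ζ) := by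
  have hcoeff : plusCoeff (fun x => L (M x)) c = fun k => L (plusCoeff M c k) := by
    ext k
    simp only [plusCoeff, ← fourierCoeff_clm_apply L (hM.continuous_boundaryTerm hr hc),
      boundaryTerm, map_smul]
    rfl
  have hsum := L.hasSum (hasSum_discMap (hM.sobolevBound_plusCoeff hr hc).summable_norm hζ)
  rw [hcoeff, discMap, ← hsum.tsum_eq]
  simp

end

variable {C r B : ℝ} {M : V → V} {P : V →L[ℂ] V} {b : V} {t : ℂ} {c : ℕ → V}

theorem QuadLip.discMap_of_nextCoeff_eq_self (hM : QuadLip C r M)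
    (hr : 2 * (sobolevConst * B) ≤ r) (hc : SobolevBound B c) (hfix : nextCoeff M P b t c = c)
    {ζ : ℂ} (hζ : ‖ζ‖ ≤ 1) :
    discMap c ζ = b + P (discMap (plusCoeff M c) t) - discMap (plusCoeff M c) ζ := by
  conv_lhs => rw [← hfix]
  exact (discMap_sub (summable_norm_single _) (hM.sobolevBound_plusCoeff hr hc).summable_norm
    hζ).trans (by rw [discMap_single])

theorem QuadLip.map_discMap_of_nextCoeff_eq_self (hM : QuadLip C r M)
    (hr : 2 * (sobolevConst * B) ≤ r) (hc : SobolevBound B c) (hfix : nextCoeff M P b t c = c)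
    (hPP : ∀ x, P (P x) = P x) (hb : P b = b) (ht : ‖t‖ ≤ 1) : P (discMap c t) = b := by
  rw [hM.discMap_of_nextCoeff_eq_self hr hc hfix ht, map_sub, map_add, hPP, hb,
    add_sub_cancel_right]

theorem QuadLip.exists_discMap_add_boundaryTerm_eq (hM : QuadLip C r M)
    (hr : 2 * (sobolevConst * B) ≤ r) (hc : SobolevBound B c) (hfix : nextCoeff M P b t c = c) :
    ∃ (q : V) (a : ℕ → V), (Summable fun k => ‖a k‖) ∧ ∀ θ : UnitAddCircle,
      discMap c (fourier 1 θ) + boundaryTerm M c θ = q + discMap a (conj (fourier 1 θ)) := by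
  have hs := hM.summable_norm_fourierCoeff_boundaryTerm hr hc
  refine ⟨b + P (discMap (plusCoeff M c) t) - fourierCoeff (boundaryTerm M c) 0,
    fun k => fourierCoeff (boundaryTerm M c) (-k),
    hs.comp_injective (neg_injective.comp Nat.cast_injective), fun θ => ?_⟩
  rw [hM.discMap_of_nextCoeff_eq_self hr hc hfix (norm_fourier_apply 1 θ).le,
    eq_discMap_add_discMap_conj (hM.continuous_boundaryTerm hr hc) hs θ]
  unfold plusCoeff
  abel

theorem QuadLip.norm_discMap_sub_le_of_nextCoeff_eq_self (hM : QuadLip C r M)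
    (hr : 2 * (sobolevConst * B) ≤ r) (hc : SobolevBound B c) (hfix : nextCoeff M P b t c = c)
    (hP : ‖P‖ ≤ 1) (ht : ‖t‖ ≤ 1) {ζ : ℂ} (hζ : ‖ζ‖ ≤ 1) :
    ‖discMap c ζ - b‖ ≤ 10 * C * sobolevConst ^ 3 * B ^ 2 := by
  have hplus := hM.sobolevBound_plusCoeff hr hc
  rw [hM.discMap_of_nextCoeff_eq_self hr hc hfix hζ, sub_right_comm, add_sub_cancel_left]
  calc ‖P (discMap (plusCoeff M c) t) - discMap (plusCoeff M c) ζ‖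
      ≤ ‖discMap (plusCoeff M c) t‖ + ‖discMap (plusCoeff M c) ζ‖ :=
        (norm_sub_le _ _).trans (add_le_add_left ((P.le_of_opNorm_le hP _).trans_eq (one_mul _)) _)
    _ ≤ sobolevConst * (5 * C * sobolevConst ^ 2 * B ^ 2)
        + sobolevConst * (5 * C * sobolevConst ^ 2 * B ^ 2) :=
        add_le_add (hplus.norm_discMap_le ht) (hplus.norm_discMap_le hζ)
    _ = 10 * C * sobolevConst ^ 3 * B ^ 2 := by ring

variable {e : V} {R : V → ℝ}

theorem QuadLip.inner_discMap_of_nextCoeff_eq_self (hM : QuadLip C r M)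
    (hr : 2 * (sobolevConst * B) ≤ r) (hc : SobolevBound B c) (hfix : nextCoeff M P b t c = c)
    (heb : inner ℂ e b = 0) (heP : ∀ x, inner ℂ e (P x) = 0)
    (hR : ∀ x, inner ℂ e (M x) = -(R x : ℂ)) {ζ : ℂ} (hζ : ‖ζ‖ ≤ 1) :
    inner ℂ e (discMap c ζ) = discMap (plusCoeff (fun x => (R x : ℂ)) c) ζ := by
  have hcomp := hM.discMap_plusCoeff_clm_comp hr hc (innerSL ℂ (-e)) hζ
  simp only [innerSL_apply_apply, inner_neg_left, hR, neg_neg] at hcomp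
  rw [hcomp, hM.discMap_of_nextCoeff_eq_self hr hc hfix hζ, inner_sub_right, inner_add_right, heb,
    heP, add_zero, zero_sub]

theorem QuadLip.eq_two_mul_re_inner_of_nextCoeff_eq_self (hM : QuadLip C r M)
    (hr : 2 * (sobolevConst * B) ≤ r) (hc : SobolevBound B c) (hfix : nextCoeff M P b t c = c)
    (heb : inner ℂ e b = 0) (heP : ∀ x, inner ℂ e (P x) = 0)
    (hR : ∀ x, inner ℂ e (M x) = -(R x : ℂ)) (θ : UnitAddCircle) :
    R ((1 - fourier 1 θ : ℂ) • discMap c (fourier 1 θ))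
      = 2 * (inner ℂ e ((1 - fourier 1 θ : ℂ) • discMap c (fourier 1 θ))).re := by
  have hR' := hM.ofReal_of_inner hR
  have hy := eq_discMap_sub_conj_of_conj_eq (hR'.continuous_boundaryTerm hr hc)
    (hR'.summable_norm_fourierCoeff_boundaryTerm hr hc) (conj_boundaryTerm_ofReal R c) θ
  have hχ := hM.inner_discMap_of_nextCoeff_eq_self hr hc hfix heb heP hR
    (norm_fourier_apply 1 θ).le
  unfold plusCoeff at hχ
  rw [← hχ, boundaryTerm, smul_eq_mul] at hy
  rcases eq_or_ne (1 - fourier 1 θ : ℂ) 0 with h0 | h0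
  · have hR0 : (R 0 : ℂ) = 0 := hR'.map_zero
    rw [h0]
    simp [ofReal_eq_zero.1 hR0]
  · rw [inv_mul_eq_iff_eq_mul₀ h0] at hy
    have hadd : (R ((1 - fourier 1 θ : ℂ) • discMap c (fourier 1 θ)) : ℂ)
        = (1 - fourier 1 θ : ℂ) * inner ℂ e (discMap c (fourier 1 θ))
          + conj ((1 - fourier 1 θ : ℂ) * inner ℂ e (discMap c (fourier 1 θ))) := by
      rw [hy, map_mul, map_mul, map_sub, map_one]
      linear_combination conj (inner ℂ e (discMap c (fourier 1 θ))) * fourier_mul_conj_fourier 1 θ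
    rw [add_conj] at hadd
    rw [inner_smul_right]
    exact_mod_cast hadd

theorem QuadLip.norm_inner_discMap_sub_sq_norm_le (hM : QuadLip C r M)
    (hr : 2 * (sobolevConst * B) ≤ r) (hc : SobolevBound B c) (hfix : nextCoeff M P b t c = c)
    (heb : inner ℂ e b = 0) (heP : ∀ x, inner ℂ e (P x) = 0)
    (hR : ∀ x, inner ℂ e (M x) = -(R x : ℂ)) (hP : ‖P‖ ≤ 1) (hb : ‖b‖ ≤ B) (ht : ‖t‖ ≤ 1 / 2)
    {E : V → ℝ} {CE : ℝ} (hCE : 0 ≤ CE) (hE : ∀ x, ‖x‖ ≤ r → |E x| ≤ CE * ‖x‖ ^ 3)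
    (hRE : ∀ x, R x = ‖x‖ ^ 2 + E x) :
    ‖inner ℂ e (discMap c t) - ((‖b‖ ^ 2 : ℝ) : ℂ)‖
      ≤ 2 * ((40 * C * sobolevConst ^ 4 + 4 * CE * sobolevConst ^ 3) * B ^ 3) := by
  have hR' := hM.ofReal_of_inner hR
  have ht1 : ‖t‖ ≤ 1 := ht.trans one_half_lt_one.le
  have hbK : ‖b‖ ≤ sobolevConst * B :=
    hb.trans (le_mul_of_one_le_left hc.nonneg one_le_sobolevConst)
  rw [hM.inner_discMap_of_nextCoeff_eq_self hr hc hfix heb heP hR ht1]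
  refine norm_discMap_fourierCoeff_sub_le (hR'.continuous_boundaryTerm hr hc)
    (hR'.summable_norm_fourierCoeff_boundaryTerm hr hc) (fun θ => ?_) ht
  have hζ := (norm_fourier_apply 1 θ).le
  simp only [boundaryTerm, hRE, smul_eq_mul]
  refine (norm_inv_mul_sub_conj_mul_le hCE hr hE (hc.norm_discMap_le hζ) hbK
    (hM.norm_discMap_sub_le_of_nextCoeff_eq_self hr hc hfix hP ht1 hζ)
    (norm_one_sub_fourier_le 1 θ)).trans_eq ?_
  ring

end BoundaryValues

/-! ### The boundary Hopf lemma -/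

section MaximumPrinciple

variable {E F : Type*} [NormedAddCommGroup E] [NormedSpace ℂ E] [NormedAddCommGroup F]
  [NormedSpace ℂ F] {U : Set E}

theorem norm_le_of_eventually_frontier_norm_le [Nontrivial E] (hU : IsOpen U)
    (hb : Bornology.IsBounded U) {f : E → F} (hf : DifferentiableOn ℂ f U) {C : ℝ}
    (hC : ∀ ξ ∈ frontier U, ∀ᶠ ζ in 𝓝[U] ξ, ‖f ζ‖ ≤ C) {z : E} (hz : z ∈ U) : ‖f z‖ ≤ C := by
  by_contra! hCz
  let W := U ∩ {ζ | C < ‖f ζ‖}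
  have hW : IsOpen W := hf.continuousOn.norm.isOpen_inter_preimage hU isOpen_Ioi
  have hWU : closure W ⊆ U := by
    intro ξ hξ
    by_contra hξU
    have hξf : ξ ∈ frontier U :=
      ⟨closure_mono inter_subset_left hξ, by rwa [hU.interior_eq]⟩
    obtain ⟨ζ, hζ, hζC⟩ := ((mem_closure_iff_frequently.1 hξ).and_eventually
      (eventually_nhdsWithin_iff.1 (hC ξ hξf))).exists
    exact (hζC hζ.1).not_gt hζ.2
  refine hCz.not_ge (Complex.norm_le_of_forall_mem_frontier_norm_le (hb.subset inter_subset_left)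
    (hf.mono hWU).diffContOnCl (fun ξ hξ => ?_) (subset_closure ⟨hz, hCz⟩))
  rw [hW.frontier_eq] at hξ
  exact not_lt.1 fun hlt => hξ.2 ⟨hWU hξ.1, hlt⟩

theorem eq_zero_of_tendsto_zero_frontier [Nontrivial E] (hU : IsOpen U)
    (hb : Bornology.IsBounded U) {f : E → F} (hf : DifferentiableOn ℂ f U)
    (h0 : ∀ ξ ∈ frontier U, Tendsto f (𝓝[U] ξ) (𝓝 0)) {z : E} (hz : z ∈ U) : f z = 0 := by
  refine norm_le_zero_iff.1 (le_of_forall_pos_le_add fun ε hε => ?_)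
  rw [zero_add]
  exact norm_le_of_eventually_frontier_norm_le hU hb hf (fun ξ hξ =>
    ((tendsto_zero_iff_norm_tendsto_zero.1 (h0 ξ hξ)).eventually_le_const hε)) hz

theorem re_nonneg_of_eventually_frontier [Nontrivial E] (hU : IsOpen U)
    (hb : Bornology.IsBounded U) {h : E → ℂ} (hh : DifferentiableOn ℂ h U)
    (hfr : ∀ ξ ∈ frontier U, ∀ ε > 0, ∀ᶠ ζ in 𝓝[U] ξ, -ε ≤ (h ζ).re) {z : E} (hz : z ∈ U) :
    0 ≤ (h z).re := by
  refine le_of_forall_pos_le_add fun ε hε => ?_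
  have hexp := norm_le_of_eventually_frontier_norm_le hU hb (f := fun ζ => Complex.exp (-h ζ))
    hh.neg.cexp (C := Real.exp ε) (fun ξ hξ => by
      filter_upwards [hfr ξ hξ ε hε] with ζ hζ
      rw [Complex.norm_exp, neg_re]
      exact Real.exp_le_exp.2 (by linarith)) hz
  rw [Complex.norm_exp, neg_re, Real.exp_le_exp] at hexp
  linarith

theorem eqOn_const_of_re_nonneg (hc : IsPreconnected U) (hU : IsOpen U) {h : E → ℂ}
    (hh : DifferentiableOn ℂ h U) (hre : ∀ z ∈ U, 0 ≤ (h z).re) {w : E} (hw : w ∈ U)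
    (h0 : (h w).re = 0) : EqOn h (const E (h w)) U := by
  have hge : ∀ z ∈ U, 1 ≤ ‖1 + h z - h w‖ := by
    intro z hz
    refine le_trans ?_ (Complex.re_le_norm _)
    simp only [sub_re, add_re, one_re, h0]
    linarith [hre z hz]
  have hd : DifferentiableOn ℂ (fun z => (1 + h z - h w)⁻¹) U :=
    DifferentiableOn.inv (by fun_prop) fun z hz =>
      norm_pos_iff.1 (zero_lt_one.trans_le (hge z hz))
  intro z hz
  have hmax := Complex.eqOn_of_isPreconnected_of_isMaxOn_norm hc hU hd hw
    (fun z hz => by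
      simp only [mem_ofPred_eq, comp_apply, norm_inv, add_sub_cancel_right, norm_one, inv_one]
      exact inv_le_one_of_one_le₀ (hge z hz)) hz
  simp only [const_apply, add_sub_cancel_right, inv_one, inv_eq_one] at hmax
  rw [const_apply]
  linear_combination hmax

end MaximumPrinciple

section BoundaryHopf

open scoped ComplexConjugate

theorem norm_add_conj_sq_sub_norm_sub_sq (w a : ℂ) :
    ‖w + conj a‖ ^ 2 - ‖w - a‖ ^ 2 = 4 * w.re * a.re := by
  rw [← normSq_eq_norm_sq, ← normSq_eq_norm_sq, normSq_apply, normSq_apply]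
  simp only [add_re, conj_re, add_im, conj_im, sub_re, sub_im]
  ring

theorem norm_sub_le_norm_add_conj {w a : ℂ} (hw : 0 ≤ w.re) (ha : 0 ≤ a.re) :
    ‖w - a‖ ≤ ‖w + conj a‖ := by
  refine le_of_sq_le_sq ?_ (norm_nonneg _)
  have := norm_add_conj_sq_sub_norm_sub_sq w a
  nlinarith [mul_nonneg hw ha]

variable {h : ℂ → ℂ}

theorem norm_sub_le_norm_mul_norm_add_conj (hh : DifferentiableOn ℂ h (ball 0 1))
    (hre : ∀ z ∈ ball (0 : ℂ) 1, 0 ≤ (h z).re) {z : ℂ} (hz : z ∈ ball (0 : ℂ) 1) :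
    ‖h z - h 0‖ ≤ ‖z‖ * ‖h z + conj (h 0)‖ := by
  have h00 := hre 0 (mem_ball_self zero_lt_one)
  rcases h00.eq_or_lt with h0 | h0
  · rw [eqOn_const_of_re_nonneg (convex_ball (0 : ℂ) 1).isPreconnected isOpen_ball hh hre
      (mem_ball_self zero_lt_one) h0.symm hz, const_apply, sub_self, norm_zero]
    positivity
  have hne : ∀ z ∈ ball (0 : ℂ) 1, h z + conj (h 0) ≠ 0 := by
    intro z hz hcon
    have hcon' := congrArg re hcon
    simp only [add_re, conj_re, zero_re] at hcon'
    linarith [hre z hz]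
  have hschwarz := Complex.norm_le_norm_of_mapsTo_ball
    (f := fun z => (h z - h 0) / (h z + conj (h 0)))
    (DifferentiableOn.div (by fun_prop) (by fun_prop) hne)
    (fun z hz => by
      rw [mem_closedBall_zero_iff, norm_div]
      exact div_le_one_of_le₀ (norm_sub_le_norm_add_conj (hre z hz) h00) (norm_nonneg _))
    (by rw [sub_self, zero_div]) (mem_ball_zero_iff.1 hz)
  rwa [norm_div, div_le_iff₀ (norm_pos_iff.2 (hne z hz))] at hschwarz

theorem one_sub_norm_mul_norm_add_conj_sq_le (hh : DifferentiableOn ℂ h (ball 0 1))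
    (hre : ∀ z ∈ ball (0 : ℂ) 1, 0 ≤ (h z).re) {z : ℂ} (hz : z ∈ ball (0 : ℂ) 1) :
    (1 - ‖z‖) * ‖h z + conj (h 0)‖ ^ 2 ≤ 4 * (h 0).re * ‖h z‖ := by
  have h00 := hre 0 (mem_ball_self zero_lt_one)
  have hz1 := (mem_ball_zero_iff.1 hz).le
  have hsq : ‖h z - h 0‖ ^ 2 ≤ ‖z‖ * ‖h z + conj (h 0)‖ ^ 2 :=
    calc ‖h z - h 0‖ ^ 2 ≤ (‖z‖ * ‖h z + conj (h 0)‖) ^ 2 := by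
          gcongr
          exact norm_sub_le_norm_mul_norm_add_conj hh hre hz
      _ = ‖z‖ ^ 2 * ‖h z + conj (h 0)‖ ^ 2 := mul_pow _ _ _
      _ ≤ ‖z‖ * ‖h z + conj (h 0)‖ ^ 2 := by
          gcongr
          exact pow_le_of_le_one (norm_nonneg z) hz1 two_ne_zero
  calc (1 - ‖z‖) * ‖h z + conj (h 0)‖ ^ 2
      ≤ ‖h z + conj (h 0)‖ ^ 2 - ‖h z - h 0‖ ^ 2 := by linarith
    _ = 4 * (h 0).re * (h z).re := by rw [norm_add_conj_sq_sub_norm_sub_sq]; ring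
    _ ≤ 4 * (h 0).re * ‖h z‖ := by
        gcongr
        exact re_le_norm _

theorem eq_zero_of_re_nonneg_of_isLittleO (hh : DifferentiableOn ℂ h (ball 0 1))
    (hre : ∀ z ∈ ball (0 : ℂ) 1, 0 ≤ (h z).re) {ι : Type*} {l : Filter ι} [NeBot l] {u : ι → ℂ}
    (hu : ∀ᶠ i in l, u i ∈ ball (0 : ℂ) 1)
    (ho : (fun i => h (u i)) =o[l] fun i => (1 - ‖u i‖ : ℝ)) {z : ℂ} (hz : z ∈ ball (0 : ℂ) 1) :
    h z = 0 := by
  have hquot : Tendsto (fun i => ‖h (u i)‖ / (1 - ‖u i‖)) l (𝓝 0) :=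
    ho.norm_left.tendsto_div_nhds_zero
  have hlim : Tendsto (fun i => h (u i)) l (𝓝 0) := by
    refine (Asymptotics.isLittleO_one_iff ℝ).1 (ho.trans_isBigO (.of_bound 1 ?_))
    filter_upwards [hu] with i hi
    have hi1 := mem_ball_zero_iff.1 hi
    rw [norm_one, mul_one, Real.norm_of_nonneg (by linarith)]
    linarith [norm_nonneg (u i)]
  have hle : ‖(0 : ℂ) + conj (h 0)‖ ^ 2 ≤ 4 * (h 0).re * 0 := by
    refine le_of_tendsto_of_tendsto ((hlim.add_const (conj (h 0))).norm.pow 2)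
      (hquot.const_mul (4 * (h 0).re)) ?_
    filter_upwards [hu] with i hi
    have hpos : 0 < 1 - ‖u i‖ := sub_pos.2 (mem_ball_zero_iff.1 hi)
    rw [← mul_div_assoc, le_div_iff₀ hpos, mul_comm]
    exact one_sub_norm_mul_norm_add_conj_sq_le hh hre hi
  have h0 : h 0 = 0 := by
    rw [mul_zero, zero_add, RCLike.norm_conj] at hle
    exact norm_eq_zero.1 (pow_eq_zero_iff two_ne_zero |>.1 (hle.antisymm (sq_nonneg _)))
  rw [eqOn_const_of_re_nonneg (convex_ball (0 : ℂ) 1).isPreconnected isOpen_ball hh hre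
    (mem_ball_self zero_lt_one) (by rw [h0, zero_re]) hz, const_apply, h0]

end BoundaryHopf

section ConjDisc

open MeasureTheory AddCircle

open scoped ComplexConjugate

variable {V : Type*} [NormedAddCommGroup V] [InnerProductSpace ℂ V] [CompleteSpace V] {a : ℕ → V}

theorem innerSL_discMap_conj (ha : Summable fun k => ‖a k‖) {ζ : ℂ} (hζ : ‖ζ‖ ≤ 1) :
    innerSL ℂ (discMap a (conj ζ)) = discMap (fun k => innerSL ℂ (a k)) ζ := by
  have hsum := (innerSL ℂ).hasSum (hasSum_discMap ha (ζ := conj ζ) (by rwa [RCLike.norm_conj]))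
  rw [← hsum.tsum_eq, discMap]
  refine tsum_congr fun k => ?_
  rw [map_smulₛₗ, map_pow, conj_conj]

theorem differentiableOn_inner_discMap_conj (ha : Summable fun k => ‖a k‖) {v : ℂ → V}
    (hv : DifferentiableOn ℂ v (ball 0 1)) :
    DifferentiableOn ℂ (fun ζ => inner ℂ (discMap a (conj ζ)) (v ζ)) (ball 0 1) := by
  have hdual : Summable fun k => ‖innerSL ℂ (a k)‖ := by simpa only [innerSL_apply_norm] using ha
  refine ((differentiableOn_discMap hdual).clm_apply hv).congr fun ζ hζ => ?_
  rw [← innerSL_discMap_conj ha (mem_ball_zero_iff.1 hζ).le, innerSL_apply_apply]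

theorem continuousOn_discMap_conj {V : Type*} [NormedAddCommGroup V] [NormedSpace ℂ V]
    [CompleteSpace V] {a : ℕ → V} (ha : Summable fun k => ‖a k‖) :
    ContinuousOn (fun ζ => discMap a (conj ζ)) (closedBall 0 1) :=
  (continuousOn_discMap ha).comp continuous_conj.continuousOn fun ζ hζ => by
    simpa using hζ

theorem exists_eq_discMap_add_conj_smul_discMap {Y : UnitAddCircle → V} (hY : Continuous Y)
    (hs : Summable fun k => ‖fourierCoeff Y k‖) :
    ∃ a a' : ℕ → V, (Summable fun k => ‖a k‖) ∧ (Summable fun k => ‖a' k‖) ∧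
      ∀ θ : UnitAddCircle, Y θ = discMap a (fourier 1 θ)
        + conj (fourier 1 θ : ℂ) • discMap a' (conj (fourier 1 θ)) := by
  have ha : Summable fun k : ℕ => ‖fourierCoeff Y (k : ℤ)‖ := hs.comp_injective Nat.cast_injective
  have ha' : Summable fun k : ℕ => ‖fourierCoeff Y (-(k + 1) : ℤ)‖ :=
    hs.comp_injective (i := fun k : ℕ => (-(k + 1) : ℤ)) fun i j hij => by simpa using hij
  refine ⟨fun k => fourierCoeff Y k, fun k => fourierCoeff Y (-(k + 1)), ha, ha', fun θ => ?_⟩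
  have hpos := hasSum_discMap ha (norm_fourier_apply 1 θ).le
  have hneg := (hasSum_discMap ha' (ζ := conj (fourier 1 θ))
    (by rw [RCLike.norm_conj, norm_fourier_apply])).const_smul (conj (fourier 1 θ : ℂ))
  refine (hasSum_fourier_smul_fourierCoeff hY hs θ).nat_add_neg_add_one.unique
    ((hpos.add hneg).congr_fun fun k => ?_)
  rw [fourier_neg, fourier_natCast_apply, fourier_add, fourier_natCast_apply, smul_smul, map_mul,
    map_pow, mul_comm (conj _)]

end ConjDisc

/-! ### Stationary discs -/

section StationaryDisc

open scoped ComplexConjugate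

variable {V : Type*} [NormedAddCommGroup V] [InnerProductSpace ℂ V]

/-- Strong convexity of `ρ` on `S` with modulus `κ`, in gradient form: `g` is the gradient of `ρ`,
normalised so that the differential is `2 Re ⟪g x, ·⟫`. -/
def HasStrongSupport (κ : ℝ) (S : Set V) (ρ : V → ℝ) (g : V → V) : Prop :=
  ∀ x ∈ S, ∀ y ∈ S, ρ x + 2 * (inner ℂ (g x) (y - x)).re + κ * ‖y - x‖ ^ 2 ≤ ρ y

variable {κ : ℝ} {S : Set V} {ρ : V → ℝ} {g : V → V}

theorem HasStrongSupport.neg_of_diffContOnCl (hρ : HasStrongSupport κ S ρ g) (hκ : 0 < κ)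
    {E : Type*} [NormedAddCommGroup E] [NormedSpace ℂ E] [Nontrivial E] {U : Set E} (hU : IsOpen U)
    (hUc : IsPreconnected U) (hUb : Bornology.IsBounded U) {φ : E → V} (hφ : DiffContOnCl ℂ φ U)
    (hφS : MapsTo φ (closure U) S) (hfr : ∀ ξ ∈ frontier U, ρ (φ ξ) ≤ 0) {z w : E} (hz : z ∈ U)
    (hw : w ∈ closure U) (hzw : φ w ≠ φ z) : ρ (φ z) < 0 := by
  let k : E → ℂ := fun ζ => -2 * inner ℂ (g (φ z)) (φ ζ - φ z) - (ρ (φ z) : ℂ)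
  have hk : DiffContOnCl ℂ k U :=
    (((innerSL ℂ (g (φ z))).differentiable.comp_diffContOnCl
      (hφ.sub diffContOnCl_const)).const_smul (-2 : ℂ)).sub diffContOnCl_const
  have hkfr : ∀ ξ ∈ frontier U, κ * ‖φ ξ - φ z‖ ^ 2 ≤ (k ξ).re := by
    intro ξ hξ
    have hconv := hρ _ (hφS (subset_closure hz)) _ (hφS (frontier_subset_closure hξ))
    have hkξ : (k ξ).re = -2 * (inner ℂ (g (φ z)) (φ ξ - φ z)).re - ρ (φ z) := by simp [k]
    linarith [hfr ξ hξ]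
  have hkz : k z = -(ρ (φ z) : ℂ) := by simp [k]
  have hnonneg : ∀ ζ ∈ U, 0 ≤ (k ζ).re := fun ζ hζ =>
    re_nonneg_of_eventually_frontier hU hUb hk.differentiableOn (fun ξ hξ ε hε => by
      have hpos : -ε < (k ξ).re :=
        (neg_lt_zero.2 hε).trans_le ((mul_nonneg hκ.le (sq_nonneg _)).trans (hkfr ξ hξ))
      have hlim := ((hk.continuousOn ξ (frontier_subset_closure hξ)).mono subset_closure).tendsto
      exact ((continuous_re.tendsto _).comp hlim).eventually_const_le hpos) hζ
  have hle : ρ (φ z) ≤ 0 := by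
    have := hnonneg z hz
    rw [hkz, neg_re, ofReal_re] at this
    linarith
  refine hle.lt_of_ne fun h0 => hzw ?_
  have hk0 : EqOn k (fun _ => 0) (closure U) := by
    rw [h0, ofReal_zero, neg_zero] at hkz
    refine EqOn.of_subset_closure (fun ζ hζ => ?_) hk.continuousOn continuousOn_const
      subset_closure subset_rfl
    rw [eqOn_const_of_re_nonneg hUc hU hk.differentiableOn hnonneg hz (by rw [hkz, zero_re]) hζ,
      const_apply, hkz]
  refine Complex.eqOn_closure_of_eqOn_frontier hUb hφ (g := fun _ => φ z) diffContOnCl_const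
    (fun ξ hξ => ?_) hw
  have hsq := hkfr ξ hξ
  rw [hk0 (frontier_subset_closure hξ), zero_re] at hsq
  exact sub_eq_zero.1 (norm_eq_zero.1 (pow_eq_zero_iff two_ne_zero |>.1
    ((nonpos_of_mul_nonpos_right hsq hκ).antisymm (sq_nonneg _))))

theorem HasStrongSupport.eventually_le_re_inner (hρ : HasStrongSupport κ S ρ g) {ι : Type*}
    {l : Filter ι} {x y G : ι → V} {D μ ε : ℝ} (hμ : 0 ≤ μ) (hε : 0 < ε) (hx : ∀ᶠ i in l, x i ∈ S)
    (hy : ∀ᶠ i in l, y i ∈ S ∧ ρ (y i) ≤ 0) (hD : ∀ᶠ i in l, ‖y i - x i‖ ≤ D)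
    (hρx : Tendsto (fun i => ρ (x i)) l (𝓝 0))
    (hG : Tendsto (fun i => G i + (μ : ℂ) • g (x i)) l (𝓝 0)) :
    ∀ᶠ i in l, μ / 2 * κ * ‖y i - x i‖ ^ 2 - ε ≤ (inner ℂ (G i) (y i - x i)).re := by
  have hsmall : Tendsto (fun i => ‖G i + (μ : ℂ) • g (x i)‖ * D - μ / 2 * ρ (x i)) l (𝓝 0) := by
    simpa using (hG.norm.mul_const D).sub (hρx.const_mul (μ / 2))
  filter_upwards [hx, hy, hD, hsmall.eventually_le_const hε] with i hxi hyi hDi hi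
  have hconv := mul_le_mul_of_nonneg_left ((hρ _ hxi _ hyi.1).trans hyi.2) hμ
  have hsplit : (inner ℂ (G i) (y i - x i)).re
      = (inner ℂ (G i + (μ : ℂ) • g (x i)) (y i - x i)).re
        - μ * (inner ℂ (g (x i)) (y i - x i)).re := by
    rw [inner_add_left, inner_smul_left, conj_ofReal, add_re, re_ofReal_mul, add_sub_cancel_right]
  have herr : |(inner ℂ (G i + (μ : ℂ) • g (x i)) (y i - x i)).re|
      ≤ ‖G i + (μ : ℂ) • g (x i)‖ * D :=
    (abs_re_le_norm _).trans ((norm_inner_le_norm _ _).trans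
      (mul_le_mul_of_nonneg_left hDi (norm_nonneg _)))
  rw [hsplit]
  linarith [(abs_le.1 herr).1]

/-- A disc `φ` attached to `{ρ = 0}` that is stationary in the sense of Lempert: the conormal field
along `φ` has a conjugate-holomorphic multiple. The multiple is written `Γ ζ / conj (1 - ζ) ^ 2`,
so a double pole at the boundary point `1` is allowed. -/
structure StationaryDisc (ρ : V → ℝ) (g : V → V) (φ Γ : ℂ → V) : Prop where
  diffContOnCl : DiffContOnCl ℂ φ (ball 0 1)
  eq_zero : ∀ ξ ∈ sphere (0 : ℂ) 1, ρ (φ ξ) = 0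
  continuousOn_lift : ContinuousOn Γ (closedBall 0 1)
  differentiableOn_inner : ∀ v : ℂ → V, DifferentiableOn ℂ v (ball 0 1) →
    DifferentiableOn ℂ (fun ζ => inner ℂ (Γ ζ) (v ζ)) (ball 0 1)
  exists_smul_eq : ∀ ξ ∈ sphere (0 : ℂ) 1, ξ ≠ 1 →
    ∃ μ : ℝ, 0 < μ ∧ (conj (1 - ξ) ^ 2)⁻¹ • Γ ξ = (μ : ℂ) • g (φ ξ)

/-- The holomorphic function to which Burns and Krantz apply the boundary Hopf lemma: the pairing
of a displacement `v` with the outward conormal lift of a stationary disc. -/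
def conormalPairing (Γ v : ℂ → V) (ζ : ℂ) : ℂ := -(((1 - ζ) ^ 2)⁻¹ * inner ℂ (Γ ζ) (v ζ))

theorem conormalPairing_eq_inner (Γ v : ℂ → V) (ζ : ℂ) :
    conormalPairing Γ v ζ = inner ℂ (-((conj (1 - ζ) ^ 2)⁻¹ • Γ ζ)) (v ζ) := by
  simp only [conormalPairing, inner_neg_left, inner_smul_left, map_inv₀, map_pow, conj_conj]

variable {φ Γ v : ℂ → V}

theorem StationaryDisc.differentiableOn_conormalPairing (hd : StationaryDisc ρ g φ Γ)
    (hv : DifferentiableOn ℂ v (ball 0 1)) :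
    DifferentiableOn ℂ (conormalPairing Γ v) (ball 0 1) := by
  have hne : ∀ z ∈ ball (0 : ℂ) 1, (1 - z) ^ 2 ≠ 0 := fun z hz =>
    pow_ne_zero 2 (sub_ne_zero.2 (by rintro rfl; simp at hz))
  exact ((DifferentiableOn.inv (by fun_prop) hne).mul (hd.differentiableOn_inner v hv)).neg

theorem StationaryDisc.conormalPairing_isLittleO (hd : StationaryDisc ρ g φ Γ)
    (hv : v =o[𝓝[ball 0 1] 1] fun z : ℂ => (1 - z) ^ 3) :
    conormalPairing Γ v =o[𝓝[ball 0 1] 1] fun z : ℂ => 1 - z := by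
  have hΓ : Γ =O[𝓝[ball 0 1] 1] fun _ => (1 : ℝ) :=
    ((hd.continuousOn_lift 1 (by simp)).mono ball_subset_closedBall).isBigO_one ℝ
  have hinner : (fun z => inner ℂ (Γ z) (v z)) =o[𝓝[ball 0 1] 1] fun z : ℂ => (1 - z) ^ 3 := by
    refine (Asymptotics.IsBigO.of_bound 1 (.of_forall fun z => ?_)).trans_isLittleO
      ((hΓ.norm_left.mul_isLittleO hv.norm_norm).trans_isBigO
        (.of_bound 1 (.of_forall fun z => ?_)))
    · simpa using norm_inner_le_norm (Γ z) (v z)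
    · simp
  refine (((Asymptotics.isBigO_refl (fun z : ℂ => ((1 - z) ^ 2)⁻¹) _).mul_isLittleO
    hinner).neg_left).congr_right fun z => ?_
  rcases eq_or_ne (1 - z) 0 with h0 | h0
  · simp [h0]
  · field_simp

theorem StationaryDisc.eventually_le_re_conormalPairing (hd : StationaryDisc ρ g φ Γ)
    (hρ : HasStrongSupport κ S ρ g) (hS : Bornology.IsBounded S) (hρc : ContinuousOn ρ S)
    (hgc : ContinuousOn g S) (hφS : MapsTo φ (closedBall 0 1) S) {ψ : ℂ → V}
    (hψ : ∀ z ∈ ball (0 : ℂ) 1, ψ z ∈ S ∧ ρ (ψ z) ≤ 0) {ξ : ℂ} (hξ : ξ ∈ sphere (0 : ℂ) 1)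
    (hξ1 : ξ ≠ 1) : ∃ μ > 0, ∀ ε > 0, ∀ᶠ z in 𝓝[ball 0 1] ξ,
      μ * κ * ‖ψ z - φ z‖ ^ 2 - ε ≤ (conormalPairing Γ (fun z => ψ z - φ z) z).re := by
  have hξc : ξ ∈ closedBall (0 : ℂ) 1 := sphere_subset_closedBall hξ
  obtain ⟨μ, hμ, hμΓ⟩ := hd.exists_smul_eq ξ hξ hξ1
  obtain ⟨D, hD⟩ := hS.exists_norm_le
  refine ⟨μ / 2, half_pos hμ, fun ε hε => ?_⟩
  have hball : ∀ᶠ z in 𝓝[ball 0 1] ξ, z ∈ ball (0 : ℂ) 1 := self_mem_nhdsWithin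
  have hφlim : Tendsto φ (𝓝[ball 0 1] ξ) (𝓝[S] (φ ξ)) :=
    tendsto_nhdsWithin_iff.2 ⟨((hd.diffContOnCl.continuousOn_ball ξ hξc).mono
      ball_subset_closedBall).tendsto, hball.mono fun z hz => hφS (ball_subset_closedBall hz)⟩
  have hρlim := (hρc _ (hφS hξc)).tendsto.comp hφlim
  rw [hd.eq_zero ξ hξ] at hρlim
  have hpole : Tendsto (fun z : ℂ => (conj (1 - z) ^ 2)⁻¹) (𝓝[ball 0 1] ξ)
      (𝓝 (conj (1 - ξ) ^ 2)⁻¹) :=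
    Tendsto.inv₀ ((by fun_prop : Continuous fun z : ℂ => conj (1 - z) ^ 2).continuousWithinAt)
      (pow_ne_zero 2 ((map_ne_zero _).2 (sub_ne_zero.2 hξ1.symm)))
  have hlift : Tendsto (fun z => -((conj (1 - z) ^ 2)⁻¹ • Γ z) + (μ : ℂ) • g (φ z))
      (𝓝[ball 0 1] ξ) (𝓝 0) := by
    have hΓ := ((hd.continuousOn_lift ξ hξc).mono ball_subset_closedBall).tendsto
    have hg := (hgc _ (hφS hξc)).tendsto.comp hφlim
    simpa only [hμΓ, neg_add_cancel, comp_apply] using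
      (hpole.smul hΓ).neg.add (hg.const_smul (μ : ℂ))
  simp only [conormalPairing_eq_inner]
  refine hρ.eventually_le_re_inner hμ.le hε (hball.mono fun z hz => hφS (ball_subset_closedBall hz))
    (hball.mono hψ) (D := D + D) (hball.mono fun z hz => ?_) hρlim hlift
  exact (norm_sub_le _ _).trans
    (add_le_add (hD _ (hψ z hz).1) (hD _ (hφS (ball_subset_closedBall hz))))

theorem StationaryDisc.conormalPairing_eq_zero (hd : StationaryDisc ρ g φ Γ)
    (hv : DifferentiableOn ℂ v (ball 0 1)) (hvo : v =o[𝓝[ball 0 1] 1] fun z : ℂ => (1 - z) ^ 3)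
    (hfr : ∀ ξ ∈ sphere (0 : ℂ) 1, ξ ≠ 1 → ∀ ε > 0, ∀ᶠ z in 𝓝[ball 0 1] ξ,
      -ε ≤ (conormalPairing Γ v z).re) {z : ℂ} (hz : z ∈ ball (0 : ℂ) 1) :
    conormalPairing Γ v z = 0 := by
  have hk := hd.differentiableOn_conormalPairing hv
  have hko := hd.conormalPairing_isLittleO hvo
  have hsub : Tendsto (fun z : ℂ => 1 - z) (𝓝[ball 0 1] 1) (𝓝 0) := by
    simpa using ((by fun_prop : Continuous fun z : ℂ => 1 - z).continuousWithinAt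
      (s := ball 0 1) (x := 1)).tendsto
  have hnonneg : ∀ z ∈ ball (0 : ℂ) 1, 0 ≤ (conormalPairing Γ v z).re := fun z hz =>
    re_nonneg_of_eventually_frontier isOpen_ball isBounded_ball hk (fun ξ hξ ε hε => by
      rw [frontier_ball _ one_ne_zero] at hξ
      rcases eq_or_ne ξ 1 with rfl | hξ1
      · exact ((continuous_re.tendsto _).comp (hko.trans_tendsto hsub)).eventually_const_le
          (by simpa using hε)
      · exact hfr ξ hξ hξ1 ε hε) hz
  have hmem : ∀ᶠ s : ℝ in 𝓝[<] 1, s ∈ Ioo (0 : ℝ) 1 := Ioo_mem_nhdsLT one_pos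
  have hball : ∀ᶠ s : ℝ in 𝓝[<] 1, (s : ℂ) ∈ ball (0 : ℂ) 1 := by
    filter_upwards [hmem] with s hs
    rw [mem_ball_zero_iff, norm_real, Real.norm_of_nonneg hs.1.le]
    exact hs.2
  have hradial : Tendsto (fun s : ℝ => (s : ℂ)) (𝓝[<] 1) (𝓝[ball 0 1] 1) :=
    tendsto_nhdsWithin_iff.2 ⟨(continuous_ofReal.tendsto' 1 1 ofReal_one).mono_left
      nhdsWithin_le_nhds, hball⟩
  refine eq_zero_of_re_nonneg_of_isLittleO hk hnonneg hball
    ((hko.comp_tendsto hradial).trans_isBigO (.of_bound 1 ?_)) hz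
  filter_upwards [hmem] with s hs
  rw [comp_apply, ← ofReal_one, ← ofReal_sub, norm_real, norm_real, Real.norm_of_nonneg hs.1.le,
    one_mul]

theorem StationaryDisc.eqOn_of_isLittleO (hd : StationaryDisc ρ g φ Γ)
    (hρ : HasStrongSupport κ S ρ g) (hκ : 0 < κ) (hS : Bornology.IsBounded S)
    (hρc : ContinuousOn ρ S) (hgc : ContinuousOn g S) (hφS : MapsTo φ (closedBall 0 1) S)
    {ψ : ℂ → V} (hψd : DifferentiableOn ℂ ψ (ball 0 1))
    (hψ : ∀ z ∈ ball (0 : ℂ) 1, ψ z ∈ S ∧ ρ (ψ z) ≤ 0)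
    (ho : (fun z => ψ z - φ z) =o[𝓝[ball 0 1] 1] fun z : ℂ => (1 - z) ^ 3) :
    EqOn ψ φ (ball 0 1) := by
  have hvd : DifferentiableOn ℂ (fun z => ψ z - φ z) (ball 0 1) :=
    hψd.sub hd.diffContOnCl.differentiableOn
  have hreg := fun ξ hξ hξ1 =>
    hd.eventually_le_re_conormalPairing hρ hS hρc hgc hφS hψ (ξ := ξ) hξ hξ1
  have hk0 : ∀ z ∈ ball (0 : ℂ) 1, conormalPairing Γ (fun z => ψ z - φ z) z = 0 := fun z hz =>
    hd.conormalPairing_eq_zero hvd ho (fun ξ hξ hξ1 ε hε => by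
      obtain ⟨μ, hμ, hev⟩ := hreg ξ hξ hξ1
      filter_upwards [hev ε hε] with w hw
      have : 0 ≤ μ * κ * ‖ψ w - φ w‖ ^ 2 := by positivity
      linarith) hz
  refine fun z hz => sub_eq_zero.1 (eq_zero_of_tendsto_zero_frontier isOpen_ball isBounded_ball hvd
    (fun ξ hξ => ?_) hz)
  rw [frontier_ball _ one_ne_zero] at hξ
  rcases eq_or_ne ξ 1 with rfl | hξ1
  · refine ho.trans_tendsto ?_
    simpa using ((by fun_prop : Continuous fun z : ℂ => (1 - z) ^ 3).continuousWithinAt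
      (s := ball 0 1) (x := 1)).tendsto
  · obtain ⟨μ, hμ, hev⟩ := hreg ξ hξ hξ1
    refine Metric.tendsto_nhds.2 fun ε hε => ?_
    filter_upwards [self_mem_nhdsWithin, hev (μ * κ * (ε / 2) ^ 2) (by positivity)] with w hw hwε
    rw [hk0 w hw, zero_re] at hwε
    rw [dist_zero_right]
    refine (le_of_sq_le_sq ?_ (half_pos hε).le).trans_lt (half_lt_self hε)
    exact le_of_mul_le_mul_left (by linarith) (mul_pos hμ hκ)

end StationaryDisc

/-! ### Stationary discs of model hypersurfaces -/

section Perp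

variable {V : Type*} [NormedAddCommGroup V] [InnerProductSpace ℂ V]

/-- The orthogonal projection onto the complement of the line spanned by `e`; for `e` normal to a
real hypersurface this is the projection onto its complex tangent space. -/
abbrev perp (e : V) : V →L[ℂ] V := (ℂ ∙ e)ᗮ.starProjection

theorem perp_apply {e : V} (he : ‖e‖ = 1) (x : V) : perp e x = x - inner ℂ e x • e := by
  rw [perp, Submodule.starProjection_orthogonal_val, Submodule.starProjection_unit_singleton ℂ he]

theorem perp_perp (e x : V) : perp e (perp e x) = perp e x :=
  Submodule.starProjection_eq_self_iff.2 (Submodule.starProjection_apply_mem _ x)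

theorem perp_self (e : V) : perp e e = 0 :=
  Submodule.starProjection_orthogonalComplement_singleton_eq_zero e

theorem inner_perp (e x : V) : inner ℂ e (perp e x) = 0 := by
  rw [← Submodule.inner_starProjection_left_eq_right, perp_self, inner_zero_left]

theorem perp_eq_self_iff {e x : V} : perp e x = x ↔ inner ℂ e x = 0 := by
  rw [Submodule.starProjection_eq_self_iff, Submodule.mem_orthogonal_singleton_iff_inner_right]

end Perp

section Model

variable {V : Type*} [NormedAddCommGroup V] [InnerProductSpace ℂ V]

/-- Minus the `e`-component of `modelGrad e η x`. -/
def modelU (e : V) (η : V → V) (x : V) : ℂ := 1 - inner ℂ e x - inner ℂ e (η x)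

/-- The nonlinearity `M` of the boundary value problem for stationary discs of the model
hypersurface: `x + M x` is conjugate-holomorphic along the boundary of such a disc. -/
def modelMap (e : V) (E : V → ℝ) (η : V → V) (x : V) : V :=
  (modelU e η x)⁻¹ • perp e (x + η x) - perp e x - ((‖x‖ ^ 2 + E x : ℝ) : ℂ) • e

/-- The part of `log (modelU e η x)` of order two at the origin, as a multiple of `e`. -/
def modelLog (e : V) (η : V → V) (x : V) : V := (log (modelU e η x) + inner ℂ e x) • e

/-- The defining function of the model domain: a ball through the origin with inward normal `e`,
perturbed by an error term `E`. -/
def modelRho (e : V) (E : V → ℝ) (x : V) : ℝ := ‖x‖ ^ 2 - 2 * (inner ℂ e x).re + E x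

/-- The gradient of `modelRho e E`, up to a factor `2`, when `2 η` is the gradient of `E`. -/
def modelGrad (e : V) (η : V → V) (x : V) : V := x - e + η x

theorem modelGrad_eq {e : V} (he : ‖e‖ = 1) (η : V → V) (x : V) :
    modelGrad e η x = perp e (x + η x) - modelU e η x • e := by
  rw [perp_apply he, modelU, modelGrad, inner_add_right, sub_smul, sub_smul, add_smul, one_smul]
  abel

/-- The estimates on a model hypersurface, with error term `E` of gradient `2 η`, that are needed to
attach stationary discs to it in the ball of radius `r`. -/
structure ModelData (e : V) (E : V → ℝ) (η : V → V) (C r : ℝ) : Prop where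
  r_pos : 0 < r
  norm_e : ‖e‖ = 1
  abs_E_le : ∀ x, ‖x‖ ≤ r → |E x| ≤ C * ‖x‖ ^ 3
  taylor : ∀ x y, ‖x‖ ≤ r → ‖y‖ ≤ r →
    |E y - E x - 2 * (inner ℂ (η x) (y - x)).re| ≤ 1 / 2 * ‖y - x‖ ^ 2
  continuousOn : ContinuousOn η (closedBall 0 r)
  modelU_ne : ∀ x, ‖x‖ ≤ r → modelU e η x ≠ 0
  quadLip_map : QuadLip C r (modelMap e E η)
  quadLip_log : QuadLip C r (modelLog e η)

variable {e : V} {E : V → ℝ} {η : V → V} {C r : ℝ}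

theorem ModelData.inner_modelMap (h : ModelData e E η C r) (x : V) :
    inner ℂ e (modelMap e E η x) = -((‖x‖ ^ 2 + E x : ℝ) : ℂ) := by
  rw [modelMap, inner_sub_right, inner_sub_right, inner_smul_right, inner_smul_right, inner_perp,
    inner_perp, inner_self_eq_one_of_norm_eq_one h.norm_e, mul_zero, mul_one, sub_zero, zero_sub]

theorem perp_add_modelMap (x : V) :
    perp e (x + modelMap e E η x) = (modelU e η x)⁻¹ • perp e (x + η x) := by
  simp only [modelMap, map_add, map_sub, map_smul, perp_perp, perp_self, smul_zero, sub_zero]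
  abel

theorem ModelData.hasStrongSupport (h : ModelData e E η C r) :
    HasStrongSupport (1 / 2) (closedBall 0 r) (modelRho e E) (modelGrad e η) := by
  intro x hx y hy
  have htaylor := (abs_le.1 (h.taylor x y (mem_closedBall_zero_iff.1 hx)
    (mem_closedBall_zero_iff.1 hy))).1
  have hsq : ‖y‖ ^ 2 = ‖x‖ ^ 2 + 2 * (inner ℂ x (y - x)).re + ‖y - x‖ ^ 2 := by
    have := norm_add_sq (𝕜 := ℂ) x (y - x)
    rwa [add_sub_cancel] at this
  have hinner : (inner ℂ e (y - x)).re = (inner ℂ e y).re - (inner ℂ e x).re := by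
    rw [inner_sub_right, sub_re]
  rw [modelRho, modelRho, modelGrad, inner_add_left, inner_sub_left, hsq, add_re, sub_re, hinner]
  linarith

theorem ModelData.continuousOn_modelGrad (h : ModelData e E η C r) :
    ContinuousOn (modelGrad e η) (closedBall 0 r) :=
  (continuousOn_id.sub continuousOn_const).add h.continuousOn

theorem ModelData.continuousOn_modelRho (h : ModelData e E η C r) :
    ContinuousOn (modelRho e E) (closedBall 0 r) := by
  have hE : ContinuousOn E (closedBall 0 r) := by
    intro x hx
    have hlim : Tendsto (fun y => 1 / 2 * ‖y - x‖ ^ 2) (𝓝[closedBall 0 r] x) (𝓝 0) := by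
      simpa using ((by fun_prop : Continuous fun y => 1 / 2 * ‖y - x‖ ^ 2).continuousWithinAt
        (s := closedBall 0 r) (x := x)).tendsto
    have herr : Tendsto (fun y => E y - E x - 2 * (inner ℂ (η x) (y - x)).re)
        (𝓝[closedBall 0 r] x) (𝓝 0) :=
      squeeze_zero_norm' (eventually_mem_nhdsWithin.mono fun y hy =>
        h.taylor x y (mem_closedBall_zero_iff.1 hx) (mem_closedBall_zero_iff.1 hy)) hlim
    have hlin : Tendsto (fun y => E x + 2 * (inner ℂ (η x) (y - x)).re) (𝓝[closedBall 0 r] x)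
        (𝓝 (E x)) := by
      simpa using ((by fun_prop : Continuous fun y =>
        E x + 2 * (inner ℂ (η x) (y - x)).re).continuousWithinAt
        (s := closedBall 0 r) (x := x)).tendsto
    simpa [ContinuousWithinAt] using herr.add hlin
  exact ((by fun_prop : Continuous fun x : V => ‖x‖ ^ 2 - 2 * (inner ℂ e x).re).continuousOn).add hE

end Model

section ModelDisc

open scoped ComplexConjugate

variable {V : Type*} [NormedAddCommGroup V]

section Bounds

variable [NormedSpace ℂ V] {c : ℕ → V} {B : ℝ}

theorem SobolevBound.norm_one_sub_smul_discMap_le (hc : SobolevBound B c) {ζ : ℂ} (hζ : ‖ζ‖ ≤ 1) :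
    ‖(1 - ζ) • discMap c ζ‖ ≤ sobolevConst * B * ‖1 - ζ‖ := by
  rw [norm_smul, mul_comm]
  exact mul_le_mul_of_nonneg_right (hc.norm_discMap_le hζ) (norm_nonneg _)

theorem SobolevBound.norm_one_sub_smul_discMap_le_two_mul (hc : SobolevBound B c) {ζ : ℂ}
    (hζ : ‖ζ‖ ≤ 1) : ‖(1 - ζ) • discMap c ζ‖ ≤ 2 * (sobolevConst * B) := by
  refine (hc.norm_one_sub_smul_discMap_le hζ).trans ?_
  rw [mul_comm]
  refine mul_le_mul_of_nonneg_right ((norm_sub_le _ _).trans ?_)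
    ((norm_nonneg _).trans (hc.norm_discMap_le hζ))
  rw [norm_one]
  linarith

theorem SobolevBound.diffContOnCl_one_sub_smul_discMap [CompleteSpace V] (hc : SobolevBound B c) :
    DiffContOnCl ℂ (fun ζ : ℂ => (1 - ζ) • discMap c ζ) (ball 0 1) := by
  have hs := hc.summable_norm
  refine ⟨DifferentiableOn.smul (by fun_prop) (differentiableOn_discMap hs), ?_⟩
  rw [closure_ball _ one_ne_zero]
  exact ContinuousOn.smul (by fun_prop) (continuousOn_discMap hs)

end Bounds

theorem exists_exp_eq_ofReal_mul_conj {u w : ℂ} (hu : u ≠ 0) (h : (w + log u).im = 0) :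
    ∃ κ : ℝ, 0 < κ ∧ exp w = κ * conj u := by
  have hreal : w + log u = ((w + log u).re : ℂ) := Complex.ext rfl (by rw [h, ofReal_im])
  refine ⟨Real.exp (w + log u).re / normSq u, div_pos (Real.exp_pos _) (normSq_pos.2 hu), ?_⟩
  have hexp : exp w * u = exp (w + log u) := by rw [exp_add, exp_log hu]
  have hu' : conj u ≠ 0 := (map_ne_zero _).2 hu
  have hconj : (normSq u : ℂ) = u * conj u := (mul_conj u).symm
  rw [eq_div_of_mul_eq hu hexp, hreal, ofReal_div, ofReal_exp, hconj, ofReal_re]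
  field_simp

variable [InnerProductSpace ℂ V] {e : V} {η : V → V} {H : ℂ → ℂ} {a : ℕ → V}

/-- The lift of the conormal field along the disc `ζ ↦ (1 - ζ) • discMap c ζ`, in terms of a
function `H` as in `ModelData.exists_exp_eq_conj_modelU` and the conjugate-holomorphic boundary
values `q + discMap a (conj ζ)` of `QuadLip.exists_discMap_add_boundaryTerm_eq`. -/
def modelLift (e : V) (H : ℂ → ℂ) (q : V) (a : ℕ → V) (ζ : ℂ) : V :=
  conj (exp (H ζ)) • (conj (1 - ζ) • perp e (q + discMap a (conj ζ)) + conj ζ • e)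

theorem inv_conj_one_sub_sq_smul_modelLift (he : ‖e‖ = 1) {x q : V} {κ : ℝ} {ξ : ℂ} (hξ : ‖ξ‖ = 1)
    (hξ1 : ξ ≠ 1) (hu : modelU e η x ≠ 0) (hH : exp (H ξ) = κ * conj (modelU e η x))
    (hq : (1 - ξ) • perp e (q + discMap a (conj ξ)) = (modelU e η x)⁻¹ • perp e (x + η x)) :
    (conj (1 - ξ) ^ 2)⁻¹ • modelLift e H q a ξ
      = ((κ / ‖1 - ξ‖ ^ 2 : ℝ) : ℂ) • modelGrad e η x := by
  have hs : 1 - ξ ≠ 0 := sub_ne_zero.2 hξ1.symm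
  have hξ0 : conj ξ ≠ 0 := (map_ne_zero _).2 (norm_ne_zero_iff.1 (hξ ▸ one_ne_zero))
  have hnorm : ((‖1 - ξ‖ : ℝ) : ℂ) ^ 2 = -(conj ξ * (1 - ξ) ^ 2) := by
    rw [← conj_mul', conj_one_sub_of_norm_eq_one hξ]
    ring
  rw [modelGrad_eq he, ← (eq_inv_smul_iff₀ hu).1 hq, modelLift, hH, map_mul, conj_conj, conj_ofReal,
    ofReal_div, ofReal_pow, hnorm, conj_one_sub_of_norm_eq_one hξ]
  match_scalars <;> field_simp

variable [CompleteSpace V] {E : V → ℝ} {C r B : ℝ} {c : ℕ → V}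

theorem ModelData.exists_log_modelU_eq (h : ModelData e E η C r) (hr : 2 * (sobolevConst * B) ≤ r)
    (hc : SobolevBound B c) : ∃ a a' : ℕ → V, (Summable fun k => ‖a k‖) ∧
      (Summable fun k => ‖a' k‖) ∧ ∀ ξ : ℂ, ‖ξ‖ = 1 → ξ ≠ 1 →
        log (modelU e η ((1 - ξ) • discMap c ξ))
          = (1 - ξ) * (inner ℂ e (discMap a ξ) - inner ℂ e (discMap c ξ))
            - conj ((1 - ξ) * inner ℂ (discMap a' (conj ξ)) e) := by
  obtain ⟨a, a', ha, ha', hsplit⟩ := exists_eq_discMap_add_conj_smul_discMap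
    (h.quadLip_log.continuous_boundaryTerm hr hc)
    (h.quadLip_log.summable_norm_fourierCoeff_boundaryTerm hr hc)
  refine ⟨a, a', ha, ha', fun ξ hξ hξ1 => ?_⟩
  obtain ⟨θ, hθ⟩ := exists_fourier_one_eq 1 hξ
  have hinner := congrArg (inner ℂ e) (hsplit θ)
  rw [boundaryTerm, hθ, modelLog, smul_smul, inner_smul_right,
    inner_self_eq_one_of_norm_eq_one h.norm_e, mul_one, inner_add_right, inner_smul_right,
    inner_smul_right, inv_mul_eq_iff_eq_mul₀ (sub_ne_zero.2 hξ1.symm)] at hinner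
  rw [map_mul, inner_conj_symm, conj_one_sub_of_norm_eq_one hξ]
  linear_combination hinner

theorem ModelData.exists_exp_eq_conj_modelU (h : ModelData e E η C r)
    (hr : 2 * (sobolevConst * B) ≤ r) (hc : SobolevBound B c) :
    ∃ H : ℂ → ℂ, ContinuousOn H (closedBall 0 1) ∧ DifferentiableOn ℂ H (ball 0 1) ∧
      ∀ ξ : ℂ, ‖ξ‖ = 1 → ξ ≠ 1 →
        ∃ κ : ℝ, 0 < κ ∧ exp (H ξ) = κ * conj (modelU e η ((1 - ξ) • discMap c ξ)) := by
  obtain ⟨a, a', ha, ha', hlog⟩ := h.exists_log_modelU_eq hr hc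
  have hs := hc.summable_norm
  refine ⟨fun ζ => (1 - ζ) * (inner ℂ e (discMap c ζ) - inner ℂ e (discMap a ζ)
    - inner ℂ (discMap a' (conj ζ)) e), ?_, ?_, fun ξ hξ hξ1 => ?_⟩
  · exact (continuousOn_const.sub continuousOn_id).mul
      (((continuousOn_const.inner (𝕜 := ℂ) (continuousOn_discMap hs)).sub
        (continuousOn_const.inner (𝕜 := ℂ) (continuousOn_discMap ha))).sub
        ((continuousOn_discMap_conj ha').inner (𝕜 := ℂ) continuousOn_const))
  · exact ((differentiableOn_const 1).sub differentiableOn_id).mul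
      ((((innerSL ℂ e).differentiable.comp_differentiableOn (differentiableOn_discMap hs)).sub
        ((innerSL ℂ e).differentiable.comp_differentiableOn (differentiableOn_discMap ha))).sub
        (differentiableOn_inner_discMap_conj ha' (differentiableOn_const e)))
  · refine exists_exp_eq_ofReal_mul_conj (h.modelU_ne _
      ((hc.norm_one_sub_smul_discMap_le_two_mul hξ.le).trans hr)) ?_
    rw [hlog ξ hξ hξ1]
    simp only [add_im, sub_im, conj_im, mul_sub]
    ring

theorem continuousOn_modelLift (e q : V) (hH : ContinuousOn H (closedBall 0 1))
    (ha : Summable fun k => ‖a k‖) : ContinuousOn (modelLift e H q a) (closedBall 0 1) := by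
  have hconj : ContinuousOn (fun ζ : ℂ => conj ζ) (closedBall 0 1) :=
    continuous_conj.continuousOn
  refine (continuous_conj.comp_continuousOn hH.cexp).smul
    (((continuous_conj.comp_continuousOn (continuousOn_const.sub continuousOn_id)).smul
      ((perp e).continuous.comp_continuousOn
        (continuousOn_const.add (continuousOn_discMap_conj ha)))).add
    (hconj.smul continuousOn_const))

theorem differentiableOn_inner_modelLift (e q : V) (hH : DifferentiableOn ℂ H (ball 0 1))
    (ha : Summable fun k => ‖a k‖) {v : ℂ → V} (hv : DifferentiableOn ℂ v (ball 0 1)) :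
    DifferentiableOn ℂ (fun ζ => inner ℂ (modelLift e H q a ζ) (v ζ)) (ball 0 1) := by
  have hPv : DifferentiableOn ℂ (fun ζ => perp e (v ζ)) (ball 0 1) :=
    (perp e).differentiable.comp_differentiableOn hv
  have hinner : ∀ ζ, inner ℂ (modelLift e H q a ζ) (v ζ) = exp (H ζ) *
      ((1 - ζ) * (inner ℂ q (perp e (v ζ)) + inner ℂ (discMap a (conj ζ)) (perp e (v ζ)))
        + ζ * inner ℂ e (v ζ)) := fun ζ => by
    simp only [modelLift, inner_smul_left, inner_add_left, conj_conj,
      Submodule.inner_starProjection_left_eq_right]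
  simp only [hinner]
  exact hH.cexp.mul ((((differentiableOn_const 1).sub differentiableOn_id).mul
    (((innerSL ℂ q).differentiable.comp_differentiableOn hPv).add
      (differentiableOn_inner_discMap_conj ha hPv))).add
    (differentiableOn_id.mul ((innerSL ℂ e).differentiable.comp_differentiableOn hv)))

theorem ModelData.exists_stationaryDisc (h : ModelData e E η C r)
    (hr : 2 * (sobolevConst * B) ≤ r) (hc : SobolevBound B c) {b : V} (hb : inner ℂ e b = 0)
    {t : ℂ} (hfix : nextCoeff (modelMap e E η) (perp e) b t c = c) :
    ∃ Γ, StationaryDisc (modelRho e E) (modelGrad e η) (fun ζ => (1 - ζ) • discMap c ζ) Γ := by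
  obtain ⟨H, hHc, hHd, hH⟩ := h.exists_exp_eq_conj_modelU hr hc
  obtain ⟨q, a, ha, hq⟩ := h.quadLip_map.exists_discMap_add_boundaryTerm_eq hr hc hfix
  refine ⟨modelLift e H q a, hc.diffContOnCl_one_sub_smul_discMap, fun ξ hξ => ?_,
    continuousOn_modelLift e q hHc ha, fun v hv => differentiableOn_inner_modelLift e q hHd ha hv,
    fun ξ hξ hξ1 => ?_⟩
  all_goals
    rw [mem_sphere_zero_iff_norm] at hξ
    obtain ⟨θ, hθ⟩ := exists_fourier_one_eq 1 hξ
  · have hre := h.quadLip_map.eq_two_mul_re_inner_of_nextCoeff_eq_self hr hc hfix hb (inner_perp e)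
      h.inner_modelMap θ
    rw [hθ] at hre
    rw [modelRho]
    linarith
  · have hs : 1 - ξ ≠ 0 := sub_ne_zero.2 hξ1.symm
    obtain ⟨κ, hκ, hexp⟩ := hH ξ hξ hξ1
    have hqθ := hq θ
    rw [boundaryTerm, hθ] at hqθ
    refine ⟨κ / ‖1 - ξ‖ ^ 2, by positivity, inv_conj_one_sub_sq_smul_modelLift h.norm_e hξ hξ1
      (h.modelU_ne _ ((hc.norm_one_sub_smul_discMap_le_two_mul hξ.le).trans hr)) hexp ?_⟩
    rw [← hqθ, ← map_smul, smul_add, smul_inv_smul₀ hs, perp_add_modelMap]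

theorem ModelData.modelRho_neg (h : ModelData e E η C r) (hr : 2 * (sobolevConst * B) ≤ r)
    (hc : SobolevBound B c) {b : V} (hb : inner ℂ e b = 0) (hb0 : b ≠ 0) {t : ℂ} (ht : ‖t‖ < 1)
    (hfix : nextCoeff (modelMap e E η) (perp e) b t c = c) {ζ : ℂ} (hζ : ζ ∈ ball (0 : ℂ) 1) :
    modelRho e E ((1 - ζ) • discMap c ζ) < 0 := by
  obtain ⟨Γ, hΓ⟩ := h.exists_stationaryDisc hr hc hb hfix
  have hcl : closure (ball (0 : ℂ) 1) = closedBall 0 1 := closure_ball _ one_ne_zero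
  have hφt : (1 - t) • discMap c t ≠ 0 := by
    refine smul_ne_zero (sub_ne_zero.2 (by rintro rfl; simp at ht)) fun h0 => hb0 ?_
    rw [← h.quadLip_map.map_discMap_of_nextCoeff_eq_self hr hc hfix (perp_perp e)
      (perp_eq_self_iff.2 hb) ht.le, h0, map_zero]
  obtain ⟨w, hw, hwζ⟩ : ∃ w ∈ closedBall (0 : ℂ) 1,
      (1 - w) • discMap c w ≠ (1 - ζ) • discMap c ζ := by
    by_contra! hconst
    refine hφt ((hconst t (by simpa using ht.le)).trans (hconst 1 (by simp)).symm |>.trans ?_)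
    rw [sub_self, zero_smul]
  refine h.hasStrongSupport.neg_of_diffContOnCl one_half_pos isOpen_ball
    (convex_ball _ _).isPreconnected isBounded_ball hΓ.diffContOnCl (fun z hz => ?_)
    (fun ξ hξ => (hΓ.eq_zero ξ (by rwa [frontier_ball _ one_ne_zero] at hξ)).le) hζ (hcl ▸ hw) hwζ
  rw [hcl, mem_closedBall_zero_iff] at hz
  exact mem_closedBall_zero_iff.2 ((hc.norm_one_sub_smul_discMap_le_two_mul hz).trans hr)

theorem SobolevBound.comp_one_sub_smul_discMap_isLittleO (hc : SobolevBound B c) {f : V → V}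
    {U : Set V} (hU : MapsTo (fun ζ : ℂ => (1 - ζ) • discMap c ζ) (ball 0 1) U) {n : ℕ}
    (hf : (fun x => f x - x) =o[𝓝[U] 0] fun x => ‖x‖ ^ n) :
    (fun ζ : ℂ => f ((1 - ζ) • discMap c ζ) - (1 - ζ) • discMap c ζ)
      =o[𝓝[ball 0 1] 1] fun ζ : ℂ => (1 - ζ) ^ n := by
  have hlim : Tendsto (fun ζ : ℂ => (1 - ζ) • discMap c ζ) (𝓝[ball 0 1] 1) (𝓝[U] 0) := by
    refine tendsto_nhdsWithin_iff.2 ⟨?_, eventually_mem_nhdsWithin.mono hU⟩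
    simpa using ((hc.diffContOnCl_one_sub_smul_discMap.continuousOn_ball 1 (by simp)).mono
      ball_subset_closedBall).tendsto
  have hbig : (fun ζ : ℂ => (1 - ζ) • discMap c ζ) =O[𝓝[ball 0 1] 1] fun ζ : ℂ => 1 - ζ :=
    .of_bound (sobolevConst * B) (eventually_mem_nhdsWithin.mono fun ζ hζ =>
      hc.norm_one_sub_smul_discMap_le (mem_ball_zero_iff.1 hζ).le)
  exact (hf.comp_tendsto hlim).trans_isBigO (hbig.norm_left.pow n)

theorem ModelData.eqOn_disc (h : ModelData e E η C r) (hr : 2 * (sobolevConst * B) ≤ r)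
    (hc : SobolevBound B c) {b : V} (hb : inner ℂ e b = 0) (hb0 : b ≠ 0) {t : ℂ} (ht : ‖t‖ < 1)
    (hfix : nextCoeff (modelMap e E η) (perp e) b t c = c) {f : V → V} {r₁ : ℝ}
    (hr₁ : 2 * (sobolevConst * B) < r₁)
    (hfd : DifferentiableOn ℂ f ({x | modelRho e E x < 0} ∩ ball 0 r₁))
    (hfm : MapsTo f ({x | modelRho e E x < 0} ∩ ball 0 r₁)
      ({x | modelRho e E x < 0} ∩ closedBall 0 r))
    (hfo : (fun x => f x - x) =o[𝓝[{x | modelRho e E x < 0}] 0] fun x => ‖x‖ ^ 3) {ζ : ℂ}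
    (hζ : ζ ∈ ball (0 : ℂ) 1) : f ((1 - ζ) • discMap c ζ) = (1 - ζ) • discMap c ζ := by
  obtain ⟨Γ, hΓ⟩ := h.exists_stationaryDisc hr hc hb hfix
  have hneg : MapsTo (fun ζ : ℂ => (1 - ζ) • discMap c ζ) (ball 0 1) {x | modelRho e E x < 0} :=
    fun z hz => h.modelRho_neg hr hc hb hb0 ht hfix hz
  have hmem : MapsTo (fun ζ : ℂ => (1 - ζ) • discMap c ζ) (ball 0 1)
      ({x | modelRho e E x < 0} ∩ ball 0 r₁) := fun z hz => ⟨hneg hz, mem_ball_zero_iff.2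
    ((hc.norm_one_sub_smul_discMap_le_two_mul (mem_ball_zero_iff.1 hz).le).trans_lt hr₁)⟩
  exact hΓ.eqOn_of_isLittleO h.hasStrongSupport one_half_pos isBounded_closedBall
    h.continuousOn_modelRho h.continuousOn_modelGrad
    (fun z hz => mem_closedBall_zero_iff.2
      ((hc.norm_one_sub_smul_discMap_le_two_mul (mem_closedBall_zero_iff.1 hz)).trans hr))
    (hfd.comp hΓ.diffContOnCl.differentiableOn hmem)
    (fun z hz => ⟨(hfm (hmem hz)).2, (hfm (hmem hz)).1.le⟩)
    (hc.comp_one_sub_smul_discMap_isLittleO hneg hfo) hζ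

end ModelDisc

/-! ### Slices swept out by the discs -/

section Slice

theorem HasStrongSupport.convexOn {V : Type*} [NormedAddCommGroup V] [InnerProductSpace ℂ V]
    {κ : ℝ} {S : Set V} {ρ : V → ℝ} {g : V → V} (h : HasStrongSupport κ S ρ g) (hκ : 0 ≤ κ)
    (hS : Convex ℝ S) : ConvexOn ℝ S ρ := by
  refine ⟨hS, fun x hx y hy a b ha hb hab => ?_⟩
  have hm := hS hx hy ha hb hab
  set m := a • x + b • y with hmdef
  have hlin : a * (inner ℂ (g m) (x - m)).re + b * (inner ℂ (g m) (y - m)).re = 0 := by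
    have hsum : a • (x - m) + b • (y - m) = 0 := by
      rw [smul_sub, smul_sub, sub_add_sub_comm, ← add_smul, hab, one_smul, ← hmdef, sub_self]
    rw [← Complex.re_ofReal_mul, ← Complex.re_ofReal_mul, ← inner_smul_right, ← inner_smul_right,
      ← Complex.add_re, ← inner_add_right, Complex.coe_smul, Complex.coe_smul, hsum,
      inner_zero_right, Complex.zero_re]
  have hx' := mul_le_mul_of_nonneg_left (h m hm x hx) ha
  have hy' := mul_le_mul_of_nonneg_left (h m hm y hy) hb
  have hquad : 0 ≤ κ * (a * ‖x - m‖ ^ 2 + b * ‖y - m‖ ^ 2) := by positivity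
  have hρ : a * ρ m + b * ρ m = ρ m := by rw [← add_mul, hab, one_mul]
  simp only [smul_eq_mul]
  linarith

section IdentityOnLine

variable {V W : Type*} [NormedAddCommGroup V] [NormedSpace ℂ V] [NormedAddCommGroup W]
  [NormedSpace ℂ W] [CompleteSpace W]

theorem eq_on_line_of_nontrivial {f g : V → W} {U : Set V} (hUo : IsOpen U) (hUc : Convex ℝ U)
    (hf : DifferentiableOn ℂ f U) (hg : DifferentiableOn ℂ g U) {z e : V} {T : Set ℂ}
    (hT : IsPreconnected T) (hTn : T.Nontrivial) (hTU : ∀ a ∈ T, z + a • e ∈ U)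
    (hfg : ∀ a ∈ T, f (z + a • e) = g (z + a • e)) {a : ℂ} (ha : z + a • e ∈ U) :
    f (z + a • e) = g (z + a • e) := by
  have hline : Differentiable ℂ fun a : ℂ => z + a • e := by fun_prop
  have hSo : IsOpen {a : ℂ | z + a • e ∈ U} := hUo.preimage hline.continuous
  have hSc : Convex ℝ {a : ℂ | z + a • e ∈ U} :=
    (hUc.translate_preimage_right z).is_linear_preimage
      (LinearMap.isLinear ((LinearMap.toSpanSingleton ℂ V e).restrictScalars ℝ))
  have hdiff : ∀ {k : V → W}, DifferentiableOn ℂ k U →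
      AnalyticOnNhd ℂ (fun a : ℂ => k (z + a • e)) {a : ℂ | z + a • e ∈ U} := fun hk =>
    (hk.comp hline.differentiableOn fun _ ha => ha).analyticOnNhd hSo
  obtain ⟨a₀, ha₀⟩ := hTn.nonempty
  have hacc := accPt_iff_frequently_nhdsNE.1 (hT.preperfect_of_nontrivial hTn a₀ ha₀)
  exact (hdiff hf).eqOn_of_preconnected_of_frequently_eq (hdiff hg) hSc.isPreconnected
    (hTU a₀ ha₀) (hacc.mono hfg) ha

end IdentityOnLine

theorem half_le_norm_one_sub {t : ℂ} (ht : ‖t‖ ≤ 1 / 2) : 1 / 2 ≤ ‖1 - t‖ := by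
  have := norm_sub_norm_le (1 : ℂ) t
  rw [norm_one] at this
  linarith

theorem inv_norm_one_sub_le_two {t : ℂ} (ht : ‖t‖ ≤ 1 / 2) : ‖1 - t‖⁻¹ ≤ 2 :=
  inv_le_of_inv_le₀ two_pos (by linarith [half_le_norm_one_sub ht])

variable {V : Type*} [NormedAddCommGroup V] [InnerProductSpace ℂ V]
  {e : V} {E : V → ℝ} {η : V → V} {C r : ℝ}

theorem ModelData.convex_inter_ball (h : ModelData e E η C r) {r₁ : ℝ} (hr₁ : r₁ ≤ r) :
    Convex ℝ ({x | modelRho e E x < 0} ∩ ball 0 r₁) := by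
  rw [inter_comm]
  exact ((h.hasStrongSupport.convexOn one_half_pos.le (convex_closedBall 0 r)).subset
    (ball_subset_closedBall.trans (closedBall_subset_closedBall hr₁))
    (convex_ball 0 r₁)).convex_lt 0

theorem ModelData.isOpen_inter_ball (h : ModelData e E η C r) {r₁ : ℝ} (hr₁ : r₁ ≤ r) :
    IsOpen ({x | modelRho e E x < 0} ∩ ball 0 r₁) := by
  rw [inter_comm]
  exact (h.continuousOn_modelRho.mono (ball_subset_closedBall.trans
    (closedBall_subset_closedBall hr₁))).isOpen_inter_preimage isOpen_ball isOpen_Iio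

variable [CompleteSpace V] {z : V}

/-- The constant in `ModelData.norm_one_sub_mul_inner_discMap_sub_le`, which compares the points
swept out by the stationary discs on a slice parallel to `e` with those of the unperturbed ball. -/
def sliceConst (C : ℝ) : ℝ := 192 * (40 * C * sobolevConst ^ 4 + 4 * C * sobolevConst ^ 3)

theorem ModelData.exists_disc_family (h : ModelData e E η C r)
    (hr : 8 * sobolevConst * ‖z‖ ≤ r) (hsmall : 120 * C * sobolevConst ^ 2 * ‖z‖ ≤ 1) :
    ∃ c : ℂ → ℕ → V, ContinuousOn (fun t => discMap (c t) t) (closedBall 0 (1 / 2)) ∧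
      ∀ t : ℂ, ‖t‖ ≤ 1 / 2 → SobolevBound (4 * ‖z‖) (c t) ∧
        nextCoeff (modelMap e E η) (perp e) ((1 - t)⁻¹ • z) t (c t) = c t := by
  have hr' : 2 * (sobolevConst * (4 * ‖z‖)) ≤ r := by linarith
  have hsmall' : 30 * C * sobolevConst ^ 2 * (4 * ‖z‖) ≤ 1 := by linarith
  have hP : ‖perp e‖ ≤ 1 := Submodule.starProjection_norm_le _
  have hb : ∀ t : ℂ, ‖t‖ ≤ 1 / 2 → ‖(1 - t)⁻¹ • z‖ ≤ 4 * ‖z‖ / 2 := fun t ht => by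
    rw [norm_smul, norm_inv]
    linarith [mul_le_mul_of_nonneg_right (inv_norm_one_sub_le_two ht) (norm_nonneg z)]
  have hex : ∀ t : ℂ, ∃ c : ℕ → V, ‖t‖ ≤ 1 / 2 → SobolevBound (4 * ‖z‖) c ∧
      nextCoeff (modelMap e E η) (perp e) ((1 - t)⁻¹ • z) t c = c := fun t => by
    by_cases ht : ‖t‖ ≤ 1 / 2
    · exact (h.quadLip_map.exists_nextCoeff_eq_self hr' hP hsmall' (hb t ht) ht).imp
        fun c hc _ => hc
    · exact ⟨0, fun ht' => absurd ht' ht⟩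
  choose c hc using hex
  have hmem : ∀ t ∈ closedBall (0 : ℂ) (1 / 2), ‖t‖ ≤ 1 / 2 := fun t => mem_closedBall_zero_iff.1
  refine ⟨c, h.quadLip_map.continuousOn_discMap_of_nextCoeff_eq_self hr' hP hsmall' hmem
    (b := fun t => (1 - t)⁻¹ • z) ?_
    (fun t ht => (hc t (hmem t ht)).1) (fun t ht => (hc t (hmem t ht)).2), hc⟩
  refine ((continuousOn_const.sub continuousOn_id).inv₀ fun t ht => ?_).smul continuousOn_const
  exact norm_pos_iff.1 (one_half_pos.trans_le (half_le_norm_one_sub (hmem t ht)))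

variable {B : ℝ} {c : ℕ → V} {t : ℂ}

theorem ModelData.one_sub_smul_discMap_eq (h : ModelData e E η C r)
    (hr : 2 * (sobolevConst * B) ≤ r) (hc : SobolevBound B c) (hez : inner ℂ e z = 0)
    (ht : ‖t‖ ≤ 1) (ht1 : t ≠ 1)
    (hfix : nextCoeff (modelMap e E η) (perp e) ((1 - t)⁻¹ • z) t c = c) :
    (1 - t) • discMap c t = z + ((1 - t) * inner ℂ e (discMap c t)) • e := by
  have hP := h.quadLip_map.map_discMap_of_nextCoeff_eq_self hr hc hfix (perp_perp e)
    (by rw [map_smul, perp_eq_self_iff.2 hez]) ht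
  rw [perp_apply h.norm_e, sub_eq_iff_eq_add] at hP
  rw [mul_smul, ← smul_inv_smul₀ (sub_ne_zero.2 ht1.symm) z, ← smul_add, ← hP]

open scoped ComplexConjugate in
theorem ModelData.norm_one_sub_mul_inner_discMap_sub_le (h : ModelData e E η C r)
    (hr : 8 * sobolevConst * ‖z‖ ≤ r) (hc : SobolevBound (4 * ‖z‖) c) (hez : inner ℂ e z = 0)
    (ht : ‖t‖ ≤ 1 / 2) (hfix : nextCoeff (modelMap e E η) (perp e) ((1 - t)⁻¹ • z) t c = c) :
    ‖(1 - t) * inner ℂ e (discMap c t) - (‖z‖ ^ 2 : ℝ) / conj (1 - t)‖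
      ≤ sliceConst C * ‖z‖ ^ 3 := by
  have hpos : 0 < ‖1 - t‖ := one_half_pos.trans_le (half_le_norm_one_sub ht)
  have hb : ‖(1 - t)⁻¹ • z‖ ≤ 4 * ‖z‖ := by
    rw [norm_smul, norm_inv]
    linarith [mul_le_mul_of_nonneg_right (inv_norm_one_sub_le_two ht) (norm_nonneg z),
      norm_nonneg z]
  have hle : ‖1 - t‖ ≤ 3 / 2 := by
    refine (norm_sub_le _ _).trans ?_
    rw [norm_one]
    linarith
  have hest := h.quadLip_map.norm_inner_discMap_sub_sq_norm_le (by linarith) hc hfix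
    (by rw [inner_smul_right, hez, mul_zero]) (inner_perp e) h.inner_modelMap
    (Submodule.starProjection_norm_le _) hb ht h.quadLip_map.nonneg h.abs_E_le fun _ => rfl
  have hfactor : (1 - t) * inner ℂ e (discMap c t) - (‖z‖ ^ 2 : ℝ) / conj (1 - t)
      = (1 - t) * (inner ℂ e (discMap c t) - (‖(1 - t)⁻¹ • z‖ ^ 2 : ℝ)) := by
    rw [mul_sub, norm_smul, norm_inv, mul_pow, ofReal_mul, inv_pow, ofReal_inv, ofReal_pow ‖1 - t‖,
      ← mul_conj', mul_inv]
    field_simp [norm_pos_iff.1 hpos]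
  rw [hfactor, norm_mul]
  refine (mul_le_mul hle hest (norm_nonneg _) (by norm_num)).trans_eq ?_
  rw [sliceConst]
  ring

open scoped ComplexConjugate in
theorem apply_zero_ne_apply_half {w : ℂ → ℂ} {K s : ℝ} (hs : 0 < s) (hKs : 2 * K * s < 1)
    (hw : ∀ t : ℂ, ‖t‖ ≤ 1 / 2 → ‖w t - (s ^ 2 : ℝ) / conj (1 - t)‖ ≤ K * s ^ 3) :
    w 0 ≠ w (1 / 2) := by
  intro heq
  have h0 := hw 0 (by simp)
  have h1 := hw (1 / 2) (by norm_num)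
  have hlead : ((s ^ 2 : ℝ) : ℂ)
      = (w 0 - (s ^ 2 : ℝ) / conj (1 - 0)) - (w (1 / 2) - (s ^ 2 : ℝ) / conj (1 - 1 / 2)) := by
    rw [heq, map_sub, map_sub, map_div₀, map_one, map_zero, map_ofNat]
    ring
  have hle := (norm_sub_le _ _).trans (add_le_add h0 h1)
  rw [← hlead, norm_real, Real.norm_of_nonneg (by positivity)] at hle
  have : s ^ 2 * (2 * K * s) < s ^ 2 * 1 := mul_lt_mul_of_pos_left hKs (by positivity)
  linarith

theorem ModelData.exists_nontrivial_slice (h : ModelData e E η C r) {r₁ : ℝ} (hr₁r : r₁ ≤ r)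
    {f : V → V} (hfd : DifferentiableOn ℂ f ({x | modelRho e E x < 0} ∩ ball 0 r₁))
    (hfm : MapsTo f ({x | modelRho e E x < 0} ∩ ball 0 r₁)
      ({x | modelRho e E x < 0} ∩ closedBall 0 r))
    (hfo : (fun x => f x - x) =o[𝓝[{x | modelRho e E x < 0}] 0] fun x => ‖x‖ ^ 3)
    (hz0 : z ≠ 0) (hez : inner ℂ e z = 0) (hr : 8 * sobolevConst * ‖z‖ < r₁)
    (hsmall : 120 * C * sobolevConst ^ 2 * ‖z‖ ≤ 1) (hslice : 2 * sliceConst C * ‖z‖ < 1) :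
    ∃ T : Set ℂ, IsPreconnected T ∧ T.Nontrivial ∧ ∀ a ∈ T,
      z + a • e ∈ {x | modelRho e E x < 0} ∩ ball 0 r₁ ∧ f (z + a • e) = z + a • e := by
  obtain ⟨c, hcont, hc⟩ := h.exists_disc_family (hr.le.trans hr₁r) hsmall
  have hr' : 2 * (sobolevConst * (4 * ‖z‖)) < r₁ := by linarith
  have hhalf : ∀ {t : ℂ}, ‖t‖ ≤ 1 / 2 → ‖t‖ < 1 := fun ht => ht.trans_lt one_half_lt_one
  refine ⟨(fun t => (1 - t) * inner ℂ e (discMap (c t) t)) '' closedBall 0 (1 / 2),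
    (convex_closedBall 0 _).isPreconnected.image _ ((continuousOn_const.sub continuousOn_id).mul
      (continuousOn_const.inner (𝕜 := ℂ) hcont)),
    ⟨_, mem_image_of_mem _ (by simp), _, mem_image_of_mem _ (by simp),
      apply_zero_ne_apply_half (norm_pos_iff.2 hz0) hslice fun t ht =>
        h.norm_one_sub_mul_inner_discMap_sub_le (hr.le.trans hr₁r) (hc t ht).1 hez ht (hc t ht).2⟩,
    ?_⟩
  rintro _ ⟨t, ht, rfl⟩
  rw [mem_closedBall_zero_iff] at ht
  obtain ⟨hct, hfix⟩ := hc t ht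
  have ht1 : t ≠ 1 := by
    rintro rfl
    norm_num at ht
  have hb : inner ℂ e ((1 - t)⁻¹ • z) = 0 := by rw [inner_smul_right, hez, mul_zero]
  have hb0 : (1 - t)⁻¹ • z ≠ 0 := smul_ne_zero (inv_ne_zero (sub_ne_zero.2 ht1.symm)) hz0
  have htb : t ∈ ball (0 : ℂ) 1 := mem_ball_zero_iff.2 (hhalf ht)
  have hr'' := hr'.le.trans hr₁r
  rw [← h.one_sub_smul_discMap_eq hr'' hct hez (hhalf ht).le ht1 hfix]
  exact ⟨⟨h.modelRho_neg hr'' hct hb hb0 (hhalf ht) hfix htb, mem_ball_zero_iff.2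
    ((hct.norm_one_sub_smul_discMap_le_two_mul (hhalf ht).le).trans_lt hr')⟩,
    h.eqOn_disc hr'' hct hb hb0 (hhalf ht) hfix hr' hfd hfm hfo htb⟩

theorem ModelData.exists_isOpen_eqOn (h : ModelData e E η C r) {r₁ : ℝ} (hr₁ : 0 < r₁)
    (hr₁r : r₁ ≤ r) {f : V → V}
    (hfd : DifferentiableOn ℂ f ({x | modelRho e E x < 0} ∩ ball 0 r₁))
    (hfm : MapsTo f ({x | modelRho e E x < 0} ∩ ball 0 r₁)
      ({x | modelRho e E x < 0} ∩ closedBall 0 r))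
    (hfo : (fun x => f x - x) =o[𝓝[{x | modelRho e E x < 0}] 0] fun x => ‖x‖ ^ 3)
    (hb : ∃ b : V, b ≠ 0 ∧ inner ℂ e b = 0) :
    ∃ U ⊆ {x | modelRho e E x < 0} ∩ ball 0 r₁, IsOpen U ∧ U.Nonempty ∧ EqOn f id U := by
  have hslice : ∀ᶠ z in 𝓝 (0 : V), z ≠ 0 → inner ℂ e z = 0 → ∃ T : Set ℂ, IsPreconnected T ∧
      T.Nontrivial ∧ ∀ a ∈ T, z + a • e ∈ {x | modelRho e E x < 0} ∩ ball 0 r₁ ∧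
        f (z + a • e) = z + a • e := by
    have hlim : ∀ K : ℝ, ∀ ε > 0, ∀ᶠ z in 𝓝 (0 : V), K * ‖z‖ < ε := fun K ε hε =>
      (by fun_prop : Continuous fun z : V => K * ‖z‖).tendsto' 0 0 (by simp)
        |>.eventually_lt_const hε
    filter_upwards [hlim (8 * sobolevConst) r₁ hr₁, hlim (120 * C * sobolevConst ^ 2) 1 one_pos,
      hlim (2 * sliceConst C) 1 one_pos] with z hr hsmall hflat hz0 hez
    exact h.exists_nontrivial_slice hr₁r hfd hfm hfo hz0 hez hr hsmall.le hflat
  obtain ⟨δ, hδ, hball⟩ := Metric.eventually_nhds_iff_ball.1 hslice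
  refine ⟨({x | modelRho e E x < 0} ∩ ball 0 r₁) ∩ perp e ⁻¹' (ball 0 δ \ {0}), inter_subset_left,
    (h.isOpen_inter_ball hr₁r).inter ((isOpen_ball.sdiff isClosed_singleton).preimage
      (perp e).continuous), ?_, ?_⟩
  · obtain ⟨b, hb0, hbe⟩ := hb
    obtain ⟨τ, hτδ, hτ0⟩ : ∃ τ : ℂ, τ • b ∈ ball 0 δ ∧ τ ≠ 0 := by
      have hlim : ∀ᶠ τ : ℂ in 𝓝[≠] 0, τ • b ∈ ball 0 δ :=
        ((by fun_prop : Continuous fun τ : ℂ => τ • b).tendsto' 0 0 (zero_smul _ _)).mono_left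
          nhdsWithin_le_nhds |>.eventually_mem (ball_mem_nhds _ hδ)
      exact (hlim.and eventually_mem_nhdsWithin).exists
    have hez : inner ℂ e (τ • b) = 0 := by rw [inner_smul_right, hbe, mul_zero]
    obtain ⟨T, -, hT, hTU⟩ := hball _ hτδ (smul_ne_zero hτ0 hb0) hez
    obtain ⟨a, ha⟩ := hT.nonempty
    refine ⟨τ • b + a • e, (hTU a ha).1, ?_⟩
    rw [mem_preimage, map_add, perp_eq_self_iff.2 hez, map_smul, perp_self, smul_zero, add_zero]
    exact ⟨hτδ, smul_ne_zero hτ0 hb0⟩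
  · rintro x ⟨hx, hxδ, hx0⟩
    obtain ⟨T, hT, hTn, hTU⟩ := hball _ hxδ hx0 (inner_perp e x)
    have hxe : perp e x + inner ℂ e x • e = x := by rw [perp_apply h.norm_e, sub_add_cancel]
    have := eq_on_line_of_nontrivial (h.isOpen_inter_ball hr₁r) (h.convex_inter_ball hr₁r) hfd
      differentiableOn_id hT hTn (fun a ha => (hTU a ha).1) (fun a ha => (hTU a ha).2)
      (a := inner ℂ e x) (by rwa [hxe])
    rwa [hxe] at this

end Slice

/-! ### Existence of model estimates -/

section Taylor

open Asymptotics

variable {X Y : Type*} [NormedAddCommGroup X] [NormedAddCommGroup Y]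

theorem QuadLip.mono {C C' r r' : ℝ} {f : X → Y} (h : QuadLip C r f) (hC : C ≤ C') (hr : r' ≤ r) :
    QuadLip C' r' f := by
  refine ⟨h.nonneg.trans hC, h.map_zero, fun x y hx hy =>
    (h.norm_map_sub_le (hx.trans hr) (hy.trans hr)).trans ?_⟩
  gcongr

theorem eventually_forall_norm_le {P : X → Prop} (h : ∀ᶠ x in 𝓝 (0 : X), P x) :
    ∀ᶠ r in 𝓝[>] (0 : ℝ), ∀ x, ‖x‖ ≤ r → P x := by
  obtain ⟨ε, hε, hP⟩ := Metric.eventually_nhds_iff_ball.1 h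
  filter_upwards [Ioo_mem_nhdsGT hε] with r hr x hx
  exact hP x (mem_ball_zero_iff.2 (hx.trans_lt hr.2))

variable [NormedSpace ℝ X] [NormedSpace ℝ Y]

theorem exists_eventually_quadLip {f : X → Y} (hf : ContDiffAt ℝ 2 f 0) (h0 : f 0 = 0)
    (hd : HasFDerivAt f (0 : X →L[ℝ] Y) 0) : ∃ C, ∀ᶠ r in 𝓝[>] (0 : ℝ), QuadLip C r f := by
  obtain ⟨K, t, ht, hK⟩ :=
    (hf.fderiv_right (m := 1) (by norm_num)).exists_lipschitzOnWith
  have hdiff : ∀ᶠ x in 𝓝 (0 : X), DifferentiableAt ℝ f x :=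
    (hf.eventually (by simp)).mono fun x hx => hx.differentiableAt two_ne_zero
  refine ⟨K, ?_⟩
  filter_upwards [eventually_forall_norm_le (hdiff.and ht)] with r hr
  refine ⟨K.2, h0, fun x y hx hy => ?_⟩
  have hball : ∀ {z}, z ∈ closedBall (0 : X) (max ‖x‖ ‖y‖) → ‖z‖ ≤ r := fun hz =>
    (mem_closedBall_zero_iff.1 hz).trans (max_le hx hy)
  refine (convex_closedBall (0 : X) (max ‖x‖ ‖y‖)).norm_image_sub_le_of_norm_fderiv_le
    (fun z hz => (hr z (hball hz)).1) (fun z hz => ?_)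
    (mem_closedBall_zero_iff.2 (le_max_right _ _)) (mem_closedBall_zero_iff.2 (le_max_left _ _))
  have hlip := hK.dist_le_mul z (hr z (hball hz)).2 0 (mem_of_mem_nhds ht)
  rw [hd.fderiv, dist_zero_right, dist_zero_right] at hlip
  exact hlip.trans (mul_le_mul_of_nonneg_left (mem_closedBall_zero_iff.1 hz) K.2)

theorem isLittleO_taylor_two {f : X → Y} {x₀ : X} (hf : ContDiffAt ℝ 2 f x₀) :
    (fun x => f x - f x₀ - fderiv ℝ f x₀ (x - x₀)
      - (1 / 2 : ℝ) • fderiv ℝ (fderiv ℝ f) x₀ (x - x₀) (x - x₀)) =o[𝓝 x₀]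
      fun x => ‖x - x₀‖ ^ 2 := by
  set A := fderiv ℝ f x₀
  set Q := fderiv ℝ (fderiv ℝ f) x₀
  have hsymm : IsSymmSndFDerivAt ℝ f x₀ := hf.isSymmSndFDerivAt (by simp)
  have hQ : HasFDerivAt (fderiv ℝ f) Q x₀ :=
    ((hf.fderiv_right (m := 1) (by norm_num)).differentiableAt one_ne_zero).hasFDerivAt
  have hdiff : ∀ᶠ x in 𝓝 x₀, DifferentiableAt ℝ f x :=
    (hf.eventually (by simp)).mono fun x hx => hx.differentiableAt two_ne_zero
  have hderiv : ∀ x, DifferentiableAt ℝ f x → HasFDerivAt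
      (fun x => f x - A (x - x₀) - (1 / 2 : ℝ) • Q (x - x₀) (x - x₀))
      (fderiv ℝ f x - A - Q (x - x₀)) x := fun x hx => by
    have hsub := (hasFDerivAt_id (𝕜 := ℝ) x).sub_const x₀
    refine ((hx.hasFDerivAt.sub (A.hasFDerivAt.comp x hsub)).sub
      (((Q.hasFDerivAt.comp x hsub).clm_apply hsub).const_smul (1 / 2 : ℝ))).congr_fderiv ?_
    ext v
    have hv : Q v (x - x₀) = Q (x - x₀) v := hsymm v (x - x₀)
    simp only [ContinuousLinearMap.comp_id, _root_.sub_apply, _root_.smul_apply, _root_.add_apply,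
      ContinuousLinearMap.flip_apply, comp_apply, id_eq, hv]
    module
  obtain ⟨δ, hδ, hball⟩ := Metric.eventually_nhds_iff_ball.1 hdiff
  have hsmall : (fun x => fderiv ℝ f x - A - Q (x - x₀)) =o[𝓝[ball x₀ δ] x₀]
      fun x => ‖x - x₀‖ ^ 1 := by
    simpa only [pow_one] using (hQ.isLittleO.mono nhdsWithin_le_nhds).norm_right
  have := (convex_ball x₀ δ).isLittleO_pow_succ (mem_ball_self hδ)
    (fun x hx => (hderiv x (hball x hx)).hasFDerivWithinAt) hsmall
  rw [nhdsWithin_eq_nhds.2 (ball_mem_nhds x₀ hδ)] at this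
  refine this.congr_left fun x => ?_
  simp only [sub_self, map_zero, smul_zero, sub_zero]
  abel

theorem eq_zero_of_homogeneous_of_isLittleO {q : X → Y} {k : ℕ}
    (hq : ∀ (t : ℝ) x, q (t • x) = t ^ k • q x) (ho : q =o[𝓝 0] fun x => ‖x‖ ^ k) (x : X) :
    q x = 0 := by
  have hlim : Tendsto (fun t : ℝ => t • x) (𝓝[≠] 0) (𝓝 0) :=
    ((by fun_prop : Continuous fun t : ℝ => t • x).tendsto' 0 0 (zero_smul _ _)).mono_left
      nhdsWithin_le_nhds
  have hconst : (fun _ : ℝ => q x) =o[𝓝[≠] 0] fun _ => ‖x‖ ^ k := by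
    have hmul := (isBigO_refl (fun t : ℝ => (t ^ k)⁻¹) (𝓝[≠] 0)).smul_isLittleO
      (ho.comp_tendsto hlim)
    refine (hmul.congr' ?_ .rfl).trans_isBigO (.of_bound 1 ?_)
    · filter_upwards [eventually_mem_nhdsWithin] with t ht
      rw [comp_apply, hq, inv_smul_smul₀ (pow_ne_zero k ht)]
    · filter_upwards [eventually_mem_nhdsWithin] with t ht
      have ht' : ‖t‖ ^ k ≠ 0 := pow_ne_zero k (norm_ne_zero_iff.2 ht)
      rw [comp_apply, norm_smul t x, mul_pow, norm_smul, norm_mul, norm_inv, norm_pow, norm_pow,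
        norm_norm, one_mul, inv_mul_cancel_left₀ ht']
  exact isLittleO_const_const_iff.1 hconst

theorem fderiv_fderiv_eq_zero_of_isLittleO {f : X → Y} {x₀ : X} (hf : ContDiffAt ℝ 2 f x₀)
    (ho : f =o[𝓝 x₀] fun x => ‖x - x₀‖ ^ 2) : fderiv ℝ (fderiv ℝ f) x₀ = 0 := by
  have htaylor := isLittleO_taylor_two hf
  rw [ho.isBigO.eq_zero_of_norm_pow two_ne_zero,
    (ho.isBigO.hasFDerivAt (𝕜 := ℝ) one_lt_two).fderiv] at htaylor
  have hquad := (ho.sub htaylor).comp_tendsto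
    ((by fun_prop : Continuous fun x => x₀ + x).tendsto' 0 x₀ (add_zero x₀))
  simp only [comp_def, _root_.zero_apply, sub_zero, sub_sub_cancel, add_sub_cancel_left] at hquad
  have hdiag : ∀ x, fderiv ℝ (fderiv ℝ f) x₀ x x = 0 := fun x => by
    have := eq_zero_of_homogeneous_of_isLittleO (fun t x => ?_) hquad x
    · exact (smul_eq_zero.1 this).resolve_left (by norm_num)
    · simp only [map_smul, _root_.smul_apply]
      module
  have hsymm : IsSymmSndFDerivAt ℝ f x₀ := hf.isSymmSndFDerivAt (by simp)
  ext x y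
  have hadd := hdiag (x + y)
  rw [map_add, map_add, _root_.add_apply, _root_.add_apply, hdiag, hdiag, zero_add, add_zero,
    hsymm.eq, ← two_smul ℝ] at hadd
  exact (smul_eq_zero.1 hadd).resolve_left two_ne_zero

variable {f : X → Y} {C r : ℝ}

theorem QuadLip.norm_sub_le_cube (h : QuadLip C r (fderiv ℝ f))
    (hf : ∀ x, ‖x‖ ≤ r → DifferentiableAt ℝ f x) {x : X} (hx : ‖x‖ ≤ r) :
    ‖f x - f 0‖ ≤ C * ‖x‖ ^ 3 := by
  have hball : ∀ {z}, z ∈ closedBall (0 : X) ‖x‖ → ‖z‖ ≤ r := fun hz =>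
    (mem_closedBall_zero_iff.1 hz).trans hx
  have := (convex_closedBall (0 : X) ‖x‖).norm_image_sub_le_of_norm_fderiv_le (𝕜 := ℝ)
    (C := C * ‖x‖ ^ 2) (fun z hz => hf z (hball hz)) (fun z hz => ?_)
    (mem_closedBall_self (norm_nonneg x)) (mem_closedBall_zero_iff.2 le_rfl)
  · rwa [sub_zero, mul_assoc, ← pow_succ] at this
  · have hz' := mem_closedBall_zero_iff.1 hz
    have hC := h.nonneg
    exact (h.norm_le (hball hz)).trans (by gcongr)

theorem QuadLip.norm_sub_sub_fderiv_le (h : QuadLip C r (fderiv ℝ f))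
    (hf : ∀ x, ‖x‖ ≤ r → DifferentiableAt ℝ f x) {x y : X} (hx : ‖x‖ ≤ r) (hy : ‖y‖ ≤ r) :
    ‖f y - f x - fderiv ℝ f x (y - x)‖ ≤ C * r * ‖y - x‖ ^ 2 := by
  have := ((convex_closedBall (0 : X) r).inter
    (convex_closedBall x ‖y - x‖)).norm_image_sub_le_of_norm_hasFDerivWithin_le' (𝕜 := ℝ)
    (f' := fderiv ℝ f) (φ := fderiv ℝ f x) (C := C * r * ‖y - x‖)
    (fun z hz => (hf z (mem_closedBall_zero_iff.1 hz.1)).hasFDerivAt.hasFDerivWithinAt)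
    (fun z hz => ?_) ⟨mem_closedBall_zero_iff.2 hx, mem_closedBall_self (norm_nonneg _)⟩
    ⟨mem_closedBall_zero_iff.2 hy, mem_closedBall_iff_norm.2 le_rfl⟩
  · rwa [mul_assoc, ← sq] at this
  · have hz' := mem_closedBall_zero_iff.1 hz.1
    have hC := h.nonneg
    refine (h.norm_map_sub_le hz' hx).trans ?_
    have hr : 0 ≤ r := (norm_nonneg x).trans hx
    gcongr
    · exact max_le hz' hx
    · exact mem_closedBall_iff_norm.1 hz.2

end Taylor

section ModelExists

open Asymptotics

variable {V : Type*} [NormedAddCommGroup V] [InnerProductSpace ℂ V]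

theorem exists_re_inner_eq [CompleteSpace V] : ∃ T : (V →L[ℝ] ℝ) →L[ℝ] V,
    ∀ (l : V →L[ℝ] ℝ) (x : V), (inner ℂ (T l) x).re = l x := by
  let : InnerProductSpace ℝ V := InnerProductSpace.complexToReal
  refine ⟨LinearMap.mkContinuous
    { toFun := (InnerProductSpace.toDual ℝ V).symm
      map_add' := map_add _
      map_smul' := fun a l => by simp } 1
    fun l => by simp, fun l x => ?_⟩
  exact (real_inner_eq_re_inner ℂ _ _).symm.trans InnerProductSpace.toDual_symm_apply

variable {e : V} {E : V → ℝ} {η : V → V}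

theorem modelU_zero (h0 : η 0 = 0) : modelU e η 0 = 1 := by simp [modelU, h0]

theorem contDiffAt_modelU (hη : ContDiffAt ℝ 2 η 0) : ContDiffAt ℝ 2 (modelU e η) 0 :=
  have he : ContDiff ℝ 2 ((innerSL ℂ e).restrictScalars ℝ) := ContinuousLinearMap.contDiff _
  (contDiffAt_const.sub he.contDiffAt).sub (he.contDiffAt.comp 0 hη)

theorem hasFDerivAt_modelU (hη : HasFDerivAt η (0 : V →L[ℝ] V) 0) :
    HasFDerivAt (modelU e η) (-(innerSL ℂ e).restrictScalars ℝ) 0 := by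
  have he : ∀ x, HasFDerivAt (fun x : V => inner ℂ e x) ((innerSL ℂ e).restrictScalars ℝ) x :=
    fun _ => ((innerSL ℂ e).restrictScalars ℝ).hasFDerivAt
  refine (((hasFDerivAt_const (1 : ℂ) (0 : V)).sub (he 0)).sub
    ((he (η 0)).comp 0 hη)).congr_fderiv ?_
  simp

theorem exists_eventually_quadLip_modelLog (hη : ContDiffAt ℝ 2 η 0) (h0 : η 0 = 0)
    (hd : HasFDerivAt η (0 : V →L[ℝ] V) 0) :
    ∃ C, ∀ᶠ r in 𝓝[>] (0 : ℝ), QuadLip C r (modelLog e η) := by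
  have hU0 : modelU e η 0 ∈ slitPlane := by
    rw [modelU_zero h0]
    exact one_mem_slitPlane
  have he : HasFDerivAt (fun x : V => inner ℂ e x) ((innerSL ℂ e).restrictScalars ℝ) 0 :=
    ((innerSL ℂ e).restrictScalars ℝ).hasFDerivAt
  refine exists_eventually_quadLip ?_ (by simp [modelLog, modelU_zero h0]) ?_
  · exact ((((contDiffAt_log (n := 2) hU0).restrict_scalars ℝ).comp 0 (contDiffAt_modelU hη)).add
      ((innerSL ℂ e).restrictScalars ℝ).contDiff.contDiffAt).smul contDiffAt_const
  · refine ((((hasStrictDerivAt_log hU0).hasDerivAt.hasFDerivAt.restrictScalars ℝ).comp 0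
      (hasFDerivAt_modelU hd)).add he |>.smul_const e).congr_fderiv ?_
    ext x
    simp [modelU_zero h0]

theorem contDiffAt_modelMap (hE : ContDiffAt ℝ 2 E 0) (hη : ContDiffAt ℝ 2 η 0) (h0 : η 0 = 0) :
    ContDiffAt ℝ 2 (modelMap e E η) 0 := by
  have hU0 : modelU e η 0 ≠ 0 := by simp [modelU_zero h0]
  have hP : ContDiff ℝ 2 ((perp e).restrictScalars ℝ) := ContinuousLinearMap.contDiff _
  have hρ : ContDiffAt ℝ 2 (fun x : V => ((‖x‖ ^ 2 + E x : ℝ) : ℂ)) 0 :=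
    ofRealCLM.contDiff.contDiffAt.comp 0 ((contDiff_norm_sq ℂ).contDiffAt.add hE)
  exact ((((contDiffAt_modelU hη).inv hU0).smul (hP.contDiffAt.comp 0 (contDiffAt_id.add hη))).sub
    hP.contDiffAt).sub (hρ.smul contDiffAt_const)

theorem hasFDerivAt_modelMap (hE0 : HasFDerivAt E (0 : V →L[ℝ] ℝ) 0) (hη : ContDiffAt ℝ 2 η 0)
    (h0 : η 0 = 0) (hd : HasFDerivAt η (0 : V →L[ℝ] V) 0) :
    HasFDerivAt (modelMap e E η) (0 : V →L[ℝ] V) 0 := by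
  have hU0 : modelU e η 0 ≠ 0 := by simp [modelU_zero h0]
  have hP : ∀ x, HasFDerivAt (perp e) ((perp e).restrictScalars ℝ) x :=
    fun _ => ((perp e).restrictScalars ℝ).hasFDerivAt
  have hinv : HasFDerivAt (fun x => (modelU e η x)⁻¹) _ 0 :=
    (((contDiffAt_modelU hη).inv hU0).differentiableAt two_ne_zero).hasFDerivAt
  have hnorm : HasFDerivAt (fun x : V => ‖x‖ ^ 2) (0 : V →L[ℝ] ℝ) 0 :=
    IsBigO.hasFDerivAt (n := 2) (by simpa using isBigO_refl _ _) one_lt_two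
  refine (((hinv.smul ((hP _).comp 0 ((hasFDerivAt_id 0).add hd))).sub (hP 0)).sub
    ((ofRealCLM.hasFDerivAt.comp 0 (hnorm.add hE0)).smul_const e)).congr_fderiv ?_
  ext x
  simp [modelU_zero h0, h0]

theorem exists_re_inner_eq_fderiv [CompleteSpace V] (hE : ContDiffAt ℝ 3 E 0)
    (hE1 : fderiv ℝ E 0 = 0) (hE2 : fderiv ℝ (fderiv ℝ E) 0 = 0) :
    ∃ η : V → V, (∀ x v, 2 * (inner ℂ (η x) v).re = fderiv ℝ E x v) ∧
      ContDiffAt ℝ 2 η 0 ∧ η 0 = 0 ∧ HasFDerivAt η (0 : V →L[ℝ] V) 0 := by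
  obtain ⟨T, hT⟩ := exists_re_inner_eq (V := V)
  have hdE : ContDiffAt ℝ 2 (fderiv ℝ E) 0 := hE.fderiv_right (by norm_num)
  refine ⟨fun x => T ((1 / 2 : ℝ) • fderiv ℝ E x), fun x v => ?_,
    T.contDiff.contDiffAt.comp 0 (hdE.const_smul _), by simp [hE1],
    (T.hasFDerivAt.comp 0 ((hdE.differentiableAt two_ne_zero).hasFDerivAt.const_smul
      (1 / 2 : ℝ))).congr_fderiv (by simp [hE2])⟩
  rw [hT, _root_.smul_apply, smul_eq_mul]
  ring

theorem exists_modelData [CompleteSpace V] (he : ‖e‖ = 1) (hE : ContDiffAt ℝ 3 E 0)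
    (hEo : E =o[𝓝 0] fun x => ‖x‖ ^ 2) : ∃ η C r, ModelData e E η C r := by
  have hE₂ : ContDiffAt ℝ 2 E 0 := hE.of_le (by norm_num)
  have hEo' : E =o[𝓝 0] fun x => ‖x - 0‖ ^ 2 := by simpa using hEo
  have hE0 : E 0 = 0 := hEo'.isBigO.eq_zero_of_norm_pow two_ne_zero
  have hE1 : HasFDerivAt E (0 : V →L[ℝ] ℝ) 0 := hEo'.isBigO.hasFDerivAt one_lt_two
  have hdE : ContDiffAt ℝ 2 (fderiv ℝ E) 0 := hE.fderiv_right (by norm_num)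
  have hddE : fderiv ℝ (fderiv ℝ E) 0 = 0 := fderiv_fderiv_eq_zero_of_isLittleO hE₂ hEo'
  obtain ⟨η, hηE, hη, hη0, hηd⟩ := exists_re_inner_eq_fderiv hE hE1.fderiv hddE
  obtain ⟨C₁, hC₁⟩ := exists_eventually_quadLip hdE hE1.fderiv
    (hddE ▸ (hdE.differentiableAt two_ne_zero).hasFDerivAt)
  obtain ⟨C₂, hC₂⟩ := exists_eventually_quadLip (contDiffAt_modelMap (e := e) hE₂ hη hη0)
    (by simp [modelMap, hη0, hE0]) (hasFDerivAt_modelMap hE1 hη hη0 hηd)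
  obtain ⟨C₃, hC₃⟩ := exists_eventually_quadLip_modelLog (e := e) hη hη0 hηd
  have hnear : ∀ᶠ x in 𝓝 (0 : V), DifferentiableAt ℝ E x ∧ modelU e η x ≠ 0 ∧ ContinuousAt η x :=
    ((hE₂.eventually (by simp)).mono fun x hx => hx.differentiableAt two_ne_zero).and
      (((contDiffAt_modelU hη).continuousAt.eventually_ne (by simp [modelU_zero hη0])).and
        ((hη.eventually (by simp)).mono fun x hx => hx.continuousAt))
  have hsmall : ∀ᶠ r in 𝓝[>] (0 : ℝ), C₁ * r < 1 / 2 :=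
    ((by fun_prop : Continuous fun r : ℝ => C₁ * r).tendsto' 0 0 (mul_zero _)).mono_left
      nhdsWithin_le_nhds |>.eventually_lt_const one_half_pos
  obtain ⟨r, hr₁, hr₂, hr₃, hr, hrC, hr0⟩ := (hC₁.and (hC₂.and (hC₃.and
    ((eventually_forall_norm_le hnear).and (hsmall.and eventually_mem_nhdsWithin))))).exists
  have hmax : C₁ ≤ max C₁ (max C₂ C₃) := le_max_left _ _
  refine ⟨η, max C₁ (max C₂ C₃), r, hr0, he, fun x hx => ?_, fun x y hx hy => ?_,
    fun x hx => (hr x (mem_closedBall_zero_iff.1 hx)).2.2.continuousWithinAt,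
    fun x hx => (hr x hx).2.1, hr₂.mono (by simp) le_rfl, hr₃.mono (by simp) le_rfl⟩
  · simpa [hE0] using (hr₁.mono hmax le_rfl).norm_sub_le_cube (fun x hx => (hr x hx).1) hx
  · rw [hηE]
    exact (hr₁.norm_sub_sub_fderiv_le (fun x hx => (hr x hx).1) hx hy).trans
      (mul_le_mul_of_nonneg_right hrC.le (sq_nonneg _))

end ModelExists

/-! ### The normal form of the second-order term -/

section HermitianSplit

open Module
open scoped ComplexConjugate

variable {V : Type*} [AddCommGroup V] [Module ℂ V]

theorem exists_linearEquiv_norm_sq [FiniteDimensional ℂ V] (c : InnerProductSpace.Core ℂ V) :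
    ∃ S : V ≃ₗ[ℂ] EuclideanSpace ℂ (Fin (finrank ℂ V)), ∀ x, ‖S x‖ ^ 2 = (c.inner x x).re := by
  let : NormedAddCommGroup V := c.toNormedAddCommGroup
  let : InnerProductSpace ℂ V := InnerProductSpace.ofCore c.toCore
  refine ⟨(stdOrthonormalBasis ℂ V).repr.toLinearEquiv, fun x => ?_⟩
  exact (congrArg (· ^ 2) ((stdOrthonormalBasis ℂ V).repr.norm_map x)).trans
    (inner_self_eq_norm_sq (𝕜 := ℂ) x).symm

theorem complex_smul_eq (a : ℂ) (x : V) : a • x = a.re • x + a.im • I • x := by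
  rw [← Complex.coe_smul, ← Complex.coe_smul, smul_smul, ← add_smul, Complex.re_add_im]

theorem I_smul_complex_smul_eq (a : ℂ) (x : V) : I • a • x = a.re • I • x - a.im • x := by
  rw [smul_smul, complex_smul_eq, I_mul_re, I_mul_im, neg_smul, neg_add_eq_sub]

variable (H : V →ₗ[ℝ] V →ₗ[ℝ] ℝ)

/-- The Hermitian part `(x, y) ↦ ¼ (H(x,y) + H(ix,iy)) - ¼ i (H(x,iy) - H(ix,y))` of a real
symmetric bilinear form whose Levi form is positive definite. -/
@[reducible] def hermitianPart (hsymm : ∀ x y, H x y = H y x)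
    (hpos : ∀ x, x ≠ 0 → 0 < H x x + H (I • x) (I • x)) : InnerProductSpace.Core ℂ V where
  inner x y := ⟨(1 / 4) * (H x y + H (I • x) (I • y)), -((1 / 4) * (H x (I • y) - H (I • x) y))⟩
  conj_inner_symm x y := by
    apply Complex.ext
    · simp [hsymm y x, hsymm (I • y) (I • x)]
    · simp [hsymm y, hsymm (I • y)]
      ring
  re_inner_nonneg x := by
    rcases eq_or_ne x 0 with rfl | hx
    · simp
    · exact mul_nonneg (by norm_num) (hpos x hx).le
  add_left x y z := by
    apply Complex.ext <;> simp <;> ring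
  smul_left x y a := by
    apply Complex.ext <;>
    · simp only [I_smul_complex_smul_eq]
      simp only [complex_smul_eq a x, map_add, map_sub, map_smul, LinearMap.add_apply,
        LinearMap.smul_apply, LinearMap.sub_apply, mul_re, mul_im, conj_re, conj_im, smul_eq_mul]
      ring
  definite x hx := by
    by_contra hne
    exact (hpos x hne).ne' ((mul_eq_zero.1 (congrArg Complex.re hx)).resolve_left (by norm_num))

/-- The complex bilinear part `(x, y) ↦ ¼ (H(x,y) - H(ix,iy)) - ¼ i (H(x,iy) + H(ix,y))` of a real
bilinear form. -/
def complexBilinearPart : V →ₗ[ℂ] V →ₗ[ℂ] ℂ :=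
  LinearMap.mk₂ ℂ (fun x y => ⟨(1 / 4) * (H x y - H (I • x) (I • y)),
      -((1 / 4) * (H x (I • y) + H (I • x) y))⟩)
    (fun x y z => by apply Complex.ext <;> simp <;> ring)
    (fun a x y => by
      apply Complex.ext <;>
      · simp only [I_smul_complex_smul_eq]
        simp only [complex_smul_eq a x, map_add, map_sub, map_smul, LinearMap.add_apply,
          LinearMap.smul_apply, LinearMap.sub_apply, mul_re, mul_im, smul_eq_mul]
        ring)
    (fun x y z => by apply Complex.ext <;> simp <;> ring)
    (fun a x y => by
      apply Complex.ext <;>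
      · simp only [I_smul_complex_smul_eq]
        simp only [complex_smul_eq a y, map_add, map_sub, map_smul, mul_re, mul_im, smul_eq_mul]
        ring)

theorem exists_norm_sq_add_re_bilinear [FiniteDimensional ℂ V] (hsymm : ∀ x y, H x y = H y x)
    (hpos : ∀ x, x ≠ 0 → 0 < H x x + H (I • x) (I • x)) :
    ∃ (S : V ≃ₗ[ℂ] EuclideanSpace ℂ (Fin (finrank ℂ V))) (M : V →ₗ[ℂ] V →ₗ[ℂ] ℂ),
      ∀ x, (1 / 2) * H x x = ‖S x‖ ^ 2 + (M x x).re := by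
  obtain ⟨S, hS⟩ := exists_linearEquiv_norm_sq (hermitianPart H hsymm hpos)
  refine ⟨S, complexBilinearPart H, fun x => ?_⟩
  rw [hS]
  change _ = (1 / 4) * (H x x + H (I • x) (I • x)) + (1 / 4) * (H x x - H (I • x) (I • x))
  ring

end HermitianSplit

section Finsler

theorem exists_nat_forall_pos_add_mul_of_isCompact {X : Type*} [TopologicalSpace X] {K : Set X}
    (hK : IsCompact K) {q k : X → ℝ} (hq : Continuous q) (hk : Continuous k) (hk0 : ∀ x, 0 ≤ k x)
    (hpos : ∀ x ∈ K, k x = 0 → 0 < q x) : ∃ A : ℕ, ∀ x ∈ K, 0 < q x + A * k x := by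
  refine hK.elim_directed_cover (fun A : ℕ => {x | 0 < q x + A * k x})
    (fun A => isOpen_lt continuous_const (by fun_prop)) (fun x hx => mem_iUnion.2 ?_)
    (directed_of_isDirected_le fun A B hAB x hx => hx.out.trans_le ?_)
  · rcases (hk0 x).eq_or_lt with hkx | hkx
    · exact ⟨0, by simpa using hpos x hx hkx.symm⟩
    · obtain ⟨A, hA⟩ := exists_nat_gt (-q x / k x)
      rw [div_lt_iff₀ hkx] at hA
      exact ⟨A, by rw [mem_ofPred_eq]; linarith⟩
  · have hAB' : (A : ℝ) ≤ B := Nat.cast_le.2 hAB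
    have := hk0 x
    gcongr

theorem exists_nat_forall_pos_add_mul {X : Type*} [NormedAddCommGroup X] [NormedSpace ℝ X]
    [ProperSpace X] {q k : X → ℝ} (hq : Continuous q) (hk : Continuous k)
    (hqs : ∀ (t : ℝ) x, q (t • x) = t ^ 2 * q x) (hks : ∀ (t : ℝ) x, k (t • x) = t ^ 2 * k x)
    (hk0 : ∀ x, 0 ≤ k x) (hpos : ∀ x, x ≠ 0 → k x = 0 → 0 < q x) :
    ∃ A : ℕ, ∀ x, x ≠ 0 → 0 < q x + A * k x := by
  obtain ⟨A, hA⟩ := exists_nat_forall_pos_add_mul_of_isCompact (isCompact_sphere (0 : X) 1) hq hk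
    hk0 fun x hx => hpos x (ne_zero_of_mem_unit_sphere ⟨x, hx⟩)
  refine ⟨A, fun x hx => ?_⟩
  have hsphere : 0 < q (‖x‖⁻¹ • x) + A * k (‖x‖⁻¹ • x) :=
    hA _ (by simp [norm_smul, norm_ne_zero_iff.2 hx])
  rw [hqs, hks, mul_left_comm, ← mul_add] at hsphere
  exact pos_of_mul_pos_right hsphere (by positivity)

end Finsler

section NormalForm

open Asymptotics Module

variable {V W : Type*} [NormedAddCommGroup V] [NormedSpace ℂ V]
  [NormedAddCommGroup W] [InnerProductSpace ℂ W] {p : V} {e : W}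

/-- The quadratic change of coordinates `y ↦ S y - ½ M(y, y) e` that absorbs the real part of the
complex quadratic form `M` into the linear term of `modelRho e`. -/
def quadShear (S : V →L[ℂ] W) (M : V →L[ℂ] V →L[ℂ] ℂ) (e : W) (y : V) : W :=
  S y - (M y y / 2) • e

section quadShear

variable (S : V →L[ℂ] W) (M : V →L[ℂ] V →L[ℂ] ℂ)

theorem contDiff_quadShear : ContDiff ℂ 3 (quadShear S M e) :=
  S.contDiff.sub (((M.contDiff.clm_apply contDiff_id).div_const 2).smul contDiff_const)

theorem isBigO_quadShear_sub : (fun y => (M y y / 2) • e) =O[𝓝 0] fun y => ‖y‖ ^ 2 := by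
  refine .of_bound (‖M‖ / 2 * ‖e‖) (.of_forall fun y => ?_)
  rw [norm_smul, norm_div, RCLike.norm_ofNat, norm_pow, norm_norm]
  calc ‖M y y‖ / 2 * ‖e‖ ≤ ‖M‖ * ‖y‖ * ‖y‖ / 2 * ‖e‖ := by
        gcongr
        exact M.le_opNorm₂ y y
    _ = ‖M‖ / 2 * ‖e‖ * ‖y‖ ^ 2 := by ring

theorem hasFDerivAt_quadShear : HasFDerivAt (quadShear S M e) S 0 := by
  have hM : HasFDerivAt (𝕜 := ℂ) (fun y => (M y y / 2) • e) 0 0 :=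
    IsBigO.hasFDerivAt (n := 2) (by simpa using isBigO_quadShear_sub M) one_lt_two
  exact (S.hasFDerivAt.sub hM).congr_fderiv (sub_zero _)

theorem modelRho_quadShear_isLittleO (he : ‖e‖ = 1) :
    (fun y => ‖S y‖ ^ 2 - 2 * (inner ℂ e (S y)).re + (M y y).re
      - (‖quadShear S M e y‖ ^ 2 - 2 * (inner ℂ e (quadShear S M e y)).re))
      =o[𝓝 0] fun y => ‖y‖ ^ 2 := by
  set w : V → W := fun y => (M y y / 2) • e
  have hw : w =O[𝓝 0] fun y => ‖y‖ ^ 2 := isBigO_quadShear_sub M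
  have hw' : w =o[𝓝 0] fun _ => (1 : ℝ) :=
    (isLittleO_one_iff ℝ).2 ((by fun_prop : Continuous w).tendsto' 0 0 (by simp [w]))
  have hS : (fun y => S y) =o[𝓝 0] fun _ => (1 : ℝ) :=
    (isLittleO_one_iff ℝ).2 (S.continuous.tendsto' 0 0 (map_zero S))
  have hcross : (fun y => 2 * (inner ℂ (S y) (w y)).re - ‖w y‖ ^ 2) =o[𝓝 0]
      fun y => ‖y‖ ^ 2 := by
    have hinner : (fun y => (inner ℂ (S y) (w y)).re) =o[𝓝 0] fun y => ‖y‖ ^ 2 :=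
      (IsBigO.of_norm_le fun y => ((abs_re_le_norm _).trans (norm_inner_le_norm _ _)).trans
        (le_abs_self _)).trans_isLittleO (by simpa using hS.norm_left.mul_isBigO hw.norm_left)
    refine (hinner.const_mul_left 2).sub ?_
    simpa [sq] using hw'.norm_left.mul_isBigO hw.norm_left
  refine hcross.congr_left fun y => ?_
  have hew : 2 * (inner ℂ e (w y)).re = (M y y).re := by
    rw [inner_smul_right, inner_self_eq_one_of_norm_eq_one he, mul_one, div_ofNat_re]
    ring
  rw [show quadShear S M e y = S y - w y from rfl, norm_sub_sq (𝕜 := ℂ), inner_sub_right, sub_re,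
    RCLike.re_eq_complex_re]
  linarith

end quadShear

theorem exists_error_of_chart {σ : V → ℝ} {P : OpenPartialHomeomorph V W} (hp : p ∈ P.source)
    (hPp : P p = 0) (hP : ContDiffAt ℂ 3 P.symm 0) (hσ : ContDiffAt ℝ 3 σ p)
    (hσP : (fun x => σ x - (‖P x‖ ^ 2 - 2 * (inner ℂ e (P x)).re)) =o[𝓝 p] fun x => ‖x - p‖ ^ 2) :
    ∃ E : W → ℝ, ContDiffAt ℝ 3 E 0 ∧ (E =o[𝓝 0] fun w => ‖w‖ ^ 2) ∧
      ∀ w, modelRho e E w = σ (P.symm w) := by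
  have hsymm : P.symm 0 = p := hPp ▸ P.left_inv hp
  have htgt : (0 : W) ∈ P.target := hPp ▸ P.map_source hp
  refine ⟨fun w => σ (P.symm w) - (‖w‖ ^ 2 - 2 * (inner ℂ e w).re), ?_, ?_, fun w => ?_⟩
  · have hre : ContDiff ℝ 3 fun w => (inner ℂ e w).re :=
      (reCLM ∘L (innerSL ℂ e).restrictScalars ℝ).contDiff
    exact ((hsymm ▸ hσ).comp 0 (hP.restrict_scalars ℝ)).sub
      ((contDiff_norm_sq ℂ).sub (contDiff_const.mul hre)).contDiffAt
  · have hO : (fun w => ‖P.symm w - p‖ ^ 2) =O[𝓝 0] fun w => ‖w‖ ^ 2 := by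
      simpa [hsymm] using ((hP.differentiableAt three_ne_zero).isBigO_sub.norm_norm.pow 2)
    refine ((hσP.comp_tendsto (hsymm ▸ hP.continuousAt.tendsto)).trans_isBigO hO).congr' ?_ .rfl
    filter_upwards [P.open_target.mem_nhds htgt] with w hw
    simp only [comp_apply, P.right_inv hw]
  · simp only [modelRho]
    ring

end NormalForm

/-! ### Model charts at strongly pseudoconvex points -/

section ModelChart

open Asymptotics Module

variable {V W : Type*} [NormedAddCommGroup V] [NormedSpace ℂ V]
  [NormedAddCommGroup W] [InnerProductSpace ℂ W] {p : V}

/-- A biholomorphic chart `P` centred at `p` in which `D` is near `0` the sublevel set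
`{modelRho e E < 0}` of a perturbed model. Biholomorphy is only recorded at the centre. -/
structure IsModelChart (D : Set V) (p : V) (e : W) (E : W → ℝ) (P : OpenPartialHomeomorph V W) :
    Prop where
  norm_eq_one : ‖e‖ = 1
  contDiffAt_error : ContDiffAt ℝ 3 E 0
  error_isLittleO : E =o[𝓝 0] fun w => ‖w‖ ^ 2
  mem_source : p ∈ P.source
  map_center : P p = 0
  contDiffAt : ContDiffAt ℂ 3 P p
  contDiffAt_symm : ContDiffAt ℂ 3 P.symm 0
  eventually_neg_iff : ∀ᶠ w in 𝓝 0, modelRho e E w < 0 ↔ P.symm w ∈ D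

theorem IsModelChart.symm_zero {D : Set V} {e : W} {E : W → ℝ} {P : OpenPartialHomeomorph V W}
    (h : IsModelChart D p e E P) : P.symm 0 = p :=
  h.map_center ▸ P.left_inv h.mem_source

theorem IsModelChart.congr_set {D D' : Set V} {e : W} {E : W → ℝ} {P : OpenPartialHomeomorph V W}
    (h : IsModelChart D p e E P) (hD : D =ᶠ[𝓝 p] D') : IsModelChart D' p e E P where
  __ := h
  eventually_neg_iff := by
    have hP : Tendsto P.symm (𝓝 0) (𝓝 p) := by
      simpa only [h.symm_zero] using h.contDiffAt_symm.continuousAt.tendsto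
    filter_upwards [h.eventually_neg_iff, hP.eventually hD.mem_iff] with w hw hw'
    exact hw.trans hw'

theorem exists_pos_mul_eq_model [CompleteSpace W] {l : V →L[ℝ] ℝ} (hl : l ≠ 0) (S : V ≃L[ℂ] W)
    (M : V →L[ℂ] V →L[ℂ] ℂ) :
    ∃ t > 0, ∃ (e : W) (S' : V ≃L[ℂ] W) (M' : V →L[ℂ] V →L[ℂ] ℂ), ‖e‖ = 1 ∧
      ∀ y, t * (l y + ‖S y‖ ^ 2 + (M y y).re)
        = ‖S' y‖ ^ 2 - 2 * (inner ℂ e (S' y)).re + (M' y y).re := by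
  obtain ⟨T, hT⟩ := exists_re_inner_eq (V := W)
  set b : W := T (l ∘L (S.symm : W →L[ℂ] V).restrictScalars ℝ)
  have hb : ∀ y, (inner ℂ b (S y)).re = l y := fun y => by simp [b, hT]
  have hb0 : b ≠ 0 := fun h => hl (ContinuousLinearMap.ext fun y => by simp [← hb, h])
  set s : ℝ := 2 / ‖b‖
  have hs : 0 < s := by positivity
  have hs' : (s : ℂ) ≠ 0 := by exact_mod_cast hs.ne'
  refine ⟨s ^ 2, by positivity, -((s / 2 : ℝ) : ℂ) • b,
    S.trans (ContinuousLinearEquiv.smulLeft (Units.mk0 (s : ℂ) hs')), ((s ^ 2 : ℝ) : ℂ) • M,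
    ?_, fun y => ?_⟩
  · rw [norm_smul, norm_neg, norm_real, Real.norm_of_nonneg (by positivity)]
    simp only [s]
    field_simp
  · have hS : ‖(s : ℂ) • S y‖ ^ 2 = s ^ 2 * ‖S y‖ ^ 2 := by
      rw [norm_smul, norm_real, Real.norm_of_nonneg hs.le, mul_pow]
    have he : (inner ℂ (-((s / 2 : ℝ) : ℂ) • b) ((s : ℂ) • S y)).re = -(s ^ 2 / 2) * l y := by
      rw [inner_smul_left, inner_smul_right, map_neg, conj_ofReal, ← mul_assoc, ← ofReal_neg,
        ← ofReal_mul, re_ofReal_mul, hb]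
      ring
    have hM : ((((s ^ 2 : ℝ) : ℂ) • M) y y).re = s ^ 2 * (M y y).re := by
      simp only [_root_.smul_apply, smul_eq_mul, re_ofReal_mul]
    change _ = ‖(s : ℂ) • S y‖ ^ 2 - 2 * (inner ℂ _ ((s : ℂ) • S y)).re + _
    rw [hS, he, hM]
    ring

theorem exists_isModelChart_of_isLittleO [CompleteSpace V] {σ : V → ℝ} {e : W} (he : ‖e‖ = 1)
    (S : V ≃L[ℂ] W) (M : V →L[ℂ] V →L[ℂ] ℂ) (hσ : ContDiffAt ℝ 3 σ p)
    (hσo : (fun x => σ x - (‖S (x - p)‖ ^ 2 - 2 * (inner ℂ e (S (x - p))).re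
      + (M (x - p) (x - p)).re)) =o[𝓝 p] fun x => ‖x - p‖ ^ 2) :
    ∃ (E : W → ℝ) (P : OpenPartialHomeomorph V W), IsModelChart {x | σ x < 0} p e E P := by
  have hsub : Tendsto (fun x => x - p) (𝓝 p) (𝓝 0) := tendsto_sub_nhds_zero_iff.2 tendsto_id
  set φ : V → W := fun x => quadShear (S : V →L[ℂ] W) M e (x - p) with hφ
  have hφp : φ p = 0 := by simp [φ, quadShear]
  have hφc : ContDiffAt ℂ 3 φ p :=
    ((contDiff_quadShear _ M).comp (contDiff_id.sub contDiff_const)).contDiffAt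
  have hφd : HasFDerivAt φ (S : V →L[ℂ] W) p :=
    (hasFDerivAt_comp_sub p).2 (by simpa using hasFDerivAt_quadShear (S : V →L[ℂ] W) M)
  set P := hφc.toOpenPartialHomeomorph φ hφd three_ne_zero
  have hPφ : ⇑P = φ := rfl
  have hsrc : p ∈ P.source := hφc.mem_toOpenPartialHomeomorph_source hφd three_ne_zero
  have hsymm : ContDiffAt ℂ 3 P.symm 0 := hφp ▸ hφc.to_localInverse hφd three_ne_zero
  obtain ⟨E, hE, hEo, hEσ⟩ := exists_error_of_chart (e := e) hsrc hφp hsymm hσ <| by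
    refine (hσo.add ((modelRho_quadShear_isLittleO (S : V →L[ℂ] W) M he).comp_tendsto
      hsub)).congr_left fun x => ?_
    simp only [comp_apply, hPφ, hφ, ContinuousLinearEquiv.coe_coe]
    ring
  exact ⟨E, P, he, hE, hEo, hsrc, hφp, hφc, hsymm, .of_forall fun w => by rw [hEσ]; rfl⟩

theorem exists_isModelChart_of_taylor [FiniteDimensional ℂ V] {σ : V → ℝ}
    (hσ : ContDiffAt ℝ 3 σ p) {l : V →L[ℝ] ℝ} (hl : l ≠ 0) {H : V →L[ℝ] V →L[ℝ] ℝ}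
    (hsymm : ∀ x y, H x y = H y x) (hpos : ∀ x, x ≠ 0 → 0 < H x x + H (I • x) (I • x))
    (hσo : (fun x => σ x - (l (x - p) + (1 / 2) * H (x - p) (x - p))) =o[𝓝 p]
      fun x => ‖x - p‖ ^ 2) :
    ∃ (e : EuclideanSpace ℂ (Fin (finrank ℂ V))) (E : _ → ℝ) (P : OpenPartialHomeomorph V _),
      IsModelChart {x | σ x < 0} p e E P := by
  have := FiniteDimensional.complete ℂ V
  obtain ⟨S, M, hSM⟩ := exists_norm_sq_add_re_bilinear (H.toBilinForm) hsymm hpos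
  obtain ⟨t, ht, e, S', M', he, htS⟩ :=
    exists_pos_mul_eq_model hl S.toContinuousLinearEquiv M.toContinuousBilinearMap
  obtain ⟨E, P, hP⟩ := exists_isModelChart_of_isLittleO (σ := fun x => t * σ x) he S' M'
    (contDiffAt_const.mul hσ) <| (hσo.const_mul_left t).congr_left fun x => by
      rw [← htS, ← mul_sub]
      congr 2
      rw [add_assoc]
      exact congrArg _ (hSM (x - p))
  refine ⟨e, E, P, hP.congr_set (.of_eq (funext fun x => propext ?_))⟩
  exact smul_neg_iff_of_pos_left (b := σ x) ht

end ModelChart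

section Levi

open Asymptotics Module

variable {V : Type*} [NormedAddCommGroup V] [NormedSpace ℂ V] {p : V} {ρ : V → ℝ}

/-- Positivity of the Levi form of `ρ` on the nonzero complex tangent vectors at `p`. -/
def LeviPosAt (ρ : V → ℝ) (p : V) : Prop :=
  ∀ x, x ≠ 0 → fderiv ℝ ρ p x = 0 → fderiv ℝ ρ p (I • x) = 0 →
    0 < fderiv ℝ (fderiv ℝ ρ) p x x + fderiv ℝ (fderiv ℝ ρ) p (I • x) (I • x)

theorem LeviPosAt.exists_nat_forall_pos [FiniteDimensional ℂ V] (hL : LeviPosAt ρ p) :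
    ∃ A : ℕ, ∀ x, x ≠ 0 →
      0 < fderiv ℝ (fderiv ℝ ρ) p x x + fderiv ℝ (fderiv ℝ ρ) p (I • x) (I • x)
        + A * (fderiv ℝ ρ p x ^ 2 + fderiv ℝ ρ p (I • x) ^ 2) := by
  have := FiniteDimensional.proper ℂ V
  refine exists_nat_forall_pos_add_mul
    (q := fun x => fderiv ℝ (fderiv ℝ ρ) p x x + fderiv ℝ (fderiv ℝ ρ) p (I • x) (I • x))
    (k := fun x => fderiv ℝ ρ p x ^ 2 + fderiv ℝ ρ p (I • x) ^ 2)
    (by fun_prop) (by fun_prop) (fun t x => ?_) (fun t x => ?_) (fun x => by positivity)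
    fun x hx hk => ?_
  · simp only [smul_comm I t x, map_smul, _root_.smul_apply, smul_eq_mul]
    ring
  · simp only [smul_comm I t x, map_smul, smul_eq_mul]
    ring
  · obtain ⟨h, h'⟩ := (add_eq_zero_iff_of_nonneg (sq_nonneg _) (sq_nonneg _)).1 hk
    exact hL x hx (pow_eq_zero_iff two_ne_zero |>.1 h) (pow_eq_zero_iff two_ne_zero |>.1 h')

theorem isLittleO_sq_sub_fderiv_sq {X : Type*} [NormedAddCommGroup X] [NormedSpace ℝ X]
    {f : X → ℝ} {f' : X →L[ℝ] ℝ} {a : X} (hf : HasFDerivAt f f' a) (ha : f a = 0) :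
    (fun x => f x ^ 2 - f' (x - a) ^ 2) =o[𝓝 a] fun x => ‖x - a‖ ^ 2 := by
  have hsub : (fun x => f x - f' (x - a)) =o[𝓝 a] fun x => ‖x - a‖ := by
    simpa [ha] using hf.isLittleO.norm_right
  have hadd : (fun x => f x + f' (x - a)) =O[𝓝 a] fun x => ‖x - a‖ := by
    have hf' : (fun x => f' (x - a)) =O[𝓝 a] fun x => ‖x - a‖ :=
      (f'.isBigO_sub _ a).norm_right
    exact (hsub.isBigO.add (hf'.const_mul_left 2)).congr_left fun x => by ring
  exact (hsub.mul_isBigO hadd).congr (fun x => by ring) fun x => (sq _).symm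

theorem eventually_add_mul_sq_neg_iff {X : Type*} [TopologicalSpace X] {f : X → ℝ} {a : X}
    (hf : ContinuousAt f a) (ha : f a = 0) (c : ℝ) :
    ∀ᶠ x in 𝓝 a, f x + c * f x ^ 2 < 0 ↔ f x < 0 := by
  have hc : ContinuousAt (fun x => 1 + c * f x) a := by fun_prop
  filter_upwards [hc.eventually_const_lt (show (0 : ℝ) < 1 + c * f a by simp [ha])] with x hx
  rw [show f x + c * f x ^ 2 = (1 + c * f x) • f x by rw [smul_eq_mul]; ring,
    smul_neg_iff_of_pos_left hx]

theorem LeviPosAt.exists_isModelChart [FiniteDimensional ℂ V] (hL : LeviPosAt ρ p)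
    (hρ : ContDiffAt ℝ 3 ρ p) (hρp : ρ p = 0) (hd : fderiv ℝ ρ p ≠ 0) {D : Set V}
    (hD : ∀ᶠ x in 𝓝 p, x ∈ D ↔ ρ x < 0) :
    ∃ (e : EuclideanSpace ℂ (Fin (finrank ℂ V))) (E : _ → ℝ) (P : OpenPartialHomeomorph V _),
      IsModelChart D p e E P := by
  obtain ⟨A, hA⟩ := hL.exists_nat_forall_pos
  set l := fderiv ℝ ρ p
  set H := fderiv ℝ (fderiv ℝ ρ) p
  set H' : V →L[ℝ] V →L[ℝ] ℝ := H + (A : ℝ) • l.smulRight l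
  have hH' : ∀ x y, H' x y = H x y + A * (l x * l y) := fun x y => by simp [H']
  have hsymm : ∀ x y, H x y = H y x := (hρ.isSymmSndFDerivAt (by norm_num)).eq
  have htaylor := isLittleO_taylor_two (hρ.of_le (by norm_num : (2 : WithTop ℕ∞) ≤ 3))
  have hsq := isLittleO_sq_sub_fderiv_sq (hρ.differentiableAt three_ne_zero).hasFDerivAt hρp
  obtain ⟨e, E, P, hP⟩ := exists_isModelChart_of_taylor
    (σ := fun x => ρ x + A / 2 * ρ x ^ 2) (hρ.add (contDiffAt_const.mul (hρ.pow 2))) hd (H := H')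
    (fun x y => by rw [hH', hH', hsymm, mul_comm (l x)])
    (fun x hx => by
      rw [hH', hH']
      linarith [hA x hx]) <|
    (htaylor.add (hsq.const_mul_left (A / 2))).congr_left fun x => by
      rw [hH', hρp, smul_eq_mul]
      ring
  refine ⟨e, E, P, hP.congr_set ?_⟩
  filter_upwards [hD, eventually_add_mul_sq_neg_iff hρ.continuousAt hρp (A / 2)] with x hx hx'
  exact propext (hx'.trans hx.symm)

end Levi

/-! ### Local rigidity and the identity theorem -/

section LocalRigidity

open Asymptotics Module

theorem tendsto_nhdsWithin_of_isLittleO_sub_id {X : Type*} [NormedAddCommGroup X] {D : Set X}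
    {p : X} {F : X → X} {k : ℕ} (hk : k ≠ 0) (hFm : ∀ᶠ z in 𝓝[D] p, F z ∈ D)
    (hFo : (fun z => F z - z) =o[𝓝[D] p] fun z => ‖z - p‖ ^ k) :
    Tendsto F (𝓝[D] p) (𝓝[D] p) := by
  have hid : Tendsto id (𝓝[D] p) (𝓝 p) := tendsto_id.mono_left nhdsWithin_le_nhds
  have hzero : Tendsto (fun z => ‖z - p‖ ^ k) (𝓝[D] p) (𝓝 0) := by
    simpa [hk] using (hid.sub_const p).norm.pow k
  refine tendsto_nhdsWithin_iff.2 ⟨?_, hFm⟩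
  simpa using (hFo.trans_tendsto hzero).add hid

variable {V W : Type*} [NormedAddCommGroup V] [NormedSpace ℂ V]
  [NormedAddCommGroup W] [InnerProductSpace ℂ W] {D : Set V} {p : V} {e : W} {E : W → ℝ}
  {P : OpenPartialHomeomorph V W} {F : V → V}

theorem IsModelChart.tendsto_symm (h : IsModelChart D p e E P) :
    Tendsto P.symm (𝓝[{w | modelRho e E w < 0}] 0) (𝓝[D] p) := by
  refine tendsto_nhdsWithin_iff.2 ⟨?_, ?_⟩
  · simpa only [h.symm_zero] using h.contDiffAt_symm.continuousAt.continuousWithinAt.tendsto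
  · filter_upwards [self_mem_nhdsWithin, nhdsWithin_le_nhds h.eventually_neg_iff] with w hw hwD
    exact hwD.1 hw

theorem IsModelChart.tendsto (h : IsModelChart D p e E P) :
    Tendsto P (𝓝[D] p) (𝓝[{w | modelRho e E w < 0}] 0) := by
  have hP : Tendsto P (𝓝 p) (𝓝 0) := by
    simpa only [h.map_center] using h.contDiffAt.continuousAt.tendsto
  refine tendsto_nhdsWithin_iff.2 ⟨hP.mono_left nhdsWithin_le_nhds, ?_⟩
  filter_upwards [self_mem_nhdsWithin, nhdsWithin_le_nhds (hP.eventually h.eventually_neg_iff),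
    nhdsWithin_le_nhds (P.open_source.eventually_mem h.mem_source)] with z hz hzD hzs
  exact hzD.2 (by rwa [P.left_inv hzs])

theorem IsModelChart.conj_sub_id_isLittleO (h : IsModelChart D p e E P)
    (hF : Tendsto F (𝓝[D] p) (𝓝[D] p))
    (hFo : (fun z => F z - z) =o[𝓝[D] p] fun z => ‖z - p‖ ^ 3) :
    (fun w => P (F (P.symm w)) - w) =o[𝓝[{w | modelRho e E w < 0}] 0] fun w => ‖w‖ ^ 3 := by
  have hpair : Tendsto (fun z => (F z, z)) (𝓝[D] p) (𝓝 (p, p)) :=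
    (tendsto_nhds_of_tendsto_nhdsWithin hF).prodMk_nhds (tendsto_id.mono_left nhdsWithin_le_nhds)
  have hP : (fun z => P (F z) - P z) =o[𝓝[D] p] fun z => ‖z - p‖ ^ 3 :=
    ((h.contDiffAt.hasStrictFDerivAt three_ne_zero).isBigO_sub.comp_tendsto hpair).trans_isLittleO
      hFo
  have hsymm : (fun w => ‖P.symm w - p‖ ^ 3) =O[𝓝[{w | modelRho e E w < 0}] 0]
      fun w => ‖w‖ ^ 3 := by
    simpa [h.symm_zero] using (((h.contDiffAt_symm.differentiableAt
      three_ne_zero).isBigO_sub.norm_norm.pow 3).mono nhdsWithin_le_nhds)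
  refine ((hP.comp_tendsto h.tendsto_symm).trans_isBigO hsymm).congr' ?_ .rfl
  filter_upwards [nhdsWithin_le_nhds (P.open_target.eventually_mem
    (h.map_center ▸ P.map_source h.mem_source))] with w hw
  simp only [comp_apply, P.right_inv hw]

theorem IsModelChart.exists_isOpen_eqOn [CompleteSpace W] (h : IsModelChart D p e E P)
    (hb : ∃ b : W, b ≠ 0 ∧ inner ℂ e b = 0) (hFd : ∀ᶠ z in 𝓝[D] p, DifferentiableAt ℂ F z)
    (hFm : ∀ᶠ z in 𝓝[D] p, F z ∈ D)
    (hFo : (fun z => F z - z) =o[𝓝[D] p] fun z => ‖z - p‖ ^ 3) :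
    ∃ O ⊆ D, IsOpen O ∧ O.Nonempty ∧ EqOn F id O := by
  obtain ⟨η, C, r, hmodel⟩ :=
    exists_modelData h.norm_eq_one h.contDiffAt_error h.error_isLittleO
  have hF := tendsto_nhdsWithin_of_isLittleO_sub_id three_ne_zero hFm hFo
  have hFP := hF.comp h.tendsto_symm
  have hFP' := tendsto_nhds_of_tendsto_nhdsWithin hFP
  have hfd : ∀ᶠ w in 𝓝[{w | modelRho e E w < 0}] 0,
      DifferentiableAt ℂ (fun w => P (F (P.symm w))) w := by
    filter_upwards [hFP'.eventually (h.contDiffAt.eventually (by simp)),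
      h.tendsto_symm.eventually hFd,
      nhdsWithin_le_nhds (h.contDiffAt_symm.eventually (by simp))] with w hP hFw hsymm
    exact (hP.differentiableAt three_ne_zero).comp w
      (hFw.comp w (hsymm.differentiableAt three_ne_zero))
  have hfm : ∀ᶠ w in 𝓝[{w | modelRho e E w < 0}] 0,
      P (F (P.symm w)) ∈ {w | modelRho e E w < 0} ∩ closedBall 0 r :=
    (h.tendsto.comp hFP).eventually (inter_mem self_mem_nhdsWithin
      (nhdsWithin_le_nhds (closedBall_mem_nhds 0 hmodel.r_pos)))
  have hchart : ∀ᶠ w in 𝓝[{w | modelRho e E w < 0}] 0,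
      P.symm w ∈ D ∧ w ∈ P.target ∧ F (P.symm w) ∈ P.source :=
    (h.tendsto_symm.eventually_mem self_mem_nhdsWithin).and
      ((eventually_nhdsWithin_of_eventually_nhds (P.open_target.eventually_mem
        (h.map_center ▸ P.map_source h.mem_source))).and
        (hFP'.eventually (P.open_source.eventually_mem h.mem_source)))
  obtain ⟨r₁, hr₁, hball⟩ := mem_nhdsWithin_iff.1 (hfd.and (hfm.and hchart))
  have hsub : {w | modelRho e E w < 0} ∩ ball 0 (min r₁ r) ⊆ _ :=
    fun w hw => hball ⟨ball_subset_ball (min_le_left r₁ r) hw.2, hw.1⟩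
  obtain ⟨U, hU, hUo, hUne, hUf⟩ := hmodel.exists_isOpen_eqOn (lt_min hr₁ hmodel.r_pos)
    (min_le_right _ _) (fun w hw => (hsub hw).1.differentiableWithinAt)
    (fun w hw => (hsub hw).2.1) (h.conj_sub_id_isLittleO hF hFo) hb
  refine ⟨P.symm '' U, ?_, P.isOpen_image_symm_of_subset_target hUo
    fun w hw => (hsub (hU hw)).2.2.2.1, hUne.image _, ?_⟩
  · rintro _ ⟨w, hw, rfl⟩
    exact (hsub (hU hw)).2.2.1
  · rintro _ ⟨w, hw, rfl⟩
    calc F (P.symm w) = P.symm (P (F (P.symm w))) := (P.left_inv (hsub (hU hw)).2.2.2.2).symm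
      _ = P.symm w := congrArg P.symm (hUf hw)

theorem exists_ne_zero_inner_eq_zero [FiniteDimensional ℂ W] (hW : 1 < finrank ℂ W) (e : W) :
    ∃ b : W, b ≠ 0 ∧ inner ℂ e b = 0 := by
  obtain ⟨b, hb, hb0⟩ := Submodule.exists_mem_ne_zero_of_ne_bot
    (LinearMap.ker_ne_bot_of_finrank_lt (f := (innerSL ℂ e).toLinearMap) (by simpa using hW))
  exact ⟨b, hb0, hb⟩

theorem LeviPosAt.exists_isOpen_eqOn [FiniteDimensional ℂ V] (hV : 2 ≤ finrank ℂ V) {ρ : V → ℝ}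
    (hL : LeviPosAt ρ p) (hρ : ContDiffAt ℝ 3 ρ p) (hρp : ρ p = 0) (hd : fderiv ℝ ρ p ≠ 0)
    (hD : ∀ᶠ z in 𝓝 p, z ∈ D ↔ ρ z < 0) (hFd : ∀ᶠ z in 𝓝[D] p, DifferentiableAt ℂ F z)
    (hFm : ∀ᶠ z in 𝓝[D] p, F z ∈ D)
    (hFo : (fun z => F z - z) =o[𝓝[D] p] fun z => ‖z - p‖ ^ 3) :
    ∃ O ⊆ D, IsOpen O ∧ O.Nonempty ∧ EqOn F id O := by
  obtain ⟨e, E, P, hP⟩ := hL.exists_isModelChart hρ hρp hd hD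
  exact hP.exists_isOpen_eqOn
    (exists_ne_zero_inner_eq_zero (by rwa [finrank_euclideanSpace_fin]) e) hFd hFm hFo

end LocalRigidity

section Identity

variable {V W : Type*} [NormedAddCommGroup V] [NormedSpace ℂ V] [NormedAddCommGroup W]
  [NormedSpace ℂ W] [CompleteSpace W] {B : Set V} {f g : V → W} {w : V}

theorem eqOn_of_convex_of_eventuallyEq (hB : IsOpen B) (hBc : Convex ℝ B)
    (hf : DifferentiableOn ℂ f B) (hg : DifferentiableOn ℂ g B) (hw : w ∈ B)
    (hfg : f =ᶠ[𝓝 w] g) : EqOn f g B := by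
  intro y hy
  set γ : ℂ →ᵃ[ℂ] V := AffineMap.lineMap w y
  have hγ : Differentiable ℂ γ := fun _ => AffineMap.hasDerivAt_lineMap.differentiableAt
  have hγ0 : γ 0 = w := AffineMap.lineMap_apply_zero w y
  have hγ1 : γ 1 = y := AffineMap.lineMap_apply_one w y
  have hconv : Convex ℝ (γ ⁻¹' B) :=
    hBc.affine_preimage
    { toFun := γ, linear := γ.linear.restrictScalars ℝ, map_vadd' := γ.map_vadd' }
  have hopen : IsOpen (γ ⁻¹' B) := hB.preimage hγ.continuous
  have hf' := (hf.comp hγ.differentiableOn (mapsTo_preimage γ B)).analyticOnNhd hopen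
  have hg' := (hg.comp hγ.differentiableOn (mapsTo_preimage γ B)).analyticOnNhd hopen
  have hfg' : f ∘ γ =ᶠ[𝓝 0] g ∘ γ := (hγ.continuous.tendsto' 0 w hγ0).eventually hfg
  simpa [hγ1] using hf'.eqOn_of_preconnected_of_eventuallyEq hg' hconv.isPreconnected
    (by simpa [hγ0] using hw) hfg' (show (1 : ℂ) ∈ γ ⁻¹' B by simpa [hγ1] using hy)

theorem eqOn_of_isPreconnected_of_eventuallyEq (hB : IsOpen B) (hBc : IsPreconnected B)
    (hf : DifferentiableOn ℂ f B) (hg : DifferentiableOn ℂ g B) (hw : w ∈ B)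
    (hfg : f =ᶠ[𝓝 w] g) : EqOn f g B := by
  have hsub : B ⊆ {z | f =ᶠ[𝓝 z] g} := by
    refine hBc.subset_of_closure_inter_subset isOpen_setOfPred_eventually_nhds ⟨w, hw, hfg⟩ ?_
    rintro z ⟨hz, hzB⟩
    obtain ⟨ε, hε, hball⟩ := Metric.isOpen_iff.1 hB z hzB
    obtain ⟨v, hv, hzv⟩ := Metric.mem_closure_iff.1 hz ε hε
    exact (eqOn_of_convex_of_eventuallyEq isOpen_ball (convex_ball z ε) (hf.mono hball)
      (hg.mono hball) (mem_ball'.2 hzv) hv).eventuallyEq_of_mem (ball_mem_nhds z hε)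
  exact fun z hz => (hsub hz).self_of_nhds

end Identity

section Global

open Asymptotics Module

theorem localized_burns_krantz_general {V : Type*} [NormedAddCommGroup V] [NormedSpace ℂ V]
    [FiniteDimensional ℂ V] (hV : 2 ≤ finrank ℂ V) {Ω : Set V} (hΩ : IsOpen Ω)
    (hΩc : IsPreconnected Ω) {ρ : V → ℝ} {p : V} (hρ : ContDiffAt ℝ 3 ρ p) (hρp : ρ p = 0)
    (hd : fderiv ℝ ρ p ≠ 0) (hΩρ : ∀ᶠ z in 𝓝 p, z ∈ Ω ↔ ρ z < 0) (hL : LeviPosAt ρ p)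
    {F : V → V} (hF : DifferentiableOn ℂ F Ω) (hFm : ∀ᶠ z in 𝓝[Ω] p, F z ∈ Ω)
    (hFo : (fun z => F z - z) =o[𝓝[Ω] p] fun z => ‖z - p‖ ^ 3) : EqOn F id Ω := by
  have := FiniteDimensional.complete ℂ V
  have hFd : ∀ᶠ z in 𝓝[Ω] p, DifferentiableAt ℂ F z :=
    eventually_nhdsWithin_of_forall fun z hz => hF.differentiableAt (hΩ.mem_nhds hz)
  obtain ⟨O, hO, hOo, ⟨w, hw⟩, hFO⟩ := hL.exists_isOpen_eqOn hV hρ hρp hd hΩρ hFd hFm hFo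
  exact eqOn_of_isPreconnected_of_eventuallyEq hΩ hΩc hF differentiableOn_id (hO hw)
    (hFO.eventuallyEq_of_mem (hOo.mem_nhds hw))

end Global

section Main

open Asymptotics

theorem StronglyPcxAt.leviPosAt {n : ℕ} {ρ : En n → ℝ} {q : En n} (h : StronglyPcxAt ρ q) :
    LeviPosAt ρ q := by
  intro x hx hx₁ hx₂
  have hpos : 0 < LeviForm ρ q x := h x hx ⟨hx₁, hx₂⟩
  rw [LeviForm, iteratedFDeriv_two_apply, iteratedFDeriv_two_apply] at hpos
  exact pos_of_mul_pos_right hpos (by norm_num)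

theorem LittleOh.isLittleO {n : ℕ} {Ω : Set (En n)} {F : En n → En n} {p : En n} {k : ℕ}
    (h : LittleOh Ω F p k) (hp : p ∉ Ω) :
    (fun z => F z - z) =o[𝓝[Ω] p] fun z => ‖z - p‖ ^ k := by
  refine .of_norm_left ((isLittleO_iff_tendsto' ?_).2 h)
  refine eventually_nhdsWithin_of_forall fun z hz hzero => absurd ?_ hp
  rwa [← sub_eq_zero.1 (norm_eq_zero.1 (eq_zero_of_pow_eq_zero hzero))]

end Main

theorem localized_burns_krantz
    {n : ℕ} (hn : 2 ≤ n) (Ω : Set (En n)) (ρ : En n → ℝ)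
    (hΩ : IsDomain' Ω) (hbd : Bornology.IsBounded Ω)
    (hρ : IsPcxCinfBoundary Ω ρ)
    (p : En n) (hp : p ∈ frontier Ω) (hspc : StronglyPcxAt ρ p)
    (F : En n → En n) (hF : DifferentiableOn ℂ F Ω) (hFself : MapsTo F Ω Ω)
    (ho : LittleOh Ω F p 3) :
    ∀ z ∈ Ω, F z = z := by
  obtain ⟨⟨hsmooth, hneg, hfr, hd⟩, -⟩ := hρ
  have hmem : ∀ z, z ∈ Ω ↔ ρ z < 0 := fun z => by rw [hneg, mem_ofPred_eq]
  have hρp : ρ p = 0 := by rwa [hfr, mem_ofPred_eq] at hp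
  have hpΩ : p ∉ Ω := by rw [hmem, hρp]; exact lt_irrefl 0
  have hρ₃ : ContDiff ℝ (3 : ℕ∞) ρ := hsmooth.of_le (WithTop.coe_le_coe.2 le_top)
  exact localized_burns_krantz_general (by rwa [finrank_euclideanSpace_fin]) hΩ.1
    hΩ.2.isPreconnected hρ₃.contDiffAt hρp (hd p hp)
    (.of_forall hmem) hspc.leviPosAt hF (eventually_nhdsWithin_of_forall hFself)
    (ho.isLittleO hpΩ)
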